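/- Let R be a Noetherian local ring containing a field and let M be a finitely generated R-module of dimension d = dim(R/Ann_R(M)). Let Min_d(M) denote the set of prime ideals P minimal over Ann_R(M) with dim(R/P) = d. Then for every system of parameters x_1,…,x_d of M (i.e., d elements of the maximal ideal with dim M/(x_1,…,x_d)M = 0), 𝔥^d_x(M) = max{ rank_{R/P}(M/PM) : P ∈ Min_d(M) }, where for a domain T, rank_T of a T-module is the dimension over Frac(T) of its base change to Frac(T). -/

import Mathlib

open scoped BigOperators ENNReal

universe u v

/-- A filtration of `M` of length `h` whose factors are cyclic modules killed by `J`. -/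
def HasQLFiltration (S : Type u) [CommRing S] (J : Ideal S)
    (M : Type v) [AddCommGroup M] [Module S M] (h : ℕ) : Prop :=
  ∃ c : Fin (h + 1) → Submodule S M,
    Monotone c ∧ c 0 = ⊥ ∧ c (Fin.last h) = ⊤ ∧
    ∀ i : Fin h,
      (∃ m : M, c i.succ = c i.castSucc ⊔ Submodule.span S {m}) ∧
      ∀ a ∈ J, ∀ x ∈ c i.succ, a • x ∈ c i.castSucc

/-- The `J`-quasilength of `M`. -/
noncomputable def quasilength (S : Type u) [CommRing S] (J : Ideal S)
    (M : Type v) [AddCommGroup M] [Module S M] : ℕ∞ :=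
  sInf {n : ℕ∞ | ∃ h : ℕ, n = (h : ℕ∞) ∧ HasQLFiltration S J M h}

/-- The ideal `(x₁^{t₁}, …, x_d^{t_d})`. -/
def powerIdeal {R : Type u} [CommRing R] {d : ℕ} (x : Fin d → R) (t : Fin d → ℕ) : Ideal R :=
  Ideal.span (Set.range fun i => x i ^ t i)

/-- The content `𝔥^d_x(M)` of `M` with respect to `x₁, …, x_d`. -/
noncomputable def content {R : Type u} [CommRing R] {d : ℕ} (x : Fin d → R)
    (M : Type v) [AddCommGroup M] [Module R M] : ℝ≥0∞ :=
  ⨆ s : ℕ, ⨅ t : {t : Fin d → ℕ // ∀ i, s ≤ t i ∧ 0 < t i},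
    (quasilength R (Ideal.span (Set.range x))
        (M ⧸ (powerIdeal x (t : Fin d → ℕ) • (⊤ : Submodule R M))) : ℝ≥0∞) /
      ∏ i, ((t : Fin d → ℕ) i : ℝ≥0∞)


open scoped TensorProduct

/-!
Upper bound. Let `r` be the largest of the ranks. Some `r` elements of `M` generate it locally at
every prime of `Min_d(M)`, so the cokernel `N` of the corresponding map `R ^ r → M` has dimension
less than `d`. Each of these elements contributes at most `T ^ d` cyclic factors to a chain of
`M / I_(T,…,T) M`, one for each monomial of the box `[0, T) ^ d`, while `N` only contributes
`O(T ^ (d - 1))`.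

Lower bound. For `P` in `Min_d(M)`, the module `M / P M` maps to `(R / P) ^ r`, where `r` is its
rank, with image containing `c • (R / P) ^ r` for some `c ≠ 0`. Passing to a quotient of the
completion, replace `R / P` by a domain `D` which is finite over the power series ring
`A = K⟦x_1, …, x_d⟧`. A chain of length `h` for `M / I_t M` induces a chain from `I_t D ^ r` to some
`W ⊇ c • D ^ r`, and what has to be shown is `r ∏ t_i ≤ h + O(∏ t_i / min t_i)`.

In characteristic `p`, apply the Frobenius power with `q = p ^ m`. The factors become quotients of
`D / (x_1 ^ q, …, x_d ^ q)`, whose length over `K` is asymptotically `n q ^ d` with `n` the rank of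
`D` over `A`, whereas `D ^ r / I_{q t} D ^ r` has length close to `r n q ^ d ∏ t_i`. Compare the two
and let `m` tend to infinity. Lengths over `A` are computed up to an error which only depends on the
lexicographic order `α` of a denominator: the number of lattice points of a box outside its
translate by `α`.

In characteristic zero, the chain, a generic basis of `D` and the shape of its denominator are
defined over a finitely generated subring of `A`. Such a subring has a homomorphism to a power
series ring over a field of positive characteristic which preserves the variables. It is built by
induction on the number of variables: generically the subring is an étale hypersurface over a
polynomial subring containing the variables, Weierstrass preparation replaces a solution of its
equations in `x_1` by a polynomial approximation with coefficients in fewer variables, and after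
mapping these coefficients Newton's method recovers a solution.
-/

/-! ### Chains with cyclic factors -/

section CyclicChain

variable {R M N : Type*} [CommRing R] [AddCommGroup M] [Module R M] [AddCommGroup N] [Module R N]

/-- `CyclicChain I W W' h`: some chain of `h` steps leads from the submodule `W` up to `W'`, each
step having a cyclic factor killed by `I`. This is the relative form of `HasQLFiltration`, which is
the case `W = ⊥`, `W' = ⊤`. -/
inductive CyclicChain (I : Ideal R) (W : Submodule R M) : Submodule R M → ℕ → Prop
  | refl : CyclicChain I W W 0
  | step {W' : Submodule R M} {h : ℕ} {m : M} (H : CyclicChain I W W' h)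
      (hm : ∀ a ∈ I, a • m ∈ W') : CyclicChain I W (W' ⊔ Submodule.span R {m}) (h + 1)

namespace CyclicChain

variable {I : Ideal R} {W W' W'' V : Submodule R M} {h h' : ℕ}

protected theorem le (H : CyclicChain I W W' h) : W ≤ W' := by
  induction H with
  | refl => exact le_rfl
  | step _ _ ih => exact ih.trans le_sup_left

theorem trans (H : CyclicChain I W W' h) (H' : CyclicChain I W' W'' h') :
    CyclicChain I W W'' (h + h') := by
  induction H' with
  | refl => exact H
  | step _ hm ih => exact ih.step hm

theorem sup_right (H : CyclicChain I W W' h) (V : Submodule R M) :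
    CyclicChain I (W ⊔ V) (W' ⊔ V) h := by
  induction H with
  | refl => exact .refl
  | step _ hm ih =>
    rw [sup_right_comm]
    exact ih.step fun a ha => Submodule.mem_sup_left (hm a ha)

theorem of_le (H : CyclicChain I W W' h) (hV : W ≤ V) : CyclicChain I V (W' ⊔ V) h := by
  simpa only [sup_eq_right.2 hV] using H.sup_right V

theorem top_of_le (H : CyclicChain I W ⊤ h) (hV : W ≤ V) : CyclicChain I V ⊤ h := by
  simpa only [top_sup_eq] using H.of_le hV

theorem exists_map {S P : Type*} [CommRing S] [AddCommGroup P] [Module S P] {σ : R →+* S}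
    (H : CyclicChain I W W' h) (f : M →ₛₗ[σ] P) {U : Submodule S P} (hU : W ≤ U.comap f) :
    ∃ U' : Submodule S P, CyclicChain (I.map σ) U U' h ∧ W' ≤ U'.comap f := by
  induction H with
  | refl => exact ⟨U, .refl, hU⟩
  | @step W' _ m _ hm ih =>
    obtain ⟨U', HU', hW'⟩ := ih
    have hfm : I.map σ ≤ U'.comap (LinearMap.toSpanSingleton S P (f m)) := by
      refine Ideal.map_le_iff_le_comap.2 fun a ha => ?_
      have : f (a • m) ∈ U' := hW' (hm a ha)
      rwa [map_smulₛₗ] at this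
    refine ⟨U' ⊔ Submodule.span S {f m}, HU'.step fun a ha => hfm ha,
      sup_le (hW'.trans (Submodule.comap_mono le_sup_left)) ?_⟩
    rw [Submodule.span_singleton_le_iff_mem]
    exact Submodule.mem_sup_right (Submodule.mem_span_singleton_self _)

theorem exists_map_linear (H : CyclicChain I W W' h) (f : M →ₗ[R] N) {U : Submodule R N}
    (hU : W ≤ U.comap f) : ∃ U' : Submodule R N, CyclicChain I U U' h ∧ W' ≤ U'.comap f := by
  simpa only [Ideal.map_id] using H.exists_map f hU

theorem comap {W W' : Submodule R N} (H : CyclicChain I W W' h) {f : M →ₗ[R] N}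
    (hf : Function.Surjective f) : CyclicChain I (W.comap f) (W'.comap f) h := by
  induction H with
  | refl => exact .refl
  | @step W' _ m _ hm ih =>
    obtain ⟨m, rfl⟩ := hf m
    have hspan : Submodule.span R {f m} = (Submodule.span R {m}).map f := by
      rw [Submodule.map_span, Set.image_singleton]
    have hsup : (W' ⊔ Submodule.span R {f m}).comap f = W'.comap f ⊔ Submodule.span R {m} := by
      rw [hspan, ← Submodule.map_comap_eq_of_surjective hf W', ← Submodule.map_sup,
        Submodule.comap_map_eq, Submodule.map_comap_eq_of_surjective hf W', sup_eq_left]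
      exact (Submodule.comap_mono bot_le).trans le_sup_left
    rw [hsup]
    exact ih.step fun a ha => by simpa using hm a ha

theorem of_exact {L : Type*} [AddCommGroup L] [Module R L] {f : L →ₗ[R] M} {g : M →ₗ[R] N}
    (hg : Function.Surjective g) {U : Submodule R L} {V : Submodule R N} (hU : U ≤ W.comap f)
    (hV : V.comap g ≤ W ⊔ LinearMap.range f) (HL : CyclicChain I U ⊤ h)
    (HN : CyclicChain I V ⊤ h') : CyclicChain I W ⊤ (h + h') := by
  obtain ⟨W', HW', hf⟩ := HL.exists_map_linear f hU
  have hrange : LinearMap.range f ≤ W' := by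
    rintro _ ⟨l, rfl⟩
    exact hf trivial
  exact HW'.trans ((HN.comap hg).top_of_le (hV.trans (sup_le HW'.le hrange)))

theorem exists_monotone (H : CyclicChain I W W' h) :
    ∃ c : ℕ → Submodule R M, Monotone c ∧ c 0 = W ∧ c h = W' ∧
      ∀ i < h, ∃ m, c (i + 1) = c i ⊔ Submodule.span R {m} ∧ ∀ a ∈ I, a • m ∈ c i := by
  induction H with
  | refl => exact ⟨fun _ => W, monotone_const, rfl, rfl, by simp⟩
  | @step W' h m _ hm ih =>
    obtain ⟨c, hc, h0, rfl, hstep⟩ := ih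
    refine ⟨fun n => if n ≤ h then c n else c h ⊔ Submodule.span R {m}, ?_, by simp [h0], by simp,
      fun i hi => ?_⟩
    · refine monotone_nat_of_le_succ fun n => ?_
      rcases lt_trichotomy n h with hn | rfl | hn
      · simpa [hn.le, Nat.succ_le_of_lt hn] using hc n.le_succ
      · simp
      · simp [hn.not_ge, (hn.trans n.lt_succ_self).not_ge]
    · rcases Nat.lt_succ_iff_lt_or_eq.1 hi with hi | rfl
      · simpa [hi.le, Nat.succ_le_of_lt hi] using hstep i hi
      · exact ⟨m, by simp, by simpa using hm⟩

theorem smul_mem_of_mem_sup_span {m z : M} {a : R} (hm : a • m ∈ W)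
    (hz : z ∈ W ⊔ Submodule.span R {m}) : a • z ∈ W := by
  have hle : W ⊔ Submodule.span R {m} ≤ W.comap (LinearMap.lsmul R M a) := by
    refine sup_le (fun w hw => W.smul_mem a hw) ?_
    rwa [Submodule.span_singleton_le_iff_mem]
  exact hle hz

end CyclicChain

theorem cyclicChain_bot_top_iff {R : Type u} [CommRing R] {M : Type v} [AddCommGroup M]
    [Module R M] {I : Ideal R} {h : ℕ} :
    CyclicChain I (⊥ : Submodule R M) ⊤ h ↔ HasQLFiltration R I M h := by
  constructor
  · intro H
    obtain ⟨c, hc, h0, hh, hstep⟩ := H.exists_monotone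
    refine ⟨fun i => c i, fun i j hij => hc hij, h0, hh, fun i => ?_⟩
    obtain ⟨m, hm, hI⟩ := hstep i i.2
    exact ⟨⟨m, hm⟩, fun a ha z hz => CyclicChain.smul_mem_of_mem_sup_span (hI a ha) (hm ▸ hz)⟩
  · rintro ⟨c, -, h0, hh, hstep⟩
    have hchain (i : Fin (h + 1)) : CyclicChain I (c 0) (c i) i := by
      induction i using Fin.induction with
      | zero => exact .refl
      | succ i ih =>
        obtain ⟨⟨m, hm⟩, hI⟩ := hstep i
        have hmem : m ∈ c i.succ :=
          hm ▸ Submodule.mem_sup_right (Submodule.mem_span_singleton_self m)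
        rw [hm]
        exact ih.step fun a ha => hI a ha m hmem
    simpa [h0, hh] using hchain (Fin.last h)

theorem hasQLFiltration_quotient_iff {R : Type u} [CommRing R] {M : Type v}
    [AddCommGroup M] [Module R M] {I : Ideal R} {W : Submodule R M} {h : ℕ} :
    HasQLFiltration R I (M ⧸ W) h ↔ CyclicChain I W ⊤ h := by
  rw [← cyclicChain_bot_top_iff]
  constructor
  · intro H
    simpa using H.comap W.mkQ_surjective
  · intro H
    obtain ⟨U, HU, hU⟩ := H.exists_map_linear W.mkQ (U := ⊥) (by simp)
    have hUtop : U = ⊤ := Submodule.comap_injective_of_surjective W.mkQ_surjective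
      ((top_le_iff.1 hU).trans (Submodule.comap_top W.mkQ).symm)
    rwa [hUtop] at HU

theorem quasilength_le {R : Type u} [CommRing R] {I : Ideal R} {M : Type v} [AddCommGroup M]
    [Module R M] {h : ℕ} (H : HasQLFiltration R I M h) : quasilength R I M ≤ h :=
  sInf_le ⟨h, rfl, H⟩

theorem le_quasilength {R : Type u} [CommRing R] {I : Ideal R} {M : Type v} [AddCommGroup M]
    [Module R M] {a : ℝ≥0∞} (ha : ∀ h : ℕ, HasQLFiltration R I M h → a ≤ h) :
    a ≤ (quasilength R I M : ℝ≥0∞) := by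
  rcases Set.eq_empty_or_nonempty {n : ℕ∞ | ∃ h : ℕ, n = h ∧ HasQLFiltration R I M h} with hQ | hQ
  · simp [quasilength, hQ]
  · obtain ⟨h, hh, H⟩ := csInf_mem hQ
    simpa [quasilength, hh] using ha h H

theorem length_le_add_of_exact_of_surjective {k L : Type*} [CommRing k] [AddCommGroup L]
    [Module k L] [Module k M] [Module k N] {f : L →ₗ[k] M} {g : M →ₗ[k] N}
    (hfg : Function.Exact f g) (hg : Function.Surjective g) :
    Module.length k M ≤ Module.length k L + Module.length k N := by
  have hexact : Function.Exact (LinearMap.range f).subtype g := by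
    rw [LinearMap.exact_iff, Submodule.range_subtype, LinearMap.exact_iff.1 hfg]
  rw [Module.length_eq_add_of_exact _ g (Submodule.subtype_injective _) hg hexact]
  gcongr
  exact Module.length_le_of_surjective f.rangeRestrict f.surjective_rangeRestrict

theorem length_quotient_le_add_length_quotient_sup_span (k : Type*) [CommRing k] [Algebra k R]
    [Module k M] [IsScalarTower k R M] {I : Ideal R} {W : Submodule R M} {m : M}
    (hm : ∀ a ∈ I, a • m ∈ W) :
    Module.length k (M ⧸ W) ≤
      Module.length k (R ⧸ I) + Module.length k (M ⧸ (W ⊔ Submodule.span R {m})) := by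
  let f : R ⧸ I →ₗ[R] M ⧸ W := Submodule.liftQ I (LinearMap.toSpanSingleton R _ (W.mkQ m))
    fun a ha => by simpa [← Submodule.Quotient.mk_smul] using hm a ha
  let g : M ⧸ W →ₗ[R] M ⧸ (W ⊔ Submodule.span R {m}) := Submodule.factor le_sup_left
  have hg : Function.Surjective g := Submodule.factor_surjective le_sup_left
  have hfg : Function.Exact f g := by
    rw [LinearMap.exact_iff, Submodule.range_liftQ, LinearMap.range_toSpanSingleton,
      Submodule.ker_mapQ, Submodule.comap_id, Submodule.map_sup, Submodule.mkQ_map_self, bot_sup_eq,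
      Submodule.map_span, Set.image_singleton]
  exact length_le_add_of_exact_of_surjective (f := f.restrictScalars k) (g := g.restrictScalars k)
    hfg hg

namespace CyclicChain

variable {I : Ideal R} {W W' : Submodule R M} {h : ℕ}

theorem length_quotient_le (H : CyclicChain I W W' h) (k : Type*) [CommRing k] [Algebra k R]
    [Module k M] [IsScalarTower k R M] :
    Module.length k (M ⧸ W) ≤ h * Module.length k (R ⧸ I) + Module.length k (M ⧸ W') := by
  induction H with
  | refl => simp
  | step _ hm ih =>
    rw [Nat.cast_succ, add_mul, one_mul, add_assoc]
    refine ih.trans ?_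
    gcongr
    exact length_quotient_le_add_length_quotient_sup_span k hm

theorem span_singleton_of_pow_smul_mem {y : R} {t k : ℕ} {m : M} (hy : y ^ t • m ∈ W)
    (H : ∀ j < t, CyclicChain I (W ⊔ Submodule.span R {y ^ (j + 1) • m})
      (W ⊔ Submodule.span R {y ^ j • m}) k) :
    CyclicChain I W (W ⊔ Submodule.span R {m}) (t * k) := by
  induction t generalizing m with
  | zero =>
    have : W ⊔ Submodule.span R {m} = W := by simpa using hy
    simpa [this] using CyclicChain.refl
  | succ t ih =>
    have hfirst := H 0 t.succ_pos
    simp only [zero_add, pow_one, pow_zero, one_smul] at hfirst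
    rw [add_mul, one_mul]
    refine (ih (m := y • m) (by rwa [smul_smul, ← pow_succ]) fun j hj => ?_).trans hfirst
    simpa only [smul_smul, ← pow_succ] using H (j + 1) (by omega)

theorem span_singleton_of_monomials {d : ℕ} {x : Fin d → R} {t : Fin d → ℕ} (F : Finset (Fin d))
    {m : M} (hF : ∀ i ∉ F, x i • m ∈ W) (ht : ∀ i ∈ F, x i ^ t i • m ∈ W) :
    CyclicChain (Ideal.span (Set.range x)) W (W ⊔ Submodule.span R {m}) (∏ i ∈ F, t i) := by
  classical
  induction F using Finset.induction_on generalizing W m with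
  | empty =>
    refine CyclicChain.refl.step fun a ha => ?_
    have hle : Ideal.span (Set.range x) ≤ W.comap (LinearMap.toSpanSingleton R M m) := by
      rw [Ideal.span, Submodule.span_le]
      rintro _ ⟨i, rfl⟩
      exact hF i (Finset.notMem_empty i)
    exact hle ha
  | insert a F ha ih =>
    rw [Finset.prod_insert ha]
    refine span_singleton_of_pow_smul_mem (ht a (Finset.mem_insert_self a F)) fun j _ => ?_
    have hpow : x a • x a ^ j • m = x a ^ (j + 1) • m := by rw [smul_smul, ← pow_succ']
    have hle : Submodule.span R {x a ^ (j + 1) • m} ≤ Submodule.span R {x a ^ j • m} := by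
      rw [Submodule.span_singleton_le_iff_mem, ← hpow]
      exact Submodule.smul_mem _ _ (Submodule.mem_span_singleton_self _)
    have hchain := ih (W := W ⊔ Submodule.span R {x a ^ (j + 1) • m}) (m := x a ^ j • m)
      (fun i hi => ?_) fun i hi => ?_
    · rwa [sup_assoc, sup_eq_right.2 hle] at hchain
    · obtain rfl | hia := eq_or_ne i a
      · exact hpow ▸ Submodule.mem_sup_right (Submodule.mem_span_singleton_self _)
      · rw [smul_comm]
        exact Submodule.mem_sup_left (W.smul_mem _ (hF i (by simp [hia, hi])))
    · rw [smul_comm]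
      exact Submodule.mem_sup_left (W.smul_mem _ (ht i (Finset.mem_insert_of_mem hi)))

theorem span_image {W : Submodule R M} {d : ℕ} (x : Fin d → R) (t : Fin d → ℕ)
    (hW : powerIdeal x t • ⊤ ≤ W) {ι : Type*} (m : ι → M) (F : Finset ι) :
    CyclicChain (Ideal.span (Set.range x)) W (W ⊔ Submodule.span R (m '' F))
      (F.card * ∏ i, t i) := by
  classical
  induction F using Finset.induction_on with
  | empty => simpa using CyclicChain.refl
  | insert a F ha ih =>
    rw [Finset.card_insert_of_notMem ha, add_mul, one_mul, Finset.coe_insert, Set.image_insert_eq,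
      Submodule.span_insert, sup_comm (Submodule.span R {m a}), ← sup_assoc]
    refine ih.trans (span_singleton_of_monomials _ (by simp) fun i _ => ?_)
    exact Submodule.mem_sup_left
      (hW (Submodule.smul_mem_smul (Ideal.subset_span ⟨i, rfl⟩) trivial))

end CyclicChain
end CyclicChain

/-! ### The upper bound -/

section UpperBound

open IsLocalRing Module

variable {R : Type*} [CommRing R]

theorem comap_smul_top_of_surjective {M N : Type*} [AddCommGroup M] [Module R M] [AddCommGroup N]
    [Module R N] (J : Ideal R) {g : M →ₗ[R] N} (hg : Function.Surjective g) :
    (J • (⊤ : Submodule R N)).comap g = J • ⊤ ⊔ LinearMap.ker g := by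
  rw [← LinearMap.range_eq_top.2 hg, ← Submodule.map_top, ← Submodule.map_smul'',
    Submodule.comap_map_eq]

theorem CyclicChain.pow_smul_top_of_quotSMulTop {N : Type*} [AddCommGroup N] [Module R N]
    {I : Ideal R} {y : R} (hy : y ∈ I) {n h : ℕ}
    (H : CyclicChain I (I ^ n • (⊤ : Submodule R (QuotSMulTop y N))) ⊤ h) {k : ℕ} (hk : k ≤ n) :
    CyclicChain I (I ^ k • (⊤ : Submodule R N)) ⊤ (k * h) := by
  induction k with
  | zero => simpa using CyclicChain.refl
  | succ k ih =>
    have hquot := H.top_of_le (Submodule.smul_mono_left (Ideal.pow_le_pow_right hk))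
    rw [add_mul, one_mul]
    refine .of_exact (f := LinearMap.lsmul R N y) (Submodule.mkQ_surjective _) ?_ ?_
      (ih (by omega)) hquot
    · refine Submodule.smul_le.2 fun a ha n _ => ?_
      rw [Submodule.mem_comap, map_smul, LinearMap.lsmul_apply, smul_smul, pow_succ]
      exact Submodule.smul_mem_smul (Ideal.mul_mem_mul ha hy) trivial
    · rw [comap_smul_top_of_surjective _ (Submodule.mkQ_surjective _), Submodule.ker_mkQ]
      refine sup_le_sup_left (fun z hz => ?_) _
      obtain ⟨w, -, rfl⟩ := (Submodule.mem_smul_pointwise_iff_exists _ _ _).1 hz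
      exact ⟨w, rfl⟩

theorem CyclicChain.bot_top_of_subsingleton {N : Type*} [AddCommGroup N] [Module R N]
    [Subsingleton N] {I : Ideal R} {W : Submodule R N} : CyclicChain I W ⊤ 0 := by
  rw [Subsingleton.elim W ⊤]
  exact .refl

theorem CyclicChain.bot_top_of_equiv_quotient {N : Type*} [AddCommGroup N] [Module R N]
    {I J : Ideal R} (hIJ : I ≤ J) (e : N ≃ₗ[R] R ⧸ J) :
    CyclicChain I (⊥ : Submodule R N) ⊤ 1 := by
  have hspan : Submodule.span R {e.symm 1} = ⊤ := by
    rw [eq_top_iff]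
    intro z _
    obtain ⟨a, ha⟩ := Ideal.Quotient.mk_surjective (e z)
    refine Submodule.mem_span_singleton.2 ⟨a, e.injective ?_⟩
    rw [map_smul, e.apply_symm_apply, ← ha, Algebra.smul_def, mul_one]
    rfl
  have H : CyclicChain I (⊥ : Submodule R N) (⊥ ⊔ Submodule.span R {e.symm 1}) (0 + 1) :=
    CyclicChain.refl.step fun a ha => by
      have : a • (1 : R ⧸ J) = 0 := Ideal.Quotient.eq_zero_iff_mem.2 (J.mul_mem_right 1 (hIJ ha))
      rw [Submodule.mem_bot, ← map_smul, this, map_zero]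
  rwa [hspan, bot_sup_eq] at H

theorem supportDim_quotSMulTop_lt_of_equiv_quotient {N : Type*} [AddCommGroup N]
    [Module R N] [Module.Finite R N] {p : Ideal R} [p.IsPrime] (e : N ≃ₗ[R] R ⧸ p) {y : R}
    (hy : y ∉ p) {δ : ℕ}
    (hdim : supportDim R N < (δ + 1 : ℕ)) : supportDim R (QuotSMulTop y N) < δ := by
  have hmin : ∀ q ∈ (annihilator R N).minimalPrimes, y ∉ q := by
    rw [e.annihilator_eq, Ideal.annihilator_quotient, Ideal.minimalPrimes_eq_subsingleton_self]
    rintro _ rfl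
    exact hy
  have hle := supportDim_quotSMulTop_succ_le_of_notMem_minimalPrimes hmin
  exact ENat.WithBot.add_one_le_natCast_iff.1
    (ENat.WithBot.lt_add_one_iff.1 (hle.trans_lt (by simpa using hdim)))

theorem exists_cyclicChain_pow_smul_top [IsNoetherianRing R] [IsLocalRing R] {I : Ideal R}
    (δ : ℕ) (N : Type*) [AddCommGroup N] [Module R N] [Module.Finite R N]
    (hsupp : support R N ∩ PrimeSpectrum.zeroLocus I ⊆ {closedPoint R})
    (hdim : supportDim R N < δ) :
    ∃ B : ℕ, ∀ n : ℕ, ∃ h : ℕ,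
      CyclicChain I (I ^ n • (⊤ : Submodule R N)) ⊤ h ∧ h * n ≤ B * n ^ δ := by
  induction δ generalizing N with
  | zero =>
    have : Subsingleton N := (supportDim_eq_bot_iff_subsingleton R N).1 (WithBot.lt_coe_bot.mp hdim)
    exact ⟨0, fun n => ⟨0, .bot_top_of_subsingleton, by simp⟩⟩
  | succ δ ih =>
    induction ‹Module.Finite R N› using
      IsNoetherianRing.induction_on_isQuotientEquivQuotientPrime R with
    | subsingleton N => exact ⟨0, fun n => ⟨0, .bot_top_of_subsingleton, by simp⟩⟩
    | quotient N p e =>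
      by_cases hIp : I ≤ p.asIdeal
      · refine ⟨1, fun n => ?_⟩
        obtain rfl | _ := eq_or_ne n 0
        · exact ⟨0, by simpa using CyclicChain.refl, by simp⟩
        · exact ⟨1, (CyclicChain.bot_top_of_equiv_quotient hIp e).top_of_le bot_le,
            by simpa using Nat.le_self_pow δ.succ_ne_zero n⟩
      · obtain ⟨y, hyI, hyp⟩ := SetLike.not_le_iff_exists.1 hIp
        obtain ⟨B, hB⟩ := ih (QuotSMulTop y N)
          ((Set.inter_subset_inter_left _
            (support_subset_of_surjective _ (Submodule.mkQ_surjective _))).trans hsupp)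
          (supportDim_quotSMulTop_lt_of_equiv_quotient e hyp hdim)
        refine ⟨B, fun n => ?_⟩
        obtain ⟨h, H, hn⟩ := hB n
        refine ⟨n * h, H.pow_smul_top_of_quotSMulTop hyI le_rfl, ?_⟩
        calc n * h * n = h * n * n := by ring
          _ ≤ B * n ^ δ * n := by gcongr
          _ = B * n ^ (δ + 1) := by ring
    | exact N₁ N₂ N₃ f g hf hg hfg h₁ h₃ =>
      obtain ⟨B₁, hB₁⟩ := h₁
        ((Set.inter_subset_inter_left _ (support_subset_of_injective f hf)).trans hsupp)
        ((supportDim_le_of_injective f hf).trans_lt hdim)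
      obtain ⟨B₃, hB₃⟩ := h₃
        ((Set.inter_subset_inter_left _ (support_subset_of_surjective g hg)).trans hsupp)
        ((supportDim_le_of_surjective g hg).trans_lt hdim)
      refine ⟨B₁ + B₃, fun n => ?_⟩
      obtain ⟨a, Ha, ha⟩ := hB₁ n
      obtain ⟨b, Hb, hb⟩ := hB₃ n
      refine ⟨a + b, .of_exact (f := f) hg ?_ ?_ Ha Hb, by rw [add_mul, add_mul]; gcongr⟩
      · rw [← Submodule.map_le_iff_le_comap, Submodule.map_smul'']
        exact Submodule.smul_mono le_rfl le_top
      · rw [comap_smul_top_of_surjective _ hg, LinearMap.exact_iff.1 hfg]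

theorem exists_isTorsion_quotient_span [IsDomain R] {N : Type*} [AddCommGroup N] [Module R N]
    [Module.Finite R N] {r : ℕ} (hr : finrank R N ≤ r) :
    ∃ m : Fin r → N, IsTorsion R (N ⧸ Submodule.span R (Set.range m)) := by
  obtain ⟨v, hv⟩ := exists_linearIndependent_of_le_finrank (R := R) (M := N) le_rfl
  have hspan : Module.IsTorsion R (N ⧸ Submodule.span R (Set.range v)) := by
    rw [← finrank_eq_zero_iff_isTorsion]
    have := Submodule.finrank_quotient_add_finrank (Submodule.span R (Set.range v))
    rw [finrank_span_eq_card hv, Fintype.card_fin] at this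
    omega
  refine ⟨fun i => if h : i.1 < finrank R N then v ⟨i, h⟩ else 0, fun {z} => ?_⟩
  obtain ⟨y, rfl⟩ := Submodule.mkQ_surjective _ z
  obtain ⟨s, hs⟩ := @hspan (Submodule.mkQ _ y)
  refine ⟨s, ?_⟩
  rw [Submonoid.smul_def, ← map_smul, Submodule.mkQ_apply, Submodule.Quotient.mk_eq_zero] at hs ⊢
  refine Submodule.span_mono ?_ hs
  rintro _ ⟨i, rfl⟩
  exact ⟨⟨i, i.2.trans_le hr⟩, by simp⟩

theorem finrank_fractionRing_tensorProduct (N : Type*) [AddCommGroup N] [Module R N] :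
    finrank (FractionRing R) (FractionRing R ⊗[R] N) = finrank R N := by
  rw [IsLocalization.finrank_eq (FractionRing R) (nonZeroDivisors R) le_rfl,
    IsLocalizedModule.finrank_eq (nonZeroDivisors R) (TensorProduct.mk R (FractionRing R) N 1)
      le_rfl]

theorem notMem_support_quotient_iff {M : Type*} [AddCommGroup M] [Module R M] [Module.Finite R M]
    {W : Submodule R M} {P : PrimeSpectrum R} :
    P ∉ support R (M ⧸ W) ↔ ∀ y, ∃ s ∉ P.asIdeal, s • y ∈ W ⊔ P.asIdeal • ⊤ := by
  have hsupp : P ∉ support R (M ⧸ W) ↔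
      P ∉ support R ((M ⧸ W) ⧸ (P.asIdeal • ⊤ : Submodule R (M ⧸ W))) := by
    rw [support_quotient, Set.mem_inter_iff, not_and_or,
      or_iff_left (not_not.2 ((PrimeSpectrum.mem_zeroLocus _ _).2 le_rfl))]
  have hmem (z : M) : z ∈ W ⊔ P.asIdeal • ⊤ ↔ W.mkQ z ∈ (P.asIdeal • ⊤ : Submodule R (M ⧸ W)) := by
    rw [← Submodule.mem_comap, comap_smul_top_of_surjective _ W.mkQ_surjective, Submodule.ker_mkQ,
      sup_comm]
  simp only [hsupp, notMem_support_iff', (Submodule.mkQ_surjective _).forall, hmem, map_smul]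
  simp only [← map_smul, ← LinearMap.mem_ker, Submodule.ker_mkQ]

theorem exists_notMem_support_quotient_span {M : Type*} [AddCommGroup M] [Module R M]
    [Module.Finite R M] {P : PrimeSpectrum R} {r : ℕ}
    (hr : finrank (R ⧸ P.asIdeal) (M ⧸ (P.asIdeal • ⊤ : Submodule R M)) ≤ r) :
    ∃ m : Fin r → M, P ∉ support R (M ⧸ Submodule.span R (Set.range m)) := by
  have : Module.Finite (R ⧸ P.asIdeal) (M ⧸ (P.asIdeal • ⊤ : Submodule R M)) :=
    .of_restrictScalars_finite R _ _
  obtain ⟨m, hm⟩ := exists_isTorsion_quotient_span hr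
  choose m' hm' using fun i => Submodule.mkQ_surjective _ (m i)
  obtain rfl : Submodule.mkQ _ ∘ m' = m := funext hm'
  refine ⟨m', notMem_support_quotient_iff.2 fun y => ?_⟩
  obtain ⟨⟨s, hs⟩, hsy⟩ := @hm (Submodule.mkQ _ (Submodule.mkQ _ y))
  obtain ⟨s, rfl⟩ := Ideal.Quotient.mk_surjective s
  refine ⟨s, fun h => nonZeroDivisors.ne_zero hs (Ideal.Quotient.eq_zero_iff_mem.2 h), ?_⟩
  rw [Submonoid.mk_smul, ← map_smul, Submodule.mkQ_apply, Submodule.Quotient.mk_eq_zero,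
    ← Submodule.restrictScalars_mem R, Submodule.restrictScalars_span R (R ⧸ P.asIdeal)
      Ideal.Quotient.mk_surjective, Set.range_comp, ← Submodule.map_span] at hsy
  rw [sup_comm, ← Submodule.ker_mkQ (P.asIdeal • ⊤), sup_comm, ← Submodule.comap_map_eq]
  exact hsy

theorem exists_forall_notMem_support_quotient_span {M : Type*} [AddCommGroup M] [Module R M]
    [Module.Finite R M] (S : Finset (PrimeSpectrum R))
    (hS : IsAntichain (· ≤ ·) (S : Set (PrimeSpectrum R)))
    {r : ℕ} (hr : ∀ P ∈ S, finrank (R ⧸ P.asIdeal) (M ⧸ (P.asIdeal • ⊤ : Submodule R M)) ≤ r) :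
    ∃ m : Fin r → M, ∀ P ∈ S, P ∉ support R (M ⧸ Submodule.span R (Set.range m)) := by
  classical
  choose! m hm using fun P hP => exists_notMem_support_quotient_span (hr P hP)
  have hsep (P) (hP : P ∈ S) : ∃ a ∉ P.asIdeal, ∀ Q ∈ S, Q ≠ P → a ∈ Q.asIdeal := by
    have hnot : ¬ (S.erase P).inf PrimeSpectrum.asIdeal ≤ P.asIdeal := by
      rw [Ideal.IsPrime.inf_le' P.isPrime]
      rintro ⟨Q, hQ, hle⟩
      exact (Finset.ne_of_mem_erase hQ) (hS.eq (Finset.mem_of_mem_erase hQ) hP hle)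
    obtain ⟨a, ha, haP⟩ := SetLike.not_le_iff_exists.1 hnot
    exact ⟨a, haP, fun Q hQ hne => Finset.inf_le (f := PrimeSpectrum.asIdeal)
      (Finset.mem_erase.2 ⟨hne, hQ⟩) ha⟩
  choose! a ha ha' using hsep
  refine ⟨fun l => ∑ P ∈ S, a P • m P l, fun P hP => ?_⟩
  set W := Submodule.span R (Set.range fun l => ∑ P ∈ S, a P • m P l)
  have hle : Submodule.span R (Set.range (m P)) ⊔ P.asIdeal • ⊤ ≤
      (W ⊔ P.asIdeal • ⊤).comap (LinearMap.lsmul R M (a P)) := by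
    refine sup_le (Submodule.span_le.2 ?_)
      fun y hy => Submodule.smul_mem _ _ (Submodule.mem_sup_right hy)
    rintro _ ⟨l, rfl⟩
    have hsum : a P • m P l + ∑ Q ∈ S.erase P, a Q • m Q l ∈ W :=
      Finset.add_sum_erase S (fun Q => a Q • m Q l) hP ▸ Submodule.subset_span ⟨l, rfl⟩
    have herase : ∑ Q ∈ S.erase P, a Q • m Q l ∈ (P.asIdeal • ⊤ : Submodule R M) :=
      Submodule.sum_mem _ fun Q hQ => Submodule.smul_mem_smul
        (ha' Q (Finset.mem_of_mem_erase hQ) P hP (Finset.ne_of_mem_erase hQ).symm) trivial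
    simpa using Submodule.sub_mem _ (Submodule.mem_sup_left (T := P.asIdeal • ⊤) hsum)
      (Submodule.mem_sup_right (S := W) herase)
  refine notMem_support_quotient_iff.2 fun y => ?_
  obtain ⟨s, hs, hsy⟩ := notMem_support_quotient_iff.1 (hm P hP) y
  refine ⟨a P * s, P.isPrime.mul_notMem (ha P hP) hs, ?_⟩
  rw [mul_smul]
  exact hle hsy

theorem span_range_pow_le_powerIdeal {d : ℕ} (x : Fin d → R) {T : ℕ} (hT : 1 ≤ T) :
    Ideal.span (Set.range x) ^ ((d + 1) * T) ≤ powerIdeal x (fun _ => T) := by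
  classical
  have key (F : Finset (Fin d)) :
      Ideal.span (x '' F) ^ (F.card * T + 1) ≤ powerIdeal x (fun _ => T) := by
    induction F using Finset.induction_on with
    | empty => simp
    | insert a F ha ih =>
      rw [Finset.card_insert_of_notMem ha, Finset.coe_insert, Set.image_insert_eq, Set.insert_eq,
        Ideal.span_union, add_one_mul, add_right_comm, add_comm _ T]
      refine Ideal.sup_pow_add_le_pow_sup_pow.trans (sup_le ?_ ih)
      rw [Ideal.span_singleton_pow, Ideal.span_singleton_le_iff_mem]
      exact Ideal.subset_span ⟨a, rfl⟩
  have huniv := key Finset.univ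
  rw [Finset.coe_univ, Set.image_univ, Finset.card_univ, Fintype.card_fin] at huniv
  refine (Ideal.pow_le_pow_right ?_).trans huniv
  rw [add_one_mul]
  gcongr

theorem supportDim_lt_of_forall_minimalPrimes {M N : Type*} [AddCommGroup M] [Module R M]
    [Module.Finite R M] [AddCommGroup N] [Module R N] {d : ℕ} (hsupp : support R N ⊆ support R M)
    (hM : supportDim R M ≤ d)
    (hN : ∀ P ∈ support R N, P.asIdeal ∈ (annihilator R M).minimalPrimes →
      ringKrullDim (R ⧸ P.asIdeal) ≠ d) : supportDim R N < d := by
  by_contra! hd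
  obtain ⟨l, hl⟩ := Order.le_krullDim_iff.1 hd
  have hhead : annihilator R M ≤ l.head.1.asIdeal := by
    have := hsupp l.head.2
    rwa [support_eq_zeroLocus] at this
  obtain ⟨P, hP, hPle⟩ := Ideal.exists_minimalPrimes_le hhead
  have := hP.1.1
  have hPM : (⟨P, hP.1.1⟩ : PrimeSpectrum R) ∈ support R M := by
    rw [support_eq_zeroLocus]
    exact hP.1.2
  obtain hPl | hPl := eq_or_lt_of_le (show (⟨P, hP.1.1⟩ : PrimeSpectrum R) ≤ l.head.1 from hPle)
  · refine hN l.head.1 l.head.2 (hPl ▸ hP) (le_antisymm ?_ ?_)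
    · rw [supportDim_eq_ringKrullDim_quotient_annihilator] at hM
      exact (ringKrullDim_le_of_surjective _ (Ideal.Quotient.factor_surjective hhead)).trans hM
    · rw [ringKrullDim_quotient, ← hl]
      exact Order.LTSeries.length_le_krullDim
        (⟨l.length, fun i => ⟨(l i).1, l.head_le i⟩, l.step⟩ :
          LTSeries (PrimeSpectrum.zeroLocus (l.head.1.asIdeal : Set R)))
  · have hle := (Order.LTSeries.length_le_krullDim (RelSeries.cons
      (l.map (Set.inclusion hsupp) fun _ _ h => h) ⟨_, hPM⟩ hPl)).trans hM
    change ((0 + l.length + 1 : ℕ) : WithBot ℕ∞) ≤ d at hle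
    rw [Nat.cast_le] at hle
    omega

theorem content_le_of_forall_exists_cyclicChain {R : Type u} [CommRing R] {M : Type v}
    [AddCommGroup M] [Module R M] {d : ℕ} {x : Fin d → R} {r B : ℕ}
    (H : ∀ T : ℕ, 1 ≤ T → ∃ h : ℕ,
      CyclicChain (Ideal.span (Set.range x)) (powerIdeal x (fun _ => T) • (⊤ : Submodule R M)) ⊤ h ∧
        h * T ≤ (r * T + B) * T ^ d) : content x M ≤ r := by
  refine iSup_le fun s => ?_
  have hlim : Filter.Tendsto (fun T : ℕ => (r : ℝ≥0∞) + B / T) Filter.atTop (nhds r) := by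
    simpa using (ENNReal.Tendsto.const_div ENNReal.tendsto_nat_nhds_top
      (.inr (ENNReal.natCast_ne_top B))).const_add (r : ℝ≥0∞)
  refine ge_of_tendsto hlim ?_
  filter_upwards [Filter.eventually_ge_atTop (max s 1)] with T hT
  have hT1 : 1 ≤ T := (le_max_right _ _).trans hT
  have hT0 : (T : ℝ≥0∞) ≠ 0 := Nat.cast_ne_zero.2 (by omega)
  have hTt : (T : ℝ≥0∞) ≠ ⊤ := ENNReal.natCast_ne_top T
  obtain ⟨h, hh, hle⟩ := H T hT1
  refine (iInf_le _ ⟨fun _ => T, fun _ => ⟨(le_max_left _ _).trans hT, hT1⟩⟩).trans ?_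
  simp only [Finset.prod_const, Finset.card_univ, Fintype.card_fin]
  have hquasi := quasilength_le (hasQLFiltration_quotient_iff.2 hh)
  refine ENNReal.div_le_of_le_mul ?_
  calc _ ≤ (h : ℝ≥0∞) := by exact_mod_cast hquasi
    _ ≤ ((r * T + B) * T ^ d) / T :=
      (ENNReal.le_div_iff_mul_le (.inl hT0) (.inl hTt)).2 (by exact_mod_cast hle)
    _ = (r + B / T) * T ^ d := by
      rw [ENNReal.mul_div_right_comm, ENNReal.add_div, ENNReal.mul_div_cancel_right hT0 hTt]

theorem content_le_of_forall_finrank_le {R : Type u} [CommRing R] [IsNoetherianRing R]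
    [IsLocalRing R] {M : Type v} [AddCommGroup M] [Module R M] [Module.Finite R M] {d : ℕ}
    (hd : supportDim R M ≤ d) {x : Fin d → R}
    (hx : support R M ∩ PrimeSpectrum.zeroLocus (Ideal.span (Set.range x)) ⊆ {closedPoint R})
    {r : ℕ} (hr : ∀ P ∈ (annihilator R M).minimalPrimes, ringKrullDim (R ⧸ P) = d →
      finrank (R ⧸ P) (M ⧸ (P • ⊤ : Submodule R M)) ≤ r) :
    content x M ≤ r := by
  classical
  set I := Ideal.span (Set.range x)
  let S : Set (PrimeSpectrum R) :=
    {P | P.asIdeal ∈ (annihilator R M).minimalPrimes ∧ ringKrullDim (R ⧸ P.asIdeal) = d}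
  have hfin : S.Finite := Set.Finite.of_finite_image
    ((Ideal.finite_minimalPrimes_of_isNoetherianRing R (annihilator R M)).subset
      (Set.image_subset_iff.2 fun P hP => hP.1)) fun P _ Q _ h => PrimeSpectrum.ext h
  have hanti : IsAntichain (· ≤ ·) (hfin.toFinset : Set (PrimeSpectrum R)) := by
    rw [hfin.coe_toFinset]
    exact fun P hP Q hQ hne hle => hne (hle.antisymm (hQ.1.2 hP.1.1 hle))
  obtain ⟨m, hm⟩ := exists_forall_notMem_support_quotient_span (M := M) hfin.toFinset hanti
    fun P hP => hr _ (hfin.mem_toFinset.1 hP).1 (hfin.mem_toFinset.1 hP).2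
  set W := Submodule.span R (Set.range m)
  have hsupp : support R (M ⧸ W) ⊆ support R M :=
    support_subset_of_surjective _ W.mkQ_surjective
  obtain ⟨B, hB⟩ := exists_cyclicChain_pow_smul_top d (M ⧸ W)
    ((Set.inter_subset_inter_left _ hsupp).trans hx)
    (supportDim_lt_of_forall_minimalPrimes hsupp hd fun P hP hmin hPd =>
      hm P (hfin.mem_toFinset.2 ⟨hmin, hPd⟩) hP)
  refine content_le_of_forall_exists_cyclicChain (B := B * (d + 1) ^ d) fun T hT => ?_
  obtain ⟨h, H, hle⟩ := hB ((d + 1) * T)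
  have hW := CyclicChain.span_image x (fun _ => T)
    (le_refl (powerIdeal x (fun _ => T) • (⊤ : Submodule R M))) m Finset.univ
  have hquot := (H.comap W.mkQ_surjective).top_of_le
    (V := powerIdeal x (fun _ => T) • (⊤ : Submodule R M) ⊔ W) (by
      rw [comap_smul_top_of_surjective _ W.mkQ_surjective, Submodule.ker_mkQ]
      exact sup_le_sup_right (Submodule.smul_mono_left (span_range_pow_le_powerIdeal x hT)) W)
  simp only [Finset.coe_univ, Set.image_univ, Finset.prod_const, Finset.card_univ,
    Fintype.card_fin] at hW
  refine ⟨r * T ^ d + h, hW.trans hquot, ?_⟩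
  have hhT : h * T ≤ B * (d + 1) ^ d * T ^ d :=
    calc h * T ≤ h * ((d + 1) * T) := by gcongr; exact Nat.le_mul_of_pos_left T d.succ_pos
      _ ≤ B * ((d + 1) * T) ^ d := hle
      _ = B * (d + 1) ^ d * T ^ d := by rw [mul_pow, mul_assoc]
  linarith

end UpperBound

/-! ### Power series modulo powers of the variables -/

section PowerIdeal

variable {R S : Type*} [CommRing R] [CommRing S] {d : ℕ}

theorem map_powerIdeal (f : R →+* S) (x : Fin d → R) (t : Fin d → ℕ) :
    (powerIdeal x t).map f = powerIdeal (fun i => f (x i)) t := by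
  rw [powerIdeal, powerIdeal, Ideal.map_span, ← Set.range_comp]
  simp only [Function.comp_def, map_pow]

theorem powerIdeal_pow (x : Fin d → R) (t : Fin d → ℕ) (q : ℕ) :
    powerIdeal (fun i => x i ^ q) t = powerIdeal x (q • t) := by
  simp only [powerIdeal, ← pow_mul, Pi.smul_apply, smul_eq_mul]

theorem mem_ideal_smul_top_pi_iff {ι : Type*} [Finite ι] {I : Ideal R} {v : ι → R} :
    v ∈ I • (⊤ : Submodule R (ι → R)) ↔ ∀ i, v i ∈ I := by
  classical
  have := Fintype.ofFinite ι
  refine ⟨fun hv i => ?_, fun hv => ?_⟩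
  · refine Submodule.smul_induction_on hv (fun a ha w _ => I.mul_mem_right _ ha) ?_
    exact fun _ _ hv hw => I.add_mem hv hw
  · rw [pi_eq_sum_univ v]
    exact Submodule.sum_mem _ fun i _ => Submodule.smul_mem_smul (hv i) trivial

theorem CyclicChain.exists_map_ringHom {ι : Type*} [Finite ι] {I J : Ideal R} {h : ℕ}
    {W : Submodule R (ι → R)} (H : CyclicChain I (J • ⊤) W h) (g : R →+* S) :
    ∃ W' : Submodule S (ι → S), CyclicChain (I.map g) (J.map g • ⊤) W' h ∧
      ∀ v ∈ W, (fun b => g (v b)) ∈ W' := by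
  let G : (ι → R) →ₛₗ[g] (ι → S) :=
    { toFun := fun v b => g (v b)
      map_add' := fun v w => funext fun b => map_add _ _ _
      map_smul' := fun a v => funext fun b => map_mul _ _ _ }
  have hG : J • ⊤ ≤ (J.map g • (⊤ : Submodule S (ι → S))).comap G := fun v hv =>
    mem_ideal_smul_top_pi_iff.2 fun b => Ideal.mem_map_of_mem g (mem_ideal_smul_top_pi_iff.1 hv b)
  obtain ⟨W', HW', hW'⟩ := H.exists_map G hG
  exact ⟨W', HW', fun v hv => hW' hv⟩

end PowerIdeal

section BoxDefect

variable {d : ℕ}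

/-- The number of lattice points of the box `∏ [0, sᵢ)` outside its translate by `α`. It bounds the
length of `k⟦X⟧ ⧸ (c, X₁ ^ s₁, …, X_d ^ s_d)` when `α` is the lexicographic order of `c`. -/
def boxDefect (s α : Fin d → ℕ) : ℕ :=
  ∏ i, s i - ∏ i, (s i - α i)

theorem boxDefect_smul (q : ℕ) (s α : Fin d → ℕ) :
    boxDefect (q • s) (q • α) = q ^ d * boxDefect s α := by
  simp only [boxDefect, Pi.smul_apply, smul_eq_mul, ← Nat.mul_sub, Finset.prod_mul_distrib,
    Finset.prod_const, Finset.card_univ, Fintype.card_fin]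

theorem mul_prod_le_mul_prod_tsub_add {ι : Type*} (F : Finset ι) {m : ℕ} {s : ι → ℕ} (α : ι → ℕ)
    (hs : ∀ i ∈ F, m ≤ s i) :
    m * ∏ i ∈ F, s i ≤ m * ∏ i ∈ F, (s i - α i) + (∑ i ∈ F, α i) * ∏ i ∈ F, s i := by
  classical
  induction F using Finset.induction_on with
  | empty => simp
  | insert j F hj ih =>
    have ih := ih fun i hi => hs i (Finset.mem_insert_of_mem hi)
    have hm := hs j (Finset.mem_insert_self j F)
    have hprod : ∏ i ∈ F, (s i - α i) ≤ ∏ i ∈ F, s i := Finset.prod_le_prod' fun i _ => tsub_le_self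
    rw [Finset.prod_insert hj, Finset.prod_insert hj, Finset.sum_insert hj]
    have hsub : s j ≤ (s j - α j) + α j := le_tsub_add
    calc m * (s j * ∏ i ∈ F, s i) ≤ s j * (m * ∏ i ∈ F, (s i - α i)) +
          s j * ((∑ i ∈ F, α i) * ∏ i ∈ F, s i) := by linarith [Nat.mul_le_mul_left (s j) ih]
      _ ≤ (s j - α j + α j) * (m * ∏ i ∈ F, (s i - α i)) +
          s j * ((∑ i ∈ F, α i) * ∏ i ∈ F, s i) := by gcongr
      _ = m * ((s j - α j) * ∏ i ∈ F, (s i - α i)) + α j * (m * ∏ i ∈ F, (s i - α i)) +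
          (∑ i ∈ F, α i) * (s j * ∏ i ∈ F, s i) := by ring
      _ ≤ m * ((s j - α j) * ∏ i ∈ F, (s i - α i)) + α j * (s j * ∏ i ∈ F, s i) +
          (∑ i ∈ F, α i) * (s j * ∏ i ∈ F, s i) := by gcongr
      _ = _ := by ring

theorem mul_boxDefect_le {m : ℕ} {s : Fin d → ℕ} (α : Fin d → ℕ) (hs : ∀ i, m ≤ s i) :
    m * boxDefect s α ≤ (∑ i, α i) * ∏ i, s i := by
  rw [boxDefect, Nat.mul_sub, tsub_le_iff_left]
  exact mul_prod_le_mul_prod_tsub_add Finset.univ α fun i _ => hs i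

end BoxDefect

section PowerSeries

open MvPowerSeries

theorem exists_eq_sum_monomial_mul {σ A κ : Type*} [CommRing A] [Fintype κ] (f : MvPowerSeries σ A)
    (m : κ → σ →₀ ℕ) (h : ∀ e, coeff e f ≠ 0 → ∃ i, m i ≤ e) :
    ∃ b : κ → MvPowerSeries σ A, f = ∑ i, monomial (m i) 1 * b i := by
  classical
  rcases isEmpty_or_nonempty κ with hκ | hκ
  · refine ⟨isEmptyElim, ?_⟩
    ext e
    simpa using fun he => h e he
  have hchoose (e) : ∃ i, coeff e f ≠ 0 → m i ≤ e := by
    by_cases he : coeff e f = 0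
    · exact ⟨hκ.some, fun hne => absurd he hne⟩
    · exact (h e he).imp fun i hi _ => hi
  choose c hc using hchoose
  let b (i : κ) : MvPowerSeries σ A := fun e => if c (e + m i) = i then coeff (e + m i) f else 0
  have hb (i e) : coeff e (b i) = if c (e + m i) = i then coeff (e + m i) f else 0 := rfl
  refine ⟨b, ?_⟩
  ext e
  have hterm (i) : coeff e (monomial (m i) 1 * b i) = if c e = i then coeff e f else 0 := by
    rw [coeff_monomial_mul]
    split_ifs with hle hi hi
    · rw [hb, tsub_add_cancel_of_le hle, if_pos hi, one_mul]
    · rw [hb, tsub_add_cancel_of_le hle, if_neg hi, one_mul]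
    · by_contra hne
      exact hle (hi ▸ hc e (Ne.symm hne))
    · rfl
  simp only [map_sum, hterm, Finset.sum_ite_eq, Finset.mem_univ, if_true]

variable {k : Type*} [Field k] {d : ℕ}

theorem mem_powerIdeal_X_iff {s : Fin d → ℕ} {f : MvPowerSeries (Fin d) k} :
    f ∈ powerIdeal (X : Fin d → MvPowerSeries (Fin d) k) s ↔
      ∀ e : Fin d →₀ ℕ, (∀ i, e i < s i) → coeff e f = 0 := by
  classical
  constructor
  · intro hf e he
    obtain ⟨b, rfl⟩ := Ideal.mem_span_range_iff_exists_fun.1 hf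
    rw [map_sum]
    refine Finset.sum_eq_zero fun i _ => ?_
    rw [X_pow_eq, coeff_mul_monomial, if_neg]
    rw [Finsupp.single_le_iff]
    exact (he i).not_ge
  · intro hf
    obtain ⟨b, rfl⟩ := exists_eq_sum_monomial_mul f (fun i => Finsupp.single i (s i)) fun e he => by
      simp only [Finsupp.single_le_iff]
      by_contra! hlt
      exact he (hf e hlt)
    refine Ideal.sum_mem _ fun i _ => Ideal.mul_mem_right _ _ (Ideal.subset_span ⟨i, ?_⟩)
    exact X_pow_eq _ _

theorem maximalIdeal_eq_span_X :
    IsLocalRing.maximalIdeal (MvPowerSeries (Fin d) k) = Ideal.span (Set.range X) := by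
  have hspan : Ideal.span (Set.range X) =
      powerIdeal (X : Fin d → MvPowerSeries (Fin d) k) fun _ => 1 := by
    simp only [powerIdeal, pow_one]
  ext f
  rw [hspan, mem_powerIdeal_X_iff, IsLocalRing.mem_maximalIdeal, mem_nonunits_iff,
    isUnit_iff_constantCoeff, isUnit_iff_ne_zero, not_not]
  refine ⟨fun h e he => ?_, fun h => h 0 (by simp)⟩
  obtain rfl : e = 0 := Finsupp.ext fun i => by simpa using he i
  exact h

theorem length_quotient_powerIdeal_X_le (s : Fin d → ℕ) :
    Module.length k (MvPowerSeries (Fin d) k ⧸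
      powerIdeal (X : Fin d → MvPowerSeries (Fin d) k) s) ≤ (∏ i, s i : ℕ) := by
  let g : MvPowerSeries (Fin d) k →ₗ[k] ((∀ i, Fin (s i)) → k) :=
    LinearMap.pi fun b => coeff (Finsupp.equivFunOnFinite.symm fun i => (b i : ℕ))
  let I := powerIdeal (X : Fin d → MvPowerSeries (Fin d) k) s
  have hg (f) : f ∈ LinearMap.ker g ↔ f ∈ I := by
    rw [mem_powerIdeal_X_iff, LinearMap.mem_ker, funext_iff]
    refine ⟨fun h e he => ?_, fun h b => h _ fun i => (b i).2⟩
    have hgi : coeff (Finsupp.equivFunOnFinite.symm e) f = 0 := h fun i => ⟨e i, he i⟩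
    rwa [Finsupp.equivFunOnFinite_symm_coe] at hgi
  have hker : LinearMap.ker g = I.restrictScalars k := Submodule.ext hg
  rw [← (Submodule.Quotient.restrictScalarsEquiv k I).length_eq, ← hker,
    g.quotKerEquivRange.length_eq]
  refine (Module.length_le_of_injective _ (LinearMap.range g).subtype_injective).trans ?_
  simp

theorem mul_notMem_powerIdeal_X {s : Fin d → ℕ} {α : Fin d →₀ ℕ} {c f : MvPowerSeries (Fin d) k}
    (hα : lexOrder c = toLex α) (hf : f ≠ 0) (hs : ∀ e, coeff e f ≠ 0 → ∀ i, e i < s i - α i) :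
    c * f ∉ powerIdeal (X : Fin d → MvPowerSeries (Fin d) k) s := by
  intro hmem
  obtain ⟨β, hβ⟩ := exists_finsupp_eq_lexOrder_of_ne_zero hf
  have hne : coeff β f ≠ 0 := coeff_ne_zero_of_lexOrder hβ.symm
  have hcoeff := mem_powerIdeal_X_iff.1 hmem (α + β) fun i => by
    simpa only [Finsupp.add_apply, Nat.add_comm] using Nat.add_lt_of_lt_sub (hs β hne i)
  rw [coeff_mul_of_add_lexOrder hα hβ] at hcoeff
  exact mul_ne_zero (coeff_ne_zero_of_lexOrder hα.symm) hne hcoeff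

theorem length_add_length_quotient_le {M L : Type*} [AddCommGroup M] [Module k M] [AddCommGroup L]
    [Module k L] {V W : Submodule k M} (hVW : V ≤ W) {f : L →ₗ[k] M} (hfW : ∀ l, f l ∈ W)
    (hfV : ∀ l, f l ∈ V → l = 0) :
    Module.length k L + Module.length k (M ⧸ W) ≤ Module.length k (M ⧸ V) := by
  let π : M ⧸ V →ₗ[k] M ⧸ W := Submodule.factor hVW
  have hπ (l) : π ((V.mkQ ∘ₗ f) l) = 0 := (Submodule.Quotient.mk_eq_zero _).2 (hfW l)
  have hinj : Function.Injective ((V.mkQ ∘ₗ f).codRestrict (LinearMap.ker π) hπ) := by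
    refine (injective_iff_map_eq_zero _).2 fun l hl => hfV l ?_
    exact (Submodule.Quotient.mk_eq_zero _).1 (congrArg Subtype.val hl)
  rw [Module.length_eq_add_of_exact (LinearMap.ker π).subtype π (Submodule.subtype_injective _)
    (Submodule.factor_surjective hVW) (LinearMap.exact_subtype_ker_map _)]
  gcongr
  exact Module.length_le_of_injective _ hinj

theorem exists_linearMap_mul_mem_powerIdeal_X_imp {α : Fin d →₀ ℕ} {c : MvPowerSeries (Fin d) k}
    (hα : lexOrder c = toLex α) (s : Fin d → ℕ) :
    ∃ g : ((∀ i, Fin (s i - α i)) → k) →ₗ[k] MvPowerSeries (Fin d) k, ∀ w,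
      c * g w ∈ powerIdeal (X : Fin d → MvPowerSeries (Fin d) k) s → w = 0 := by
  let g : ((∀ i, Fin (s i - α i)) → k) →ₗ[k] MvPowerSeries (Fin d) k := LinearMap.pi fun e =>
    if he : ∀ i, e i < s i - α i then LinearMap.proj fun i => ⟨e i, he i⟩ else 0
  have hg (w) (e : Fin d →₀ ℕ) : coeff e (g w) =
      if he : ∀ i, e i < s i - α i then w fun i => ⟨e i, he i⟩ else 0 := by
    change (dite _ _ _ : ((∀ i, Fin (s i - α i)) → k) →ₗ[k] k) w = _
    split_ifs <;> rfl
  refine ⟨g, fun w hw => ?_⟩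
  have hgw : g w = 0 := by
    by_contra hne
    refine mul_notMem_powerIdeal_X hα hne (fun e he => ?_) hw
    by_contra hbox
    exact he (by rw [hg, dif_neg hbox])
  ext b
  have hb := hg w (Finsupp.equivFunOnFinite.symm fun i => (b i : ℕ))
  rw [hgw, map_zero] at hb
  exact (dif_pos fun i => (b i).2).symm.trans hb.symm

theorem length_quotient_span_sup_powerIdeal_X_le {α : Fin d →₀ ℕ} {c : MvPowerSeries (Fin d) k}
    (hα : lexOrder c = toLex α) (s : Fin d → ℕ) :
    Module.length k (MvPowerSeries (Fin d) k ⧸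
      (Ideal.span {c} ⊔ powerIdeal (X : Fin d → MvPowerSeries (Fin d) k) s)) ≤
        (boxDefect s α : ℕ) := by
  obtain ⟨g, hg⟩ := exists_linearMap_mul_mem_powerIdeal_X_imp hα s
  let I := powerIdeal (X : Fin d → MvPowerSeries (Fin d) k) s
  let J := Ideal.span {c} ⊔ I
  have hJ (w) : (LinearMap.mulLeft k c ∘ₗ g) w ∈ J.restrictScalars k :=
    Ideal.mem_sup_left (Ideal.mul_mem_right _ _ (Ideal.mem_span_singleton_self c))
  have hle : I.restrictScalars k ≤ J.restrictScalars k := fun f hf => Ideal.mem_sup_right hf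
  have hlen := length_add_length_quotient_le hle hJ hg
  rw [(Submodule.Quotient.restrictScalarsEquiv k I).length_eq,
    (Submodule.Quotient.restrictScalarsEquiv k J).length_eq] at hlen
  have hbox : Module.length k ((∀ i, Fin (s i - α i)) → k) = (∏ i, (s i - α i) : ℕ) := by simp
  rw [boxDefect, ENat.natCast_sub]
  refine (ENat.addLECancellable_natCast _).le_tsub_of_add_le_left ?_
  rw [← hbox]
  exact hlen.trans (length_quotient_powerIdeal_X_le s)

theorem lexOrder_pow {α : Fin d →₀ ℕ} {c : MvPowerSeries (Fin d) k} (hα : lexOrder c = toLex α)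
    (q : ℕ) : lexOrder (c ^ q) = toLex (q • α) := by
  induction q with
  | zero =>
    rw [pow_zero, zero_smul]
    refine le_antisymm (lexOrder_le_of_coeff_ne_zero (by simp)) (le_lexOrder_iff.2 fun e he => ?_)
    rw [coeff_one, if_neg]
    rintro rfl
    exact lt_irrefl _ he
  | succ q ih =>
    rw [pow_succ, lexOrder_mul, ih, hα, add_smul, one_smul]
    rfl

end PowerSeries

/-! ### The length inequality in characteristic `p` -/

section QuasiBasis

/-- A quasi-basis of the `A`-module `D`: elements `vec i` and functionals `coord i` which become a
basis and its dual basis, up to the factor `denom`, once `denom` is inverted. Clearing denominators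
in this way makes a generic basis of `D` compatible with base change. -/
structure QuasiBasis (A D : Type*) [CommRing A] [AddCommGroup D] [Module A D] (n : ℕ) where
  vec : Fin n → D
  coord : Fin n → D →ₗ[A] A
  denom : A
  coord_vec (i j : Fin n) : coord i (vec j) = if i = j then denom else 0
  denom_smul (y : D) : denom • y = ∑ i, coord i y • vec i

theorem CyclicChain.sup_span_range {R M : Type*} [CommRing R] [AddCommGroup M] [Module R M]
    {I : Ideal R} {W : Submodule R M} {n : ℕ} {f : Fin n → M} (hf : ∀ a ∈ I, ∀ i, a • f i ∈ W) :
    CyclicChain I W (W ⊔ Submodule.span R (Set.range f)) n := by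
  induction n with
  | zero => simpa using CyclicChain.refl
  | succ n ih =>
    rw [Fin.range_fin_succ, Set.insert_eq, Submodule.span_union,
      sup_comm (Submodule.span R {f 0}), ← sup_assoc]
    exact (ih fun a ha i => hf a ha i.succ).step fun a ha => Submodule.mem_sup_left (hf a ha 0)

open MvPowerSeries

variable {k : Type*} [Field k] {d : ℕ} {α : Fin d →₀ ℕ} {c : MvPowerSeries (Fin d) k}
  {N : Type*} [AddCommGroup N] [Module (MvPowerSeries (Fin d) k) N] [Module k N]
  [IsScalarTower k (MvPowerSeries (Fin d) k) N]

theorem length_quotient_le_mul_boxDefect (hα : lexOrder c = toLex α) {s : Fin d → ℕ} {ν : ℕ}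
    {f : Fin ν → N} (hf : Submodule.span (MvPowerSeries (Fin d) k) (Set.range f) = ⊤)
    {W : Submodule (MvPowerSeries (Fin d) k) N} (hc : ∀ y, c • y ∈ W)
    (hs : powerIdeal (X : Fin d → MvPowerSeries (Fin d) k) s • ⊤ ≤ W) :
    Module.length k (N ⧸ W) ≤ (ν * boxDefect s α : ℕ) := by
  have hJ : (Ideal.span {c} ⊔ powerIdeal X s) • ⊤ ≤ W := by
    rw [Submodule.sup_smul, sup_le_iff, Submodule.ideal_span_singleton_smul]
    exact ⟨Submodule.map_le_iff_le_comap.2 fun y _ => hc y, hs⟩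
  have hchain := CyclicChain.sup_span_range fun a ha i =>
    hJ (Submodule.smul_mem_smul ha (Submodule.mem_top (x := f i)))
  have hlen := hchain.length_quotient_le k
  rw [hf, sup_top_eq, Module.length_eq_zero (M := N ⧸ ⊤), add_zero] at hlen
  refine hlen.trans ?_
  push_cast
  gcongr
  exact length_quotient_span_sup_powerIdeal_X_le hα s

namespace QuasiBasis

variable {n : ℕ} (B : QuasiBasis (MvPowerSeries (Fin d) k) N n)

theorem length_quotient_powerIdeal_X_smul_top_le (hα : lexOrder B.denom = toLex α) (s : Fin d → ℕ)
    {ν : ℕ} {f : Fin ν → N}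
    (hf : Submodule.span (MvPowerSeries (Fin d) k) (Set.range f) = ⊤) :
    Module.length k (N ⧸ powerIdeal (X : Fin d → MvPowerSeries (Fin d) k) s •
      (⊤ : Submodule (MvPowerSeries (Fin d) k) N)) ≤
        (n * ∏ i, s i + ν * boxDefect s α : ℕ) := by
  have hchain := CyclicChain.sup_span_range
    (W := powerIdeal (X : Fin d → MvPowerSeries (Fin d) k) s • ⊤) fun a ha i =>
    Submodule.smul_mem_smul ha (Submodule.mem_top (x := B.vec i))
  refine (hchain.length_quotient_le k).trans ?_
  push_cast
  gcongr
  · exact_mod_cast length_quotient_powerIdeal_X_le s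
  · refine (length_quotient_le_mul_boxDefect hα hf (fun y => ?_) le_sup_left).trans_eq
      (Nat.cast_mul _ _)
    rw [B.denom_smul]
    exact Submodule.mem_sup_right (Submodule.sum_mem _ fun i _ =>
      Submodule.smul_mem _ _ (Submodule.subset_span ⟨i, rfl⟩))

theorem le_length_quotient (hα : lexOrder B.denom = toLex α) {s : Fin d → ℕ} {r : ℕ}
    {V : Submodule k (Fin r → N)} (hV : ∀ v ∈ V, ∀ b i, B.coord i (v b) ∈ powerIdeal X s) :
    (r * n * ∏ i, (s i - α i) : ℕ) ≤ Module.length k ((Fin r → N) ⧸ V) := by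
  obtain ⟨g, hg⟩ := exists_linearMap_mul_mem_powerIdeal_X_imp hα s
  let combine : (Fin r → Fin n → (∀ i, Fin (s i - α i)) → k) →ₗ[k] (Fin r → N) :=
    LinearMap.pi fun b => ∑ i,
      (LinearMap.toSpanSingleton (MvPowerSeries (Fin d) k) N (B.vec i)).restrictScalars k ∘ₗ g ∘ₗ
        LinearMap.proj i ∘ₗ LinearMap.proj b
  have hcoord (w b i) : B.coord i (combine w b) = B.denom * g (w b i) := by
    simp [combine, B.coord_vec, mul_comm]
  have hlen := length_add_length_quotient_le (W := ⊤) (f := combine) le_top (fun _ => trivial)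
    fun w hw => funext fun b => funext fun i => hg _ (hcoord w b i ▸ hV _ hw b i)
  refine le_trans (le_of_eq ?_) (le_self_add.trans hlen)
  simp [mul_assoc]

end QuasiBasis

end QuasiBasis

section Frobenius

open MvPowerSeries

variable {d : ℕ} {D : Type*} [CommRing D]

theorem exists_cyclicChain_iterateFrobenius {x : Fin d → D} (p m : ℕ) [ExpChar D p]
    {t : Fin d → ℕ} {r h : ℕ} {W : Submodule D (Fin r → D)}
    (H : CyclicChain (Ideal.span (Set.range x)) (powerIdeal x t • ⊤) W h) :
    ∃ W' : Submodule D (Fin r → D),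
      CyclicChain (powerIdeal x fun _ => p ^ m) (powerIdeal x (p ^ m • t) • ⊤) W' h ∧
        ∀ v ∈ W, (fun b => v b ^ p ^ m) ∈ W' := by
  have hmap (t : Fin d → ℕ) :
      (powerIdeal x t).map (iterateFrobenius D p m) = powerIdeal x (p ^ m • t) := by
    rw [map_powerIdeal, ← powerIdeal_pow]
    rfl
  obtain ⟨W', HW', hW'⟩ := H.exists_map_ringHom (iterateFrobenius D p m)
  have hone : Ideal.span (Set.range x) = powerIdeal x fun _ => 1 := by
    simp only [powerIdeal, pow_one]
  have hq : (p ^ m • fun _ => 1 : Fin d → ℕ) = fun _ => p ^ m := by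
    ext
    simp
  rw [hone, hmap, hmap, hq] at HW'
  exact ⟨W', HW', hW'⟩

theorem apply_mem_of_mem_map_algebraMap {A : Type*} [CommRing A] [Algebra A D] {I : Ideal A}
    (l : D →ₗ[A] A) {y : D} (hy : y ∈ I.map (algebraMap A D)) : l y ∈ I := by
  have hle : I • (⊤ : Submodule A D) ≤ Submodule.comap l I := Submodule.smul_le.2 fun a ha z _ => by
    rw [Submodule.mem_comap, map_smul]
    exact I.mul_mem_right _ ha
  exact hle (by rwa [Ideal.smul_top_eq_map])

theorem le_of_forall_prime_pow_mul_le_add {a b C p : ℕ} (hp : p.Prime)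
    (h : ∀ m, p ^ m * a ≤ p ^ m * b + C) : a ≤ b := by
  by_contra! hlt
  have hm := h (C + 1)
  have hpow := (C + 1).lt_pow_self hp.one_lt
  nlinarith [Nat.mul_le_mul_left (p ^ (C + 1)) hlt]

theorem map_powerIdeal_of_apply_eq {A : Type*} [CommRing A] {g : A →+* D} {y : Fin d → A}
    {x : Fin d → D} (hx : ∀ i, g (y i) = x i) (s : Fin d → ℕ) :
    (powerIdeal y s).map g = powerIdeal x s := by
  simp only [map_powerIdeal, hx]

theorem powerIdeal_smul_top_of_algebraMap_eq {A : Type*} [CommRing A] [Algebra A D] {y : Fin d → A}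
    {x : Fin d → D} (hx : ∀ i, algebraMap A D (y i) = x i) (s : Fin d → ℕ) :
    powerIdeal y s • (⊤ : Submodule A D) = (powerIdeal x s).restrictScalars A := by
  rw [Ideal.smul_top_eq_map, map_powerIdeal_of_apply_eq hx]

section Length

variable {k : Type*} [Field k] [Algebra (MvPowerSeries (Fin d) k) D] [Algebra k D]
  [IsScalarTower k (MvPowerSeries (Fin d) k) D] {x : Fin d → D} {α : Fin d →₀ ℕ} {ν : ℕ}
  {f : Fin ν → D}

theorem length_quotient_span_sup_powerIdeal_le
    (hx : ∀ i, algebraMap (MvPowerSeries (Fin d) k) D (X i) = x i)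
    (hf : Submodule.span (MvPowerSeries (Fin d) k) (Set.range f) = ⊤)
    {c : MvPowerSeries (Fin d) k} (hα : lexOrder c = toLex α) (s : Fin d → ℕ) :
    Module.length k (D ⧸ (Ideal.span {algebraMap _ D c} ⊔ powerIdeal x s)) ≤
      (ν * boxDefect s α : ℕ) := by
  rw [← ((Submodule.Quotient.restrictScalarsEquiv (MvPowerSeries (Fin d) k)
    (Ideal.span {algebraMap _ D c} ⊔ powerIdeal x s)).restrictScalars k).length_eq]
  refine length_quotient_le_mul_boxDefect hα hf (fun y => ?_) ?_
  · rw [Algebra.smul_def]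
    exact Ideal.mem_sup_left (Ideal.mul_mem_right _ _ (Ideal.mem_span_singleton_self _))
  · rw [powerIdeal_smul_top_of_algebraMap_eq hx]
    exact fun y hy => Ideal.mem_sup_right hy

theorem length_pi_quotient_le
    (hx : ∀ i, algebraMap (MvPowerSeries (Fin d) k) D (X i) = x i)
    (hf : Submodule.span (MvPowerSeries (Fin d) k) (Set.range f) = ⊤)
    {c : MvPowerSeries (Fin d) k} (hα : lexOrder c = toLex α)
    {s : Fin d → ℕ} {r : ℕ} {W : Submodule D (Fin r → D)} (hs : powerIdeal x s • ⊤ ≤ W)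
    (hW : ∀ b, algebraMap _ D c • Pi.single b 1 ∈ W) :
    Module.length k ((Fin r → D) ⧸ W) ≤ (r * (ν * boxDefect s α) : ℕ) := by
  let J : Ideal D := Ideal.span {algebraMap _ D c} ⊔ powerIdeal x s
  have hJ (b : Fin r) : J ≤ W.comap (LinearMap.toSpanSingleton D _ (Pi.single b 1)) :=
    sup_le ((Ideal.span_singleton_le_iff_mem _).2 (hW b))
      fun a ha => hs (Submodule.smul_mem_smul ha trivial)
  have hchain : CyclicChain J W ⊤ r := by
    have hsup := CyclicChain.sup_span_range (f := Pi.basisFun D (Fin r)) (W := W) (I := J)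
      fun a ha b => by
        rw [Pi.basisFun_apply]
        exact hJ b ha
    rwa [(Pi.basisFun D (Fin r)).span_eq, sup_top_eq] at hsup
  refine (hchain.length_quotient_le k).trans ?_
  rw [Module.length_eq_zero (M := (Fin r → D) ⧸ ⊤), add_zero, Nat.cast_mul]
  gcongr
  exact length_quotient_span_sup_powerIdeal_le hx hf hα s

theorem QuasiBasis.le_of_cyclicChain {n : ℕ} (B : QuasiBasis (MvPowerSeries (Fin d) k) D n)
    (hx : ∀ i, algebraMap (MvPowerSeries (Fin d) k) D (X i) = x i)
    (hf : Submodule.span (MvPowerSeries (Fin d) k) (Set.range f) = ⊤)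
    (hα : lexOrder B.denom = toLex α) {s s' : Fin d → ℕ} {c : MvPowerSeries (Fin d) k}
    {β : Fin d →₀ ℕ} (hβ : lexOrder c = toLex β) {r h : ℕ} {W : Submodule D (Fin r → D)}
    (H : CyclicChain (powerIdeal x s) (powerIdeal x s' • ⊤) W h)
    (hW : ∀ b, algebraMap _ D c • Pi.single b 1 ∈ W) :
    r * n * ∏ i, (s' i - α i) ≤
      h * (n * ∏ i, s i + ν * boxDefect s α) + r * (ν * boxDefect s' β) := by
  have hlower : (r * n * ∏ i, (s' i - α i) : ℕ) ≤
      Module.length k ((Fin r → D) ⧸ (powerIdeal x s' • ⊤ : Submodule D (Fin r → D))) := by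
    rw [← (Submodule.Quotient.restrictScalarsEquiv k _).length_eq]
    refine B.le_length_quotient hα fun v hv b i => apply_mem_of_mem_map_algebraMap _ ?_
    rw [map_powerIdeal_of_apply_eq hx]
    exact mem_ideal_smul_top_pi_iff.1 hv b
  have hfactor : Module.length k (D ⧸ powerIdeal x s) ≤ (n * ∏ i, s i + ν * boxDefect s α : ℕ) := by
    rw [← ((Submodule.Quotient.restrictScalarsEquiv (MvPowerSeries (Fin d) k)
      (powerIdeal x s)).restrictScalars k).length_eq, ← powerIdeal_smul_top_of_algebraMap_eq hx]
    exact B.length_quotient_powerIdeal_X_smul_top_le hα s hf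
  have hcount := (hlower.trans (H.length_quotient_le k)).trans <|
    add_le_add (mul_le_mul_right hfactor _) (length_pi_quotient_le (k := k) hx hf hβ H.le hW)
  exact_mod_cast hcount

theorem mul_prod_le_add_of_scaled_le {t α : Fin d → ℕ} {q r n h ν : ℕ} (hq : 0 < q)
    (ht : ∀ i, 0 < t i)
    (hcount : r * n * ∏ i, (q * t i - α i) ≤
      h * (n * q ^ d + ν * boxDefect (fun _ => q) α) + r * (ν * (q ^ d * boxDefect t α))) :
    q * (r * n * ∏ i, t i) ≤
      q * (n * h + r * ν * boxDefect t α) + (∑ i, α i) * (h * ν + r * n * ∏ i, t i) := by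
  have hsmall := mul_boxDefect_le (s := fun _ => q) α fun _ => le_rfl
  have hlarge := mul_prod_le_mul_prod_tsub_add Finset.univ (s := q • t) α
    fun i _ => Nat.le_mul_of_pos_right q (ht i)
  simp only [Pi.smul_apply, smul_eq_mul, Finset.prod_mul_distrib, Finset.prod_const,
    Finset.card_univ, Fintype.card_fin] at hsmall hlarge
  refine Nat.le_of_mul_le_mul_left ?_ (pow_pos hq d)
  calc q ^ d * (q * (r * n * ∏ i, t i)) = r * n * (q * (q ^ d * ∏ i, t i)) := by ring
    _ ≤ r * n * (q * ∏ i, (q * t i - α i) + (∑ i, α i) * (q ^ d * ∏ i, t i)) := by gcongr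
    _ = q * (r * n * ∏ i, (q * t i - α i)) + (∑ i, α i) * (q ^ d * (r * n * ∏ i, t i)) := by ring
    _ ≤ q * (h * (n * q ^ d + ν * boxDefect (fun _ => q) α) +
          r * (ν * (q ^ d * boxDefect t α))) + (∑ i, α i) * (q ^ d * (r * n * ∏ i, t i)) := by
      gcongr
    _ = q ^ d * (q * (n * h + r * ν * boxDefect t α)) + h * ν * (q * boxDefect (fun _ => q) α) +
          (∑ i, α i) * (q ^ d * (r * n * ∏ i, t i)) := by ring
    _ ≤ q ^ d * (q * (n * h + r * ν * boxDefect t α)) + h * ν * ((∑ i, α i) * q ^ d) +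
          (∑ i, α i) * (q ^ d * (r * n * ∏ i, t i)) := by gcongr
    _ = q ^ d * (q * (n * h + r * ν * boxDefect t α) +
          (∑ i, α i) * (h * ν + r * n * ∏ i, t i)) := by ring

theorem QuasiBasis.iterateFrobenius_inequality {n : ℕ}
    (B : QuasiBasis (MvPowerSeries (Fin d) k) D n)
    (hx : ∀ i, algebraMap (MvPowerSeries (Fin d) k) D (X i) = x i)
    (hf : Submodule.span (MvPowerSeries (Fin d) k) (Set.range f) = ⊤)
    (hα : lexOrder B.denom = toLex α) (p : ℕ) [ExpChar D p] {t : Fin d → ℕ} {r h : ℕ}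
    {W : Submodule D (Fin r → D)}
    (H : CyclicChain (Ideal.span (Set.range x)) (powerIdeal x t • ⊤) W h)
    (hW : ∀ b, algebraMap _ D B.denom • Pi.single b 1 ∈ W) (m : ℕ) :
    r * n * ∏ i, (p ^ m * t i - α i) ≤
      h * (n * (p ^ m) ^ d + ν * boxDefect (fun _ => p ^ m) α) +
        r * (ν * ((p ^ m) ^ d * boxDefect t α)) := by
  obtain ⟨W', HW', hfrob⟩ := exists_cyclicChain_iterateFrobenius p m H
  have hpow : lexOrder (B.denom ^ p ^ m) = toLex (p ^ m • α) := lexOrder_pow hα _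
  have hcount := B.le_of_cyclicChain hx hf hα hpow HW' fun b => by
    convert hfrob _ (hW b) using 1
    ext b'
    rcases eq_or_ne b' b with rfl | hne
    · simp
    · simp [hne, zero_pow (expChar_pow_pos D p m).ne']
  rw [show ⇑(p ^ m • α) = p ^ m • ⇑α from rfl, boxDefect_smul] at hcount
  simpa using hcount

end Length

theorem QuasiBasis.charP_inequality {k : Type*} [Field k] [Algebra (MvPowerSeries (Fin d) k) D]
    {n : ℕ} (B : QuasiBasis (MvPowerSeries (Fin d) k) D n) {x : Fin d → D}
    (hx : ∀ i, algebraMap (MvPowerSeries (Fin d) k) D (X i) = x i)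
    {α : Fin d →₀ ℕ} (hα : lexOrder B.denom = toLex α) {ν : ℕ} {f : Fin ν → D}
    (hf : Submodule.span (MvPowerSeries (Fin d) k) (Set.range f) = ⊤) (p : ℕ) [Fact p.Prime]
    [CharP D p] {t : Fin d → ℕ} (ht : ∀ i, 0 < t i) {r h : ℕ} {W : Submodule D (Fin r → D)}
    (H : CyclicChain (Ideal.span (Set.range x)) (powerIdeal x t • ⊤) W h)
    (hW : ∀ b, algebraMap _ D B.denom • Pi.single b 1 ∈ W) :
    r * n * ∏ i, t i ≤ n * h + r * ν * boxDefect t α := by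
  let _ : Algebra k D := ((algebraMap (MvPowerSeries (Fin d) k) D).comp (algebraMap k _)).toAlgebra
  have : IsScalarTower k (MvPowerSeries (Fin d) k) D := .of_algebraMap_eq fun _ => rfl
  have hp : p.Prime := Fact.out
  have : ExpChar D p := .prime hp
  exact le_of_forall_prime_pow_mul_le_add hp fun m => mul_prod_le_add_of_scaled_le
    (expChar_pow_pos D p m) ht (B.iterateFrobenius_inequality hx hf hα p H hW m)

end Frobenius

/-! ### Domains which are generically a hypersurface -/

section GenericPresentation

open Polynomial

open scoped nonZeroDivisors

theorem finite_fractionField_of_finiteType (E C Q L : Type*) [CommRing E] [CommRing C] [IsDomain C]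
    [Field Q] [Field L] [CharZero Q] [Algebra E C] [FaithfulSMul E C] [Algebra.IsAlgebraic E C]
    [Algebra.FiniteType E C] [Algebra E Q] [IsFractionRing E Q] [Algebra C L] [IsFractionRing C L]
    [Algebra E L] [Algebra Q L] [IsScalarTower E Q L] [IsScalarTower E C L] :
    Module.Finite Q L := by
  have : IsDomain E := (FaithfulSMul.algebraMap_injective E C).isDomain
  have : Algebra.IsAlgebraic C L := IsLocalization.isAlgebraic L C⁰
  have : Algebra.IsAlgebraic Q L := (IsFractionRing.comap_isAlgebraic_iff (A := E) (C := L)).1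
    (Algebra.IsAlgebraic.trans E C L)
  have : Algebra.EssFiniteType C L := .of_isLocalization L C⁰
  have : Algebra.EssFiniteType E L := .comp E C L
  have : Algebra.EssFiniteType Q L := .of_comp E Q L
  have := Algebra.FormallyUnramified.of_isSeparable Q L
  exact Algebra.FormallyUnramified.finite_of_free Q L

theorem adjoin_simple_smul {Q L : Type*} [Field Q] [Field L] [Algebra Q L] {e : Q} (he : e ≠ 0)
    (β : L) : IntermediateField.adjoin Q {e • β} = IntermediateField.adjoin Q {β} := by
  refine le_antisymm ?_ ?_ <;> rw [IntermediateField.adjoin_simple_le_iff]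
  · exact IntermediateField.smul_mem _ (IntermediateField.mem_adjoin_simple_self Q β)
  · have hβ := IntermediateField.smul_mem _ (x := e⁻¹)
      (IntermediateField.mem_adjoin_simple_self Q (e • β))
    rwa [inv_smul_smul₀ he] at hβ

theorem exists_isIntegral_forall_exists_mul_eq_aeval {E C : Type*} [CommRing E] [IsDomain E]
    [CharZero E] [CommRing C] [IsDomain C] [Algebra E C] [FaithfulSMul E C]
    [Algebra.IsAlgebraic E C] [Algebra.FiniteType E C] :
    ∃ θ : C, IsIntegral E θ ∧
      ∀ c : C, ∃ e : E, e ≠ 0 ∧ ∃ w : E[X], algebraMap E C e * c = aeval θ w := by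
  let Q := FractionRing E
  let L := FractionRing C
  have : FaithfulSMul E L := FaithfulSMul.trans E C L
  let _ : Algebra Q L := FractionRing.liftAlgebra E L
  have clear_denom (l : L) : ∃ e : E, e ≠ 0 ∧ ∃ c : C, algebraMap E Q e • l = algebraMap C L c := by
    obtain ⟨⟨c, e⟩, h⟩ :=
      IsLocalizedModule.surj E⁰ (IsScalarTower.toAlgHom E C L).toLinearMap l
    exact ⟨e, nonZeroDivisors.coe_ne_zero e, c, by rw [algebraMap_smul]; exact h⟩
  have : CharZero Q := charZero_of_injective_algebraMap (IsFractionRing.injective E Q)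
  have : Module.Finite Q L := finite_fractionField_of_finiteType E C Q L
  obtain ⟨β, hβ⟩ := Field.exists_primitive_element Q L
  obtain ⟨e₁, he₁, c, hc⟩ := clear_denom β
  obtain ⟨e₂, he₂, hθ⟩ := (Algebra.IsAlgebraic.isAlgebraic (R := E) c).exists_integral_multiple
  have hθL : algebraMap C L (e₂ • c) = algebraMap E Q (e₂ * e₁) • β := by
    rw [map_mul, mul_smul, hc, algebraMap_smul, Algebra.smul_def, map_mul,
      ← IsScalarTower.algebraMap_apply E C L, ← Algebra.smul_def]
  have htop : Algebra.adjoin Q {algebraMap C L (e₂ • c)} = ⊤ := by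
    have he : algebraMap E Q (e₂ * e₁) ≠ 0 := by simpa using ⟨he₂, he₁⟩
    rw [← IntermediateField.adjoin_simple_toSubalgebra_of_isAlgebraic
      (Algebra.IsAlgebraic.isAlgebraic _), ← IntermediateField.top_toSubalgebra, ← hβ, hθL,
      adjoin_simple_smul he]
  refine ⟨e₂ • c, hθ, fun a => ?_⟩
  obtain ⟨p, hp⟩ : algebraMap C L a ∈ (aeval (algebraMap C L (e₂ • c))).range := by
    rw [← Algebra.adjoin_singleton_eq_range_aeval (R := Q), htop]
    trivial
  obtain ⟨e, he, hw⟩ := IsLocalization.integerNormalization_spec E⁰ p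
  refine ⟨e, nonZeroDivisors.ne_zero he, IsLocalization.integerNormalization E⁰ p,
    IsFractionRing.injective C L ?_⟩
  rw [map_mul, ← aeval_algebraMap_apply, ← aeval_map_algebraMap Q, hw, ← hp,
    ← IsScalarTower.algebraMap_apply E C L, ← Algebra.smul_def]
  exact (((aeval _).toLinearMap.restrictScalars E).map_smul e p).symm

/-- A presentation of the `E`-algebra `C` which, after inverting `denom`, exhibits it as the
hypersurface `E[root]` with equation `poly`: the generators `gen i` of `C` become the fractions
`num i (root) / denom`. The equation is required to be separable at `root`. -/
structure GenericPresentation (E C : Type*) [CommRing E] [CommRing C] [Algebra E C] (m : ℕ) where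
  poly : E[X]
  root : C
  denom : E
  gen : Fin m → C
  num : Fin m → E[X]
  adjoin_gen : Algebra.adjoin E (Set.range gen) = ⊤
  aeval_poly : aeval root poly = 0
  dvd_of_aeval_eq_zero (w : E[X]) : aeval root w = 0 → poly ∣ w
  aeval_derivative_ne_zero : aeval root (derivative poly) ≠ 0
  denom_ne_zero : algebraMap E C denom ≠ 0
  denom_mul_gen (i : Fin m) : algebraMap E C denom * gen i = aeval root (num i)

theorem exists_nonempty_genericPresentation (E C : Type*) [CommRing E] [IsDomain E]
    [IsIntegrallyClosed E] [CharZero E] [CommRing C] [IsDomain C] [Algebra E C] [FaithfulSMul E C]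
    [Algebra.IsAlgebraic E C] [Algebra.FiniteType E C] :
    ∃ m, Nonempty (GenericPresentation E C m) := by
  obtain ⟨θ, hθ, hfrac⟩ := exists_isIntegral_forall_exists_mul_eq_aeval (E := E) (C := C)
  obtain ⟨m, π, hπ⟩ := Algebra.FiniteType.iff_quotient_mvPolynomial''.1 ‹Algebra.FiniteType E C›
  choose e he w hw using fun i => hfrac (π (MvPolynomial.X i))
  have hdeg : (minpoly E θ).natDegree ≠ 0 := (minpoly.natDegree_pos hθ).ne'
  refine ⟨m, ⟨{
    poly := minpoly E θ
    root := θ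
    denom := ∏ i, e i
    gen := fun i => π (MvPolynomial.X i)
    num := fun i => Polynomial.C (∏ j ∈ Finset.univ.erase i, e j) * w i
    adjoin_gen := ?_
    aeval_poly := minpoly.aeval E θ
    dvd_of_aeval_eq_zero := fun W hW => minpoly.isIntegrallyClosed_dvd hθ hW
    aeval_derivative_ne_zero := fun h => ?_
    denom_ne_zero := ?_
    denom_mul_gen := fun i => ?_ }⟩⟩
  · rw [Set.range_comp' π, Algebra.adjoin_image, MvPolynomial.adjoin_range_X, Algebra.map_top,
      AlgHom.range_eq_top]
    exact hπ
  · have hle := natDegree_le_of_dvd (minpoly.isIntegrallyClosed_dvd hθ h)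
      fun h0 => hdeg (derivative_eq_zero.1 h0)
    exact hle.not_gt (natDegree_derivative_lt hdeg)
  · rw [Ne, FaithfulSMul.algebraMap_eq_zero_iff]
    exact Finset.prod_ne_zero_iff.2 fun i _ => he i
  · rw [map_mul, aeval_C, ← hw, ← Finset.prod_erase_mul _ _ (Finset.mem_univ i), map_mul, mul_assoc]

namespace GenericPresentation

variable {E C : Type*} [CommRing E] [CommRing C] [Algebra E C] {m : ℕ}

theorem exists_pow_denom_mul_aeval_eq (P : GenericPresentation E C m) {B : Type*} [CommRing B]
    [Algebra E B] {θ : B} {y : Fin m → B}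
    (hy : ∀ i, aeval θ (P.num i) = algebraMap E B P.denom * y i) (f : MvPolynomial (Fin m) E) :
    ∃ (N : ℕ) (W : E[X]),
      algebraMap E C P.denom ^ N * MvPolynomial.aeval P.gen f = aeval P.root W ∧
      algebraMap E B P.denom ^ N * MvPolynomial.aeval y f = aeval θ W := by
  induction f using MvPolynomial.induction_on with
  | C a => exact ⟨0, Polynomial.C a, by simp, by simp⟩
  | add p q hp hq =>
    obtain ⟨N, W, hC, hB⟩ := hp
    obtain ⟨N', W', hC', hB'⟩ := hq
    refine ⟨N + N', Polynomial.C P.denom ^ N' * W + Polynomial.C P.denom ^ N * W', ?_, ?_⟩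
    · simp only [map_add, map_mul, map_pow, aeval_C, ← hC, ← hC']; ring
    · simp only [map_add, map_mul, map_pow, aeval_C, ← hB, ← hB']; ring
  | mul_X p i hp =>
    obtain ⟨N, W, hC, hB⟩ := hp
    refine ⟨N + 1, W * P.num i, ?_, ?_⟩
    · rw [map_mul, map_mul, ← hC, ← P.denom_mul_gen, MvPolynomial.aeval_X]; ring
    · rw [map_mul, map_mul, ← hB, hy, MvPolynomial.aeval_X]; ring

theorem nonempty_algHom (P : GenericPresentation E C m) {B : Type*} [CommRing B] [IsDomain B]
    [Algebra E B] {θ : B} (hroot : aeval θ P.poly = 0) (hdenom : algebraMap E B P.denom ≠ 0)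
    (hnum : ∀ i, algebraMap E B P.denom ∣ aeval θ (P.num i)) : Nonempty (C →ₐ[E] B) := by
  choose y hy using hnum
  have hsurj : Function.Surjective (MvPolynomial.aeval (R := E) P.gen) := by
    rw [← AlgHom.range_eq_top, ← Algebra.adjoin_range_eq_range_aeval, P.adjoin_gen]
  refine ⟨AlgHom.liftOfSurjective _ hsurj (MvPolynomial.aeval y) fun f hf => ?_⟩
  obtain ⟨N, W, hC, hB⟩ := P.exists_pow_denom_mul_aeval_eq hy f
  have hf' : MvPolynomial.aeval P.gen f = 0 := hf
  obtain ⟨V, rfl⟩ := P.dvd_of_aeval_eq_zero W (by rw [← hC, hf', mul_zero])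
  rw [map_mul, hroot, zero_mul] at hB
  exact (mul_eq_zero.1 hB).resolve_left (pow_ne_zero _ hdenom)

end GenericPresentation

end GenericPresentation

/-! ### Newton's method over power series -/

section Newton

open PowerSeries

variable {B : Type*} [CommRing B]

theorem exists_fixedPoint_of_X_pow_dvd (T : B⟦X⟧ → B⟦X⟧)
    (hT : ∀ n f g, X ^ n ∣ f - g → X ^ (n + 1) ∣ T f - T g) : ∃ f, T f = f := by
  have hiter (n k : ℕ) : X ^ n ∣ T^[n + k] 0 - T^[n] 0 := by
    induction n with
    | zero => simp
    | succ n ih =>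
      rw [Nat.succ_add, Function.iterate_succ_apply', Function.iterate_succ_apply']
      exact hT _ _ _ ih
  set f : B⟦X⟧ := PowerSeries.mk fun n => coeff n (T^[n + 1] 0)
  have hf (n : ℕ) : X ^ n ∣ f - T^[n] 0 := by
    refine X_pow_dvd_iff.2 fun i hi => ?_
    obtain ⟨k, rfl⟩ := Nat.exists_eq_add_of_lt hi
    have h := X_pow_dvd_iff.1 (hiter (i + 1) k) i (Nat.lt_succ_self i)
    rw [map_sub, sub_eq_zero] at h ⊢
    rw [coeff_mk, ← h, add_right_comm]
  refine ⟨f, sub_eq_zero.1 <| PowerSeries.ext fun n => ?_⟩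
  have hdvd : X ^ (n + 1) ∣ T f - f := by
    have h := dvd_sub (hT n _ _ (hf n)) (hf (n + 1))
    rwa [Function.iterate_succ_apply', sub_sub_sub_cancel_right] at h
  rw [map_zero]
  exact X_pow_dvd_iff.1 hdvd n (Nat.lt_succ_self n)

theorem exists_eval_eq_zero_of_eval_eq_sq_mul (F : Polynomial B⟦X⟧) {θ a : B⟦X⟧} (ha : X ∣ a)
    (hF : F.eval θ = F.derivative.eval θ ^ 2 * a) :
    ∃ θ', F.eval θ' = 0 ∧ F.derivative.eval θ * a ∣ θ' - θ := by
  set δ := F.derivative.eval θ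
  set k := (Polynomial.taylor θ F).divX.divX
  have taylor (y : B⟦X⟧) : F.eval (θ + y) = F.eval θ + (δ + k.eval y * y) * y := by
    have h := (Polynomial.taylor θ F).divX_mul_X_add
    rw [← (Polynomial.taylor θ F).divX.divX_mul_X_add, Polynomial.coeff_divX,
      Polynomial.taylor_coeff_one, Polynomial.taylor_coeff_zero] at h
    rw [add_comm θ, ← Polynomial.taylor_eval, ← h]
    simp [k, δ, add_comm]
  -- `θ' = θ + δ a ε` is a root of `F` as soon as `ε = -(1 + a ε² k(δ a ε))`.
  obtain ⟨ε, hε⟩ := exists_fixedPoint_of_X_pow_dvd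
    (fun ε => -(1 + a * (Polynomial.X ^ 2 * k.comp (Polynomial.C (δ * a) * Polynomial.X)).eval ε))
    fun n f g h => by
      obtain ⟨b, rfl⟩ := ha
      rw [neg_sub_neg, add_sub_add_left_eq_sub, ← mul_sub, pow_succ', mul_assoc]
      exact mul_dvd_mul_left _ ((dvd_sub_comm.1 h |>.trans
        (Polynomial.sub_dvd_eval_sub _ _ _)).mul_left _)
  refine ⟨θ + δ * a * ε, ?_, ⟨ε, add_sub_cancel_left _ _⟩⟩
  simp only [Polynomial.eval_mul, Polynomial.eval_pow, Polynomial.eval_X, Polynomial.eval_comp,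
    Polynomial.eval_C] at hε
  rw [taylor, hF]
  linear_combination -δ ^ 2 * a * hε

end Newton

/-! ### Polynomial approximations of homomorphisms to a power series ring -/

section PolynomialApproximation

open Polynomial

theorem exists_genericPresentation_mvPolynomial (A C : Type*) [CommRing A] [IsDomain A]
    [UniqueFactorizationMonoid A] [CharZero A] [CommRing C] [IsDomain C] [Algebra A C]
    [FaithfulSMul A C] [Algebra.FiniteType A C] :
    ∃ (n : ℕ) (_ : Algebra (MvPolynomial (Fin n) A) C)
      (_ : IsScalarTower A (MvPolynomial (Fin n) A) C) (m : ℕ),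
      Nonempty (GenericPresentation (MvPolynomial (Fin n) A) C m) := by
  obtain ⟨ι, z, hz⟩ := exists_isTranscendenceBasis' A C
  have : Finite ι := Cardinal.mk_lt_aleph0_iff.1 <| Cardinal.lift_lt_aleph0.1
    (hz.1.lift_cardinalMk_le_trdeg.trans_lt
      (Cardinal.lift_lt_aleph0.2 trdeg_lt_aleph0_of_finiteType))
  obtain ⟨n, ⟨e⟩⟩ := Finite.exists_equiv_fin ι
  replace hz : IsTranscendenceBasis A (z ∘ e.symm) := hz.comp_equiv e.symm
  let E := MvPolynomial (Fin n) A
  let _ : Algebra E C := (MvPolynomial.aeval (z ∘ e.symm)).toAlgebra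
  have : IsScalarTower A E C :=
    .of_algebraMap_eq' (MvPolynomial.aeval (z ∘ e.symm)).comp_algebraMap.symm
  have : FaithfulSMul E C := (faithfulSMul_iff_algebraMap_injective E C).2 hz.1
  have : Algebra.IsAlgebraic (Algebra.adjoin A (Set.range (z ∘ e.symm))) C := hz.isAlgebraic
  have : Algebra.IsAlgebraic E C := Algebra.IsAlgebraic.of_ringHom_of_comp_eq
    hz.1.aevalEquiv (RingHom.id C) hz.1.aevalEquiv.surjective Function.injective_id
    (RingHom.ext hz.1.algebraMap_aevalEquiv)
  have : Algebra.FiniteType E C := .of_restrictScalars_finiteType A E C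
  have : CharZero E := charZero_of_injective_algebraMap (MvPolynomial.C_injective (Fin n) A)
  exact ⟨n, ‹_›, ‹_›, exists_nonempty_genericPresentation E C⟩

namespace GenericPresentation

variable {E C : Type*} [CommRing E] [CommRing C] [Algebra E C] {m : ℕ}

/-- The polynomial whose value at the root is the derivative of the equation times the denominator:
where it does not vanish, the presentation is étale. -/
noncomputable def jacobian (P : GenericPresentation E C m) : E[X] :=
  derivative P.poly * Polynomial.C P.denom

theorem aeval_jacobian_ne_zero [IsDomain C] (P : GenericPresentation E C m) :
    aeval P.root P.jacobian ≠ 0 := by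
  rw [jacobian, map_mul, aeval_C]
  exact mul_ne_zero P.aeval_derivative_ne_zero P.denom_ne_zero

theorem nonempty_algHom_powerSeries (P : GenericPresentation E C m) {B : Type*} [CommRing B]
    [IsDomain B] [Algebra E (PowerSeries B)] {θ f u : PowerSeries B} {y : Fin m → PowerSeries B}
    (hf : f ≠ 0) (hXf : PowerSeries.X ∣ f) (hu : IsUnit u) (hpoly : f ^ 3 ∣ aeval θ P.poly)
    (hnum : ∀ i, f ^ 3 ∣ aeval θ (P.num i) - algebraMap E (PowerSeries B) P.denom * y i)
    (hjacobian : PowerSeries.X * aeval θ P.jacobian = f * u) :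
    Nonempty (C →ₐ[E] PowerSeries B) := by
  rw [jacobian, map_mul, aeval_C] at hjacobian
  set δ := aeval θ (derivative P.poly)
  set g := algebraMap E (PowerSeries B) P.denom
  obtain ⟨v, hv⟩ := hu.exists_right_inv
  have hf_eq : f = δ * (g * PowerSeries.X * v) := by
    linear_combination -f * hv - v * hjacobian
  have hg_dvd : g ∣ f := ⟨δ * PowerSeries.X * v, by rw [hf_eq]; ring⟩
  have hg : g ≠ 0 := fun h => hf (zero_dvd_iff.1 (h ▸ hg_dvd))
  obtain ⟨H, hH⟩ := hpoly
  have hroot : aeval θ P.poly = δ ^ 2 * ((g * PowerSeries.X * v) ^ 2 * f * H) := by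
    rw [hH]
    linear_combination f * H * (f + δ * (g * PowerSeries.X * v)) * hf_eq
  obtain ⟨θ', hθ', hsub⟩ := exists_eval_eq_zero_of_eval_eq_sq_mul
    (P.poly.map (algebraMap E (PowerSeries B))) (θ := θ) ((hXf.mul_left _).mul_right _) (by
      rw [derivative_map, eval_map_algebraMap, eval_map_algebraMap, hroot])
  rw [eval_map_algebraMap] at hθ'
  refine P.nonempty_algHom hθ' hg fun i => ?_
  have hθ : g ∣ aeval θ (P.num i) :=
    (dvd_iff_dvd_of_dvd_sub (((hg_dvd.trans (dvd_pow_self f three_ne_zero)).trans (hnum i)))).2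
      (dvd_mul_right _ _)
  have hdvd : g ∣ θ' - θ := (((hg_dvd.mul_left _).mul_right _).mul_left _).trans hsub
  have hnum_sub := sub_dvd_eval_sub θ' θ ((P.num i).map (algebraMap E (PowerSeries B)))
  rw [eval_map_algebraMap, eval_map_algebraMap] at hnum_sub
  exact (dvd_iff_dvd_of_dvd_sub (hdvd.trans hnum_sub)).2 hθ

/-- Polynomials over `S` which solve the equations of a generic presentation modulo the cube of a
monic polynomial `modulus`, whereas the Jacobian of these equations divides `X⁻¹ * modulus` up to a
unit of the power series ring. By Newton's method this data determines a homomorphism to `S⟦X⟧`;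
being polynomial, it only involves finitely many elements of `S`. -/
structure PolynomialApproximation (P : GenericPresentation E C m) (S : Type*) [CommRing S] where
  hom : E →+* S[X]
  root : S[X]
  gen : Fin m → S[X]
  modulus : S[X]
  cofactor : S[X]
  monic_modulus : modulus.Monic
  coeff_modulus : modulus.coeff 0 = 0
  isUnit_coeff_cofactor : IsUnit (cofactor.coeff 0)
  dvd_poly : modulus ^ 3 ∣ P.poly.eval₂ hom root
  dvd_num_sub (i : Fin m) : modulus ^ 3 ∣ (P.num i).eval₂ hom root - hom P.denom * gen i
  X_mul_jacobian : X * P.jacobian.eval₂ hom root = modulus * cofactor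

namespace PolynomialApproximation

variable {P : GenericPresentation E C m} {S : Type*} [CommRing S]

/-- The image of an approximation under a homomorphism of the coefficient rings. -/
noncomputable def map (Q : P.PolynomialApproximation S) {B : Type*} [CommRing B] (φ : S →+* B) :
    P.PolynomialApproximation B where
  hom := (mapRingHom φ).comp Q.hom
  root := Q.root.map φ
  gen i := (Q.gen i).map φ
  modulus := Q.modulus.map φ
  cofactor := Q.cofactor.map φ
  monic_modulus := Q.monic_modulus.map φ
  coeff_modulus := by rw [coeff_map, Q.coeff_modulus, map_zero]
  isUnit_coeff_cofactor := by simpa only [coeff_map] using Q.isUnit_coeff_cofactor.map φ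
  dvd_poly := by
    simpa only [map_pow, hom_eval₂, coe_mapRingHom] using _root_.map_dvd (mapRingHom φ) Q.dvd_poly
  dvd_num_sub i := by
    simpa only [map_pow, map_sub, map_mul, hom_eval₂, RingHom.comp_apply, coe_mapRingHom] using
      _root_.map_dvd (mapRingHom φ) (Q.dvd_num_sub i)
  X_mul_jacobian := by
    simpa only [map_mul, hom_eval₂, coe_mapRingHom, map_X] using
      congrArg (mapRingHom φ) Q.X_mul_jacobian

theorem exists_map_eq {S' : Type*} [CommRing S'] {ι : S' →+* S} (hι : Function.Injective ι)
    (Q : P.PolynomialApproximation S) (hhom : ∀ e, Q.hom e ∈ lifts ι) (hroot : Q.root ∈ lifts ι)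
    (hgen : ∀ i, Q.gen i ∈ lifts ι) (hmodulus : Q.modulus ∈ lifts ι)
    (hcofactor : Q.cofactor ∈ lifts ι) (hunit : ∃ v, Q.cofactor.coeff 0 * ι v = 1) :
    ∃ Q' : P.PolynomialApproximation S', (mapRingHom ι).comp Q'.hom = Q.hom := by
  have hinj : Function.Injective (mapRingHom ι) := map_injective ι hι
  obtain ⟨hom, hhom⟩ : ∃ hom : E →+* S'[X], (mapRingHom ι).comp hom = Q.hom := by
    let toRange := RingEquiv.ofBijective (mapRingHom ι).rangeRestrict
      ⟨fun a b h => hinj (congrArg Subtype.val h), (mapRingHom ι).rangeRestrict_surjective⟩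
    exact ⟨(toRange.symm : _ →+* S'[X]).comp (Q.hom.codRestrict (mapRingHom ι).range hhom),
      RingHom.ext fun e => congrArg Subtype.val
        (toRange.apply_symm_apply (Q.hom.codRestrict (mapRingHom ι).range hhom e))⟩
  obtain ⟨root, hroot⟩ := hroot
  choose gen hgen using hgen
  obtain ⟨modulus, hmodulus⟩ := hmodulus
  obtain ⟨cofactor, hcofactor⟩ := hcofactor
  obtain ⟨v, hv⟩ := hunit
  have hmonic : modulus.Monic := monic_of_injective hι (by
    simpa [← hmodulus] using Q.monic_modulus)
  have map_eval₂ (W : E[X]) : mapRingHom ι (W.eval₂ hom root) = W.eval₂ Q.hom Q.root := by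
    rw [hom_eval₂, hhom]
    exact congrArg (W.eval₂ Q.hom) hroot
  have map_hom (e : E) : mapRingHom ι (hom e) = Q.hom e := congr($hhom e)
  have dvd_of_map_dvd {W : S'[X]} (h : Q.modulus ^ 3 ∣ mapRingHom ι W) : modulus ^ 3 ∣ W := by
    rw [← hmodulus, ← map_pow] at h
    exact (map_dvd_map ι hι (hmonic.pow 3)).1 h
  exact ⟨{
    hom, root, gen, modulus, cofactor
    monic_modulus := hmonic
    coeff_modulus := hι (by
      rw [map_zero, ← coeff_map, ← Q.coeff_modulus, ← hmodulus]; rfl)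
    isUnit_coeff_cofactor := IsUnit.of_mul_eq_one v (hι (by
      rw [map_mul, map_one, ← hv, ← coeff_map, ← hcofactor]; rfl))
    dvd_poly := dvd_of_map_dvd (by rw [map_eval₂]; exact Q.dvd_poly)
    dvd_num_sub := fun i => dvd_of_map_dvd (by
      rw [map_sub, map_mul, map_eval₂, map_hom]
      exact (hgen i).symm ▸ Q.dvd_num_sub i)
    X_mul_jacobian := hinj (by
      rw [map_mul, map_mul, map_eval₂, coe_mapRingHom, map_X, Q.X_mul_jacobian, ← hmodulus,
        ← hcofactor]
      rfl) }, hhom⟩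

theorem exists_finite_forall_subring [Algebra.FiniteType ℤ E] (Q : P.PolynomialApproximation S) :
    ∃ T : Set S, T.Finite ∧ ∀ S' : Subring S, T ⊆ S' →
      ∃ Q' : P.PolynomialApproximation S', (mapRingHom S'.subtype).comp Q'.hom = Q.hom := by
  obtain ⟨s, hs⟩ := (Algebra.FiniteType.out : (⊤ : Subalgebra ℤ E).FG)
  obtain ⟨v, hv⟩ := Q.isUnit_coeff_cofactor.exists_right_inv
  set polys : Set S[X] := Q.hom '' s ∪ Set.range Q.gen ∪ {Q.root, Q.modulus, Q.cofactor}
  have hpolys : polys.Finite :=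
    ((s.finite_toSet.image _).union (Set.finite_range _)).union (Set.toFinite _)
  refine ⟨insert v (⋃ p ∈ polys, p.coeffs),
    (hpolys.biUnion fun p _ => p.coeffs.finite_toSet).insert v, fun S' hS' => ?_⟩
  obtain ⟨hvS', hcoeffs⟩ := Set.insert_subset_iff.1 hS'
  have hlifts {p : S[X]} (hp : p ∈ polys) : p ∈ lifts S'.subtype := by
    rw [lifts_iff_coeffs_subset_range]
    simpa using
      (Set.subset_biUnion_of_mem (u := fun p : S[X] => (p.coeffs : Set S)) hp).trans hcoeffs
  have hhom : (⊤ : Subalgebra ℤ E) ≤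
      subalgebraOfSubring ((mapRingHom S'.subtype).range.comap Q.hom) := by
    rw [← hs, Algebra.adjoin_le_iff]
    exact fun e he => hlifts (.inl (.inl ⟨e, he, rfl⟩))
  exact Q.exists_map_eq S'.subtype_injective (fun e => hhom trivial) (hlifts (by simp [polys]))
    (fun i => hlifts (by simp [polys])) (hlifts (by simp [polys])) (hlifts (by simp [polys]))
    ⟨⟨v, hvS'⟩, hv⟩

theorem exists_ringHom [IsDomain S] (Q : P.PolynomialApproximation S) :
    ∃ ψ : C →+* PowerSeries S, ∀ e, ψ (algebraMap E C e) = Q.hom e := by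
  let _ : Algebra E (PowerSeries S) := (coeToPowerSeries.ringHom.comp Q.hom).toAlgebra
  have coe_eval₂ (W : E[X]) :
      coeToPowerSeries.ringHom (W.eval₂ Q.hom Q.root) = aeval (Q.root : PowerSeries S) W :=
    hom_eval₂ W Q.hom coeToPowerSeries.ringHom Q.root
  have hmodulus : (Q.modulus : PowerSeries S) ≠ 0 := by
    simpa using Q.monic_modulus.ne_zero
  have hX : PowerSeries.X ∣ (Q.modulus : PowerSeries S) := by
    rw [PowerSeries.X_dvd_iff, constantCoeff_coe, Q.coeff_modulus]
  have hunit : IsUnit (Q.cofactor : PowerSeries S) := by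
    rw [PowerSeries.isUnit_iff_constantCoeff, constantCoeff_coe]
    exact Q.isUnit_coeff_cofactor
  have hpoly := _root_.map_dvd coeToPowerSeries.ringHom Q.dvd_poly
  have hnum (i : Fin m) := _root_.map_dvd coeToPowerSeries.ringHom (Q.dvd_num_sub i)
  have hjacobian := congrArg coeToPowerSeries.ringHom Q.X_mul_jacobian
  simp only [map_pow, map_sub, map_mul, coe_eval₂, coeToPowerSeries.ringHom_apply, Polynomial.coe_X]
    at hpoly hnum hjacobian
  obtain ⟨ψ⟩ := P.nonempty_algHom_powerSeries hmodulus hX hunit hpoly hnum hjacobian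
  exact ⟨ψ, ψ.commutes⟩

end PolynomialApproximation

section Existence

variable {D : Type*} [CommRing D]

theorem exists_coe_dvd_sub_coe {I : Ideal D} [IsAdicComplete I D] {f : D[X]}
    (hf : f.IsDistinguishedAt I) (a : PowerSeries D) :
    ∃ p : D[X], (f : PowerSeries D) ∣ a - p := by
  obtain ⟨q, hq⟩ := hf.algEquivQuotient.surjective (Ideal.Quotient.mk _ a)
  obtain ⟨p, rfl⟩ := Ideal.Quotient.mk_surjective q
  exact ⟨p, Ideal.mem_span_singleton.1 (Ideal.Quotient.eq.1 hq.symm)⟩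

theorem dvd_of_coe_dvd_coe {I : Ideal D} [IsAdicComplete I D] {f p : D[X]}
    (hf : f.IsDistinguishedAt I) (h : (f : PowerSeries D) ∣ p) : f ∣ p := by
  rw [← Ideal.mem_span_singleton, ← Ideal.Quotient.eq_zero_iff_mem]
  refine hf.algEquivQuotient.injective ?_
  rw [map_zero]
  exact Ideal.Quotient.eq_zero_iff_mem.2 (Ideal.mem_span_singleton.2 h)

theorem exists_X_mul_eq_mul_of_coe_dvd_sub [IsDomain D] {I : Ideal D} [IsAdicComplete I D]
    {f J : D[X]} {j w : PowerSeries D} (hf : f.IsDistinguishedAt I) (hw : IsUnit w)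
    (hj : PowerSeries.X * j = (f : PowerSeries D) * w)
    (hJ : ((f ^ 3 : D[X]) : PowerSeries D) ∣ j - J) :
    ∃ u : D[X], IsUnit (u.coeff 0) ∧ X * J = f * u := by
  obtain ⟨r, hr⟩ := hJ
  have hX : ((X * J : D[X]) : PowerSeries D) =
      (f : PowerSeries D) * (w - PowerSeries.X * (f : PowerSeries D) ^ 2 * r) := by
    rw [Polynomial.coe_mul, Polynomial.coe_X]
    rw [Polynomial.coe_pow] at hr
    linear_combination hj - PowerSeries.X * hr
  obtain ⟨u, hu⟩ := dvd_of_coe_dvd_coe hf ⟨_, hX⟩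
  have hu_coe : (u : PowerSeries D) = w - PowerSeries.X * (f : PowerSeries D) ^ 2 * r := by
    rw [hu, Polynomial.coe_mul] at hX
    exact mul_left_cancel₀ (by simpa using hf.monic.ne_zero) hX
  refine ⟨u, ?_, hu⟩
  rw [← constantCoeff_coe, hu_coe]
  simpa using hw.map (PowerSeries.constantCoeff (R := D))

theorem exists_eval₂_coe_dvd_sub {I : Ideal D} [IsAdicComplete I D] {f : D[X]}
    (hf : f.IsDistinguishedAt I) {A κ : Type*} [CommRing A] [Algebra A C]
    [Algebra (MvPolynomial κ A) C] [IsScalarTower A (MvPolynomial κ A) C]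
    (τ : C →+* PowerSeries D) (α : A →+* D[X]) (hα : ∀ a, τ (algebraMap A C a) = α a) (θ : C) :
    ∃ (hom : MvPolynomial κ A →+* D[X]) (root : D[X]), (∀ a, hom (MvPolynomial.C a) = α a) ∧
      ∀ W : (MvPolynomial κ A)[X],
        (f : PowerSeries D) ∣ τ (aeval θ W) - (W.eval₂ hom root : D[X]) := by
  choose approx happrox using exists_coe_dvd_sub_coe hf
  let hom : MvPolynomial κ A →+* D[X] := MvPolynomial.eval₂Hom α fun k =>
    approx (τ (algebraMap (MvPolynomial κ A) C (MvPolynomial.X k)))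
  let π := Ideal.Quotient.mk (Ideal.span {(f : PowerSeries D)})
  have hπ (a b) : π a = π b ↔ (f : PowerSeries D) ∣ a - b := by
    rw [Ideal.Quotient.eq, Ideal.mem_span_singleton]
  have hhom : (π.comp τ).comp (algebraMap _ C) = (π.comp coeToPowerSeries.ringHom).comp hom := by
    refine MvPolynomial.ringHom_ext (fun a => ?_) fun k => ?_
    · simp only [RingHom.comp_apply, hom, MvPolynomial.eval₂Hom_C, coeToPowerSeries.ringHom_apply,
        ← hα, IsScalarTower.algebraMap_apply A (MvPolynomial κ A) C, MvPolynomial.algebraMap_eq]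
    · simpa only [RingHom.comp_apply, hom, MvPolynomial.eval₂Hom_X'] using
        (hπ _ (coeToPowerSeries.ringHom _)).2 (happrox _)
  refine ⟨hom, approx (τ θ), MvPolynomial.eval₂Hom_C _ _, fun W => (hπ _ _).1 ?_⟩
  rw [← RingHom.comp_apply, aeval_def, hom_eval₂, hhom, RingHom.comp_apply, (hπ _ _).2 (happrox _)]
  exact (hom_eval₂ W hom (π.comp coeToPowerSeries.ringHom) _).symm

theorem exists_polynomialApproximation [IsDomain D] [IsLocalRing D]
    [IsAdicComplete (IsLocalRing.maximalIdeal D) D] {A κ : Type*} [CommRing A] [Algebra A C]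
    [Algebra (MvPolynomial κ A) C] [IsScalarTower A (MvPolynomial κ A) C]
    (P : GenericPresentation (MvPolynomial κ A) C m) (τ : C →+* PowerSeries D) (α : A →+* D[X])
    (hα : ∀ a, τ (algebraMap A C a) = α a)
    (hτ : (τ (aeval P.root P.jacobian)).map (IsLocalRing.residue D) ≠ 0) :
    ∃ Q : P.PolynomialApproximation D, ∀ a, Q.hom (MvPolynomial.C a) = α a := by
  obtain ⟨f, w, hfw⟩ := PowerSeries.exists_isWeierstrassFactorization
    (g := PowerSeries.X * τ (aeval P.root P.jacobian)) (by
      rw [map_mul, PowerSeries.map_X]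
      exact mul_ne_zero PowerSeries.X_ne_zero hτ)
  have hf := hfw.isDistinguishedAt
  have hf₃ : (f ^ 3).IsDistinguishedAt (IsLocalRing.maximalIdeal D) := by
    simpa only [pow_succ, pow_zero, one_mul] using (hf.mul hf).mul hf
  have hw : IsUnit (PowerSeries.constantCoeff w) := hfw.isUnit.map _
  have hcoeff : f.coeff 0 = 0 := by
    have h := congrArg PowerSeries.constantCoeff hfw.eq_mul
    rw [map_mul, PowerSeries.constantCoeff_X, zero_mul, map_mul, constantCoeff_coe] at h
    exact hw.mul_left_eq_zero.1 h.symm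
  obtain ⟨hom, root, hhom, hcong⟩ := exists_eval₂_coe_dvd_sub (κ := κ) hf₃ τ α hα P.root
  choose gen hgen using fun i => exists_coe_dvd_sub_coe hf₃ (τ (P.gen i))
  obtain ⟨cofactor, hcofactor, hjacobian⟩ :=
    exists_X_mul_eq_mul_of_coe_dvd_sub hf hfw.isUnit hfw.eq_mul (hcong P.jacobian)
  refine ⟨{
    hom, root, gen, modulus := f, cofactor
    monic_modulus := hf.monic
    coeff_modulus := hcoeff
    isUnit_coeff_cofactor := hcofactor
    dvd_poly := dvd_of_coe_dvd_coe hf₃ ?_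
    dvd_num_sub := fun i => dvd_of_coe_dvd_coe hf₃ ?_
    X_mul_jacobian := hjacobian }, hhom⟩
  · simpa [P.aeval_poly] using hcong P.poly
  · have hdenom := hcong (Polynomial.C P.denom)
    have hnum := hcong (P.num i)
    rw [← P.denom_mul_gen, map_mul] at hnum
    rw [aeval_C, eval₂_C] at hdenom
    rw [Polynomial.coe_sub, Polynomial.coe_mul]
    convert dvd_sub (dvd_add (hdenom.mul_right (τ (P.gen i)))
      ((hgen i).mul_left (hom P.denom : PowerSeries D))) hnum using 1
    ring

end Existence

end GenericPresentation

end PolynomialApproximation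

/-! ### Transfer to positive characteristic -/

section Shear

open MvPowerSeries

variable {R : Type*} [CommRing R] {d : ℕ} (n : Fin d → ℤ)

/-- The images of the variables under `shear n`. -/
noncomputable def shearX : Fin (d + 1) → MvPowerSeries (Fin (d + 1)) R :=
  Fin.cases (X 0) fun j => X j.succ + (n j : MvPowerSeries (Fin (d + 1)) R) * X 0

theorem hasSubst_shearX : HasSubst (shearX (R := R) n) :=
  hasSubst_of_constantCoeff_zero fun i => by
    refine Fin.cases ?_ (fun j => ?_) i <;> simp [shearX]

/-- The linear change of coordinates `X_{j+1} ↦ X_{j+1} + n_j X_0`. For generic `n` it makes a given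
power series regular in the variable `X_0`, as the Weierstrass preparation theorem requires. -/
noncomputable def shear : MvPowerSeries (Fin (d + 1)) R →ₐ[R] MvPowerSeries (Fin (d + 1)) R :=
  substAlgHom (hasSubst_shearX n)

@[simp]
theorem shear_X_zero : shear n (X 0 : MvPowerSeries (Fin (d + 1)) R) = X 0 := by
  rw [shear, substAlgHom_X, shearX, Fin.cases_zero]

@[simp]
theorem shear_X_succ (j : Fin d) :
    shear n (X j.succ : MvPowerSeries (Fin (d + 1)) R) =
      X j.succ + (n j : MvPowerSeries (Fin (d + 1)) R) * X 0 := by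
  rw [shear, substAlgHom_X, shearX, Fin.cases_succ]

theorem coeff_map_constantCoeff_finSuccEquiv (f : MvPowerSeries (Fin (d + 1)) R) (N : ℕ) :
    PowerSeries.coeff N ((MvPowerSeries.finSuccEquiv R d f).map constantCoeff) =
      coeff (Finsupp.single 0 N) f := by
  rw [PowerSeries.coeff_map, ← coeff_zero_eq_constantCoeff_apply]
  refine (coeff_coeff_finSuccEquiv ..).trans (congrArg (coeff · f) ?_)
  ext i
  refine Fin.cases ?_ (fun j => ?_) i <;> simp

theorem coeff_single_zero_shear (f : MvPowerSeries (Fin (d + 1)) R) (N : ℕ) :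
    coeff (Finsupp.single 0 N) (shear n f) =
      ∑ e ∈ Finset.univ.finsuppAntidiag N, coeff e f * ∏ j, (n j : R) ^ e j.succ := by
  have hmem (e : Fin (d + 1) →₀ ℕ) : e ∈ Finset.univ.finsuppAntidiag N ↔ N = ∑ i, e i := by
    simp [Finset.mem_finsuppAntidiag, eq_comm]
  have hmonomial (e : Fin (d + 1) →₀ ℕ) :
      coeff (Finsupp.single 0 N) (e.prod fun i k => shearX (R := R) n i ^ k) =
        if N = ∑ i, e i then ∏ j, (n j : R) ^ e j.succ else 0 := by
    rw [← coeff_map_constantCoeff_finSuccEquiv, Finsupp.prod_fintype _ _ (by simp)]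
    simp only [shearX, Fin.prod_univ_succ, Fin.sum_univ_succ, Fin.cases_zero, Fin.cases_succ,
      map_mul, map_prod, map_pow, map_add, map_intCast, MvPowerSeries.finSuccEquiv_X_zero,
      MvPowerSeries.finSuccEquiv_X_succ, PowerSeries.map_X, PowerSeries.map_C, constantCoeff_X,
      map_zero, zero_add, mul_pow, Finset.prod_mul_distrib, Finset.prod_pow_eq_pow_sum]
    have hC : ∏ j, (n j : PowerSeries R) ^ e j.succ =
        PowerSeries.C (∏ j, (n j : R) ^ e j.succ) := by
      simp only [map_prod, map_pow, map_intCast]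
    rw [mul_left_comm, ← pow_add, hC, PowerSeries.coeff_C_mul, PowerSeries.coeff_X_pow, mul_ite,
      mul_one, mul_zero]
  rw [shear, substAlgHom_apply, coeff_subst (hasSubst_shearX n)]
  simp_rw [hmonomial]
  rw [finsum_eq_sum_of_support_subset (s := Finset.univ.finsuppAntidiag N)]
  · refine Finset.sum_congr rfl fun e he => ?_
    rw [if_pos ((hmem e).1 he), smul_eq_mul]
  · intro e he
    rw [Finset.mem_coe, hmem]
    by_contra h
    simp [h] at he

theorem exists_sum_finsuppAntidiag_ne_zero {K : Type*} [Field K] [CharZero K]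
    {f : MvPowerSeries (Fin (d + 1)) K} {e₀ : Fin (d + 1) →₀ ℕ} (he₀ : coeff e₀ f ≠ 0) :
    ∃ n : Fin d → ℤ, ∑ e ∈ Finset.univ.finsuppAntidiag (∑ i, e₀ i),
      coeff e f * ∏ j, (n j : K) ^ e j.succ ≠ 0 := by
  let q : MvPolynomial (Fin d) K :=
    ∑ e ∈ Finset.univ.finsuppAntidiag (∑ i, e₀ i), MvPolynomial.monomial e.tail (coeff e f)
  have hq : q ≠ 0 := by
    suffices MvPolynomial.coeff e₀.tail q = coeff e₀ f from
      fun h => he₀ (by rw [← this, h, MvPolynomial.coeff_zero])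
    simp only [q, MvPolynomial.coeff_sum, MvPolynomial.coeff_monomial]
    rw [Finset.sum_eq_single e₀]
    · rw [if_pos rfl]
    · refine fun e he hne => if_neg fun htail => hne ?_
      have hsucc (j : Fin d) : e j.succ = e₀ j.succ := by
        simpa only [Finsupp.tail_apply] using DFunLike.congr_fun htail j
      have hsum := (Finset.mem_finsuppAntidiag.1 he).1
      simp only [Fin.sum_univ_succ, hsucc, add_left_inj] at hsum
      exact Finsupp.ext fun i => Fin.cases hsum hsucc i
    · exact fun h => absurd (Finset.mem_finsuppAntidiag.2 ⟨rfl, by simp⟩) h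
  by_contra! h
  refine hq (MvPolynomial.funext_set (fun _ => Set.range ((↑) : ℤ → K))
    (fun _ => Set.infinite_range_of_injective Int.cast_injective) fun x hx => ?_)
  choose y hy using fun i => hx i (Set.mem_univ i)
  obtain rfl : (fun i => (y i : K)) = x := funext hy
  rw [map_zero, ← h y, map_sum]
  refine Finset.sum_congr rfl fun e _ => ?_
  rw [MvPolynomial.eval_monomial, Finsupp.prod_fintype _ _ fun _ => pow_zero _]
  simp only [Finsupp.tail_apply]

theorem exists_map_constantCoeff_finSuccEquiv_shear_ne_zero {K : Type*} [Field K] [CharZero K]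
    {f : MvPowerSeries (Fin (d + 1)) K} (hf : f ≠ 0) :
    ∃ n : Fin d → ℤ, (MvPowerSeries.finSuccEquiv K d (shear n f)).map constantCoeff ≠ 0 := by
  obtain ⟨e₀, he₀⟩ : ∃ e, coeff e f ≠ 0 := by
    by_contra! h
    exact hf (MvPowerSeries.ext h)
  obtain ⟨n, hn⟩ := exists_sum_finsuppAntidiag_ne_zero he₀
  refine ⟨n, fun h => hn ?_⟩
  rw [← coeff_single_zero_shear, ← coeff_map_constantCoeff_finSuccEquiv, h, map_zero]

end Shear

section Transfer

theorem isJacobsonRing_int : IsJacobsonRing ℤ := by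
  rw [isJacobsonRing_iff_prime_eq]
  intro P hP
  obtain rfl | hP₀ := eq_or_ne P ⊥
  · refine eq_bot_iff.2 fun x hx => ?_
    have hunit := Int.isUnit_iff.1 (Ideal.mem_jacobson_bot.1 hx x)
    have hx₀ : x = 0 := by
      rcases hunit with h | h <;> nlinarith
    simpa using hx₀
  · have := hP.isMaximal hP₀
    exact Ideal.jacobson_eq_self_of_isMaximal

theorem finiteType_closure {A : Type*} [CommRing A] {s : Set A} (hs : s.Finite) :
    Algebra.FiniteType ℤ (Subring.closure s) := by
  have hfg : (Algebra.adjoin ℤ s).FG := Subalgebra.fg_def.2 ⟨s, hs, rfl⟩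
  rw [Algebra.adjoin_int] at hfg
  exact (Subalgebra.fg_iff_finiteType _).1 hfg

theorem ringChar_ne_zero_of_finiteType_int (L : Type*) [Field L] [Algebra ℤ L]
    [Algebra.FiniteType ℤ L] :
    ringChar L ≠ 0 := by
  intro h
  have : CharP L 0 := h ▸ ringChar.charP L
  have : CharZero L := CharP.charP_to_charZero L
  have := isJacobsonRing_int
  have := finite_of_finite_type_of_isJacobsonRing ℤ L
  exact Int.not_isField
    (isField_of_isIntegral_of_isField (RingHom.injective_int (algebraMap ℤ L)) (Field.toIsField L))

theorem exists_ringHom_charP {C : Type u} [CommRing C] [Nontrivial C] [Algebra.FiniteType ℤ C] :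
    ∃ (p : ℕ) (_ : p.Prime) (k : Type u) (_ : Field k) (_ : CharP k p), Nonempty (C →+* k) := by
  obtain ⟨m, hm⟩ := Ideal.exists_maximal C
  let _ : Field (C ⧸ m) := Ideal.Quotient.field m
  have : Algebra.FiniteType ℤ (C ⧸ m) :=
    .of_surjective (Ideal.Quotient.mkₐ ℤ m) (Ideal.Quotient.mkₐ_surjective ℤ m)
  exact ⟨ringChar (C ⧸ m), (CharP.char_is_prime_or_zero (C ⧸ m) _).resolve_right
    (ringChar_ne_zero_of_finiteType_int _), C ⧸ m, inferInstance, ringChar.charP _,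
    ⟨Ideal.Quotient.mk m⟩⟩

open MvPowerSeries

instance isAdicComplete_maximalIdeal_mvPowerSeries {K : Type*} [Field K] {d : ℕ} :
    IsAdicComplete (IsLocalRing.maximalIdeal (MvPowerSeries (Fin d) K))
      (MvPowerSeries (Fin d) K) := by
  rw [maximalIdeal_eq_span_X]
  infer_instance

instance isDomain_mvPowerSeries {σ R : Type*} [CommRing R] [IsDomain R] :
    IsDomain (MvPowerSeries σ R) :=
  NoZeroDivisors.to_isDomain _

theorem residue_mvPowerSeries_eq_zero_iff {K σ : Type*} [Field K] {f : MvPowerSeries σ K} :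
    IsLocalRing.residue _ f = 0 ↔ constantCoeff f = 0 := by
  rw [IsLocalRing.residue_eq_zero_iff, IsLocalRing.mem_maximalIdeal, mem_nonunits_iff,
    isUnit_iff_constantCoeff, isUnit_iff_ne_zero, not_not]

theorem aeval_X_mvPowerSeries {σ R : Type*} [CommRing R] (p : MvPolynomial σ ℤ) :
    MvPolynomial.aeval (X : σ → MvPowerSeries σ R) p =
      (p.map (Int.castRingHom R) : MvPolynomial σ R) := by
  refine congrArg (fun g : MvPolynomial σ ℤ →+* MvPowerSeries σ R => g p)
    (?_ : (MvPolynomial.aeval X).toRingHom =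
      MvPolynomial.coeToMvPowerSeries.ringHom.comp (MvPolynomial.map (Int.castRingHom R)))
  exact MvPolynomial.ringHom_ext (fun a => by simp) fun i => by simp

theorem aeval_X_mvPowerSeries_injective {σ R : Type*} [CommRing R] [CharZero R] :
    Function.Injective (MvPolynomial.aeval (R := ℤ) (X : σ → MvPowerSeries σ R)) := by
  intro p q hpq
  rw [aeval_X_mvPowerSeries, aeval_X_mvPowerSeries] at hpq
  exact MvPolynomial.map_injective _ (RingHom.injective_int _) (MvPolynomial.coe_injective _ _ hpq)

/-- The ring homomorphism `X_0 ↦ X`, `X_{j+1} ↦ y_j + n_j X`: the effect of `shear n` on the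
variables, once power series in `d + 1` variables are read as power series in `X_0`. -/
noncomputable def shearPolynomial {S : Type*} [CommRing S] {d : ℕ} (n : Fin d → ℤ) (y : Fin d → S) :
    MvPolynomial (Fin (d + 1)) ℤ →+* Polynomial S :=
  (MvPolynomial.aeval (Fin.cases Polynomial.X fun j =>
    Polynomial.C (y j) + (n j : Polynomial S) * Polynomial.X)).toRingHom

section shearPolynomial

variable {S S' : Type*} [CommRing S] [CommRing S'] {d : ℕ} (n : Fin d → ℤ) (y : Fin d → S)

@[simp]
theorem shearPolynomial_X_zero : shearPolynomial n y (MvPolynomial.X 0) = Polynomial.X := by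
  simp [shearPolynomial]

@[simp]
theorem shearPolynomial_X_succ (j : Fin d) : shearPolynomial n y (MvPolynomial.X j.succ) =
    Polynomial.C (y j) + (n j : Polynomial S) * Polynomial.X := by
  simp [shearPolynomial]

theorem map_shearPolynomial (φ : S →+* S') (a : MvPolynomial (Fin (d + 1)) ℤ) :
    (shearPolynomial n y a).map φ = shearPolynomial n (fun j => φ (y j)) a := by
  refine RingHom.congr_fun
    (?_ : (Polynomial.mapRingHom φ).comp (shearPolynomial n y) = shearPolynomial n _) a
  refine MvPolynomial.ringHom_ext (fun a => by simp) fun i => ?_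
  refine Fin.cases ?_ (fun j => ?_) i <;> simp

end shearPolynomial

theorem coe_intCast_powerSeries {R : Type*} [CommRing R] (a : ℤ) :
    ((a : Polynomial R) : PowerSeries R) = a :=
  map_intCast (Polynomial.coeToPowerSeries.ringHom (R := R)) a

theorem finSuccEquiv_shear_eq_coe_shearPolynomial {R : Type*} [CommRing R] {d : ℕ} (n : Fin d → ℤ)
    (a : MvPolynomial (Fin (d + 1)) ℤ) :
    MvPowerSeries.finSuccEquiv R d (shear n (MvPolynomial.aeval X a)) =
      (shearPolynomial n X a : Polynomial (MvPowerSeries (Fin d) R)) := by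
  refine RingHom.congr_fun (?_ : ((MvPowerSeries.finSuccEquiv R d).toRingHom.comp
    (shear n).toRingHom).comp (MvPolynomial.aeval X).toRingHom =
      Polynomial.coeToPowerSeries.ringHom.comp (shearPolynomial n X)) a
  refine MvPolynomial.ringHom_ext (fun a => by simp) fun i => ?_
  refine Fin.cases ?_ (fun j => ?_) i <;> simp [coe_intCast_powerSeries]

theorem shear_neg_finSuccEquiv_symm_shearPolynomial {R : Type*} [CommRing R] {d : ℕ}
    (n : Fin d → ℤ) (i : Fin (d + 1)) :
    shear (-n) ((MvPowerSeries.finSuccEquiv R d).symm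
      (shearPolynomial n X (MvPolynomial.X i) : Polynomial (MvPowerSeries (Fin d) R))) = X i := by
  have hzero : (MvPowerSeries.finSuccEquiv R d).symm PowerSeries.X = X 0 := by
    rw [AlgEquiv.symm_apply_eq, finSuccEquiv_X_zero]
  have hsucc (j : Fin d) :
      (MvPowerSeries.finSuccEquiv R d).symm (PowerSeries.C (X j)) = X j.succ := by
    rw [AlgEquiv.symm_apply_eq, finSuccEquiv_X_succ]
  refine Fin.cases ?_ (fun j => ?_) i <;> simp [coe_intCast_powerSeries, hzero, hsucc]

theorem exists_finite_forall_subring_exists_ringHom {K : Type*} [Field K] [CharZero K] {d : ℕ}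
    {C : Type*} [CommRing C] [IsDomain C] [Algebra (MvPolynomial (Fin (d + 1)) ℤ) C]
    [FaithfulSMul (MvPolynomial (Fin (d + 1)) ℤ) C]
    [Algebra.FiniteType (MvPolynomial (Fin (d + 1)) ℤ) C] {ι : C →+* MvPowerSeries (Fin (d + 1)) K}
    (hι : Function.Injective ι)
    (hιX : ∀ a : MvPolynomial (Fin (d + 1)) ℤ, ι (algebraMap _ C a) = MvPolynomial.aeval X a) :
    ∃ (n : Fin d → ℤ) (T : Set (MvPowerSeries (Fin d) K)), T.Finite ∧
      ∀ S : Subring (MvPowerSeries (Fin d) K), T ⊆ S → ∀ y : Fin d → S,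
        (∀ j, (y j : MvPowerSeries (Fin d) K) = X j) →
          ∀ {B : Type*} [CommRing B] [IsDomain B] (φ : S →+* B),
            ∃ ψ : C →+* PowerSeries B, ∀ a : MvPolynomial (Fin (d + 1)) ℤ, ψ (algebraMap _ C a) =
              (shearPolynomial n (fun j => φ (y j)) a : Polynomial B) := by
  obtain ⟨N, _, _, m, ⟨P⟩⟩ :=
    exists_genericPresentation_mvPolynomial (MvPolynomial (Fin (d + 1)) ℤ) C
  obtain ⟨n, hn⟩ := exists_map_constantCoeff_finSuccEquiv_shear_ne_zero
    ((map_ne_zero_iff ι hι).2 P.aeval_jacobian_ne_zero)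
  obtain ⟨Q, hQ⟩ := P.exists_polynomialApproximation
    (((MvPowerSeries.finSuccEquiv K d).toRingHom.comp (shear n).toRingHom).comp ι)
    (shearPolynomial n X)
    (fun a => by
      rw [RingHom.comp_apply, hιX]
      exact finSuccEquiv_shear_eq_coe_shearPolynomial n a)
    fun h => hn (PowerSeries.ext fun N => by
      rw [PowerSeries.coeff_map, map_zero, ← residue_mvPowerSeries_eq_zero_iff]
      exact congrArg (PowerSeries.coeff N) h)
  have : @Algebra.FiniteType ℤ (MvPolynomial (Fin N) (MvPolynomial (Fin (d + 1)) ℤ)) _ _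
      (Ring.toIntAlgebra _) :=
    .trans (S := MvPolynomial (Fin (d + 1)) ℤ) inferInstance inferInstance
  obtain ⟨T, hT, hsubring⟩ := Q.exists_finite_forall_subring
  refine ⟨n, T, hT, fun S hTS y hy B _ _ φ => ?_⟩
  obtain ⟨Q', hQ'⟩ := hsubring S hTS
  obtain ⟨ψ, hψ⟩ := (Q'.map φ).exists_ringHom
  have hQ'_C (a) : Q'.hom (MvPolynomial.C a) = shearPolynomial n y a := by
    refine Polynomial.map_injective S.subtype Subtype.coe_injective ?_
    rw [map_shearPolynomial]
    simp only [Subring.coe_subtype, hy]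
    exact (RingHom.congr_fun hQ' _).trans (hQ a)
  refine ⟨ψ, fun a => ?_⟩
  rw [IsScalarTower.algebraMap_apply _ (MvPolynomial (Fin N) (MvPolynomial (Fin (d + 1)) ℤ)) C, hψ,
    MvPolynomial.algebraMap_eq, ← map_shearPolynomial, ← hQ'_C]
  rfl

theorem exists_finite_forall_subring_exists_ringHom_closure {K : Type*} [Field K] [CharZero K]
    {d : ℕ} {s : Set (MvPowerSeries (Fin (d + 1)) K)} (hs : s.Finite)
    (hX : ∀ i, X i ∈ Subring.closure s) :
    ∃ T : Set (MvPowerSeries (Fin d) K), T.Finite ∧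
      ∀ S : Subring (MvPowerSeries (Fin d) K), T ⊆ S → ∀ hXS : ∀ j, X j ∈ S,
        ∀ {k : Type*} [Field k] (φ : S →+* MvPowerSeries (Fin d) k), (∀ j, φ ⟨X j, hXS j⟩ = X j) →
          ∃ ψ : Subring.closure s →+* MvPowerSeries (Fin (d + 1)) k, ∀ i, ψ ⟨X i, hX i⟩ = X i := by
  let A := MvPolynomial (Fin (d + 1)) ℤ
  let C := Subring.closure s
  let _ : Algebra A C := (MvPolynomial.aeval fun i => (⟨X i, hX i⟩ : C)).toAlgebra
  have hcoe (a : A) : C.subtype (algebraMap A C a) = MvPolynomial.aeval X a :=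
    (MvPolynomial.map_aeval _ C.subtype a).trans
      (congrArg (fun g => MvPolynomial.eval₂Hom g X a) (RingHom.ext_int _ _))
  have : FaithfulSMul A C := (faithfulSMul_iff_algebraMap_injective A C).2 fun a b hab =>
    aeval_X_mvPowerSeries_injective (by rw [← hcoe, hab, hcoe])
  have := finiteType_closure hs
  have : Algebra.FiniteType A C := .of_restrictScalars_finiteType ℤ A C
  obtain ⟨n, T, hT, hsubring⟩ :=
    exists_finite_forall_subring_exists_ringHom C.subtype_injective hcoe
  refine ⟨T, hT, fun S hTS hXS k _ φ hφ => ?_⟩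
  obtain ⟨ψ, hψ⟩ := hsubring S hTS (fun j => ⟨X j, hXS j⟩) (fun _ => rfl) φ
  refine ⟨((shear (-n)).toRingHom.comp (MvPowerSeries.finSuccEquiv k d).symm.toRingHom).comp ψ,
    fun i => ?_⟩
  have hi : algebraMap A C (MvPolynomial.X i) = ⟨X i, hX i⟩ := MvPolynomial.aeval_X _ i
  rw [← hi, RingHom.comp_apply, hψ]
  simp only [hφ]
  exact shear_neg_finSuccEquiv_symm_shearPolynomial n i

theorem exists_ringHom_mvPowerSeries_charP (d : ℕ) : ∀ {K : Type u} [Field K]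
    {s : Set (MvPowerSeries (Fin d) K)} (_ : s.Finite) (hX : ∀ i, X i ∈ Subring.closure s),
    ∃ (p : ℕ) (_ : p.Prime) (k : Type u) (_ : Field k) (_ : CharP k p)
      (ψ : Subring.closure s →+* MvPowerSeries (Fin d) k), ∀ i, ψ ⟨X i, hX i⟩ = X i := by
  induction d with
  | zero =>
    intro K _ s hs hX
    have := finiteType_closure hs
    obtain ⟨p, hp, k, _, _, ⟨φ⟩⟩ := exists_ringHom_charP (C := Subring.closure s)
    exact ⟨p, hp, k, inferInstance, inferInstance, MvPowerSeries.C.comp φ, fun i => i.elim0⟩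
  | succ d ih =>
    intro K _ s hs hX
    by_cases hchar : ringChar K = 0
    swap
    · exact ⟨ringChar K, (CharP.char_is_prime_or_zero K _).resolve_right hchar, K, inferInstance,
        ringChar.charP K, (Subring.closure s).subtype, fun i => rfl⟩
    have : CharP K 0 := hchar ▸ ringChar.charP K
    have : CharZero K := CharP.charP_to_charZero K
    obtain ⟨T, hT, hsubring⟩ := exists_finite_forall_subring_exists_ringHom_closure hs hX
    have hXT (j : Fin d) : X j ∈ Subring.closure (T ∪ Set.range X) :=
      Subring.subset_closure (Or.inr ⟨j, rfl⟩)
    obtain ⟨p, hp, k, _, _, φ, hφ⟩ := ih (hT.union (Set.finite_range X)) hXT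
    exact ⟨p, hp, k, inferInstance, inferInstance,
      hsubring _ (Set.subset_union_left.trans Subring.subset_closure) hXT φ hφ⟩

end Transfer

/-! ### Descent to finitely generated subrings -/

section Descent

theorem exists_finite_forall_mem_powerIdeal {D : Type v} [CommRing D] {d : ℕ} {x : Fin d → D}
    {t : Fin d → ℕ} {Y : Set D} (hY : Y.Finite) (hYx : ∀ y ∈ Y, y ∈ powerIdeal x t) :
    ∃ T : Set D, T.Finite ∧ ∀ {E : Type v} [CommRing E] (g : E →+* D), Function.Injective g →
      T ⊆ Set.range g → ∀ {x₀ : Fin d → E}, (∀ i, g (x₀ i) = x i) →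
      ∀ y, g y ∈ Y → y ∈ powerIdeal x₀ t := by
  choose! c hc using fun y hy => Ideal.mem_span_range_iff_exists_fun.1 (hYx y hy)
  refine ⟨⋃ y ∈ Y, Set.range (c y), hY.biUnion fun y _ => Set.finite_range _, ?_⟩
  intro E _ g hg hT x₀ hx y hy
  choose b hb using fun i => hT (Set.mem_biUnion hy ⟨i, rfl⟩)
  refine Ideal.mem_span_range_iff_exists_fun.2 ⟨b, hg ?_⟩
  simp only [map_sum, map_mul, map_pow, hb, hx, hc _ hy]

theorem CyclicChain.exists_finite_forall_ringHom {D : Type v} [CommRing D] {ι : Type*} [Finite ι]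
    {d h : ℕ} {x : Fin d → D} {t : Fin d → ℕ} {W : Submodule D (ι → D)}
    (H : CyclicChain (Ideal.span (Set.range x)) (powerIdeal x t • ⊤) W h) {Y : Set (ι → D)}
    (hY : Y.Finite) (hYW : Y ⊆ W) :
    ∃ T : Set D, T.Finite ∧ ∀ {E : Type v} [CommRing E] (g : E →+* D), Function.Injective g →
      T ⊆ Set.range g → ∀ {x₀ : Fin d → E}, (∀ i, g (x₀ i) = x i) →
      ∃ W₀ : Submodule E (ι → E), CyclicChain (Ideal.span (Set.range x₀)) (powerIdeal x₀ t • ⊤) W₀ h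
        ∧ ∀ v, g ∘ v ∈ Y → v ∈ W₀ := by
  induction H generalizing Y with
  | refl =>
    obtain ⟨T, hT, hTY⟩ := exists_finite_forall_mem_powerIdeal (x := x) (t := t)
      (hY.biUnion fun y _ => Set.finite_range y) <| by
        simp only [Set.mem_iUnion₂]
        rintro _ ⟨y, hy, b, rfl⟩
        exact mem_ideal_smul_top_pi_iff.1 (hYW hy) b
    refine ⟨T, hT, fun g hg hgT x₀ hx => ⟨_, .refl, fun v hv => ?_⟩⟩
    exact mem_ideal_smul_top_pi_iff.2 fun b =>
      hTY g hg hgT hx _ (Set.mem_biUnion hv ⟨b, rfl⟩)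
  | @step W' h m _ hm ih =>
    have hsplit (y) (hy : y ∈ Y) : ∃ a : D, y - a • m ∈ W' := by
      obtain ⟨w, hw, _, hz, rfl⟩ := Submodule.mem_sup.1 (hYW hy)
      obtain ⟨a, rfl⟩ := Submodule.mem_span_singleton.1 hz
      exact ⟨a, by simpa using hw⟩
    choose! a ha using hsplit
    obtain ⟨T, hT, hTW⟩ := ih (Y := ((fun y => y - a y • m) '' Y) ∪ Set.range fun i => x i • m)
      ((hY.image _).union (Set.finite_range _)) <| by
        rintro _ (⟨y, hy, rfl⟩ | ⟨i, rfl⟩)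
        exacts [ha y hy, hm _ (Ideal.subset_span ⟨i, rfl⟩)]
    refine ⟨T ∪ a '' Y ∪ Set.range m, (hT.union (hY.image _)).union (Set.finite_range _), ?_⟩
    intro E _ g hg hgT x₀ hx
    obtain ⟨W₀, HW₀, hW₀⟩ := hTW g hg (fun z hz => hgT (Or.inl (Or.inl hz))) hx
    choose m₀ hm₀ using fun b => hgT (Or.inr ⟨b, rfl⟩)
    have hx₀ : Ideal.span (Set.range x₀) ≤ W₀.comap (LinearMap.toSpanSingleton E _ m₀) := by
      refine Ideal.span_le.2 ?_
      rintro _ ⟨i, rfl⟩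
      refine hW₀ _ (Or.inr ⟨i, ?_⟩)
      ext b
      simp [hm₀, hx]
    refine ⟨_, HW₀.step fun z hz => hx₀ hz, fun v hv => ?_⟩
    obtain ⟨a₀, ha₀⟩ := hgT (Or.inl (Or.inr ⟨_, hv, rfl⟩))
    rw [← sub_add_cancel v (a₀ • m₀)]
    refine Submodule.add_mem_sup (hW₀ _ (Or.inl ⟨_, hv, ?_⟩)) <|
      Submodule.smul_mem _ _ (Submodule.mem_span_singleton_self m₀)
    ext b
    simp [hm₀, ha₀]

end Descent

section QuasiBasis

namespace QuasiBasis

variable {A D : Type*} [CommRing A] {n : ℕ}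

theorem nontrivial [AddCommGroup D] [Module A D] (B : QuasiBasis A D n) (hn : 0 < n)
    (hB : B.denom ≠ 0) : Nontrivial D := by
  by_contra hD
  rw [not_nontrivial_iff_subsingleton] at hD
  refine hB ?_
  have hcoord := B.coord_vec ⟨0, hn⟩ ⟨0, hn⟩
  rwa [if_pos rfl, Subsingleton.elim (B.vec _) 0, map_zero, eq_comm] at hcoord

/-- The quasi-basis of an algebra over a subring of the scalars which contains the vectors of `B`
and on which the coordinates of `B` take values in the subring. -/
def restrict [CommRing D] [Algebra A D] (B : QuasiBasis A D n) {C : Subring A}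
    (D₀ : Subalgebra C D) (hdenom : B.denom ∈ C) (hvec : ∀ i, B.vec i ∈ D₀)
    (hcoord : ∀ i, ∀ y ∈ D₀, B.coord i y ∈ C) : QuasiBasis C D₀ n where
  vec i := ⟨B.vec i, hvec i⟩
  coord i :=
    { toFun := fun y => ⟨B.coord i y, hcoord i y y.2⟩
      map_add' := fun y z => Subtype.ext (map_add (B.coord i) (y : D) z)
      map_smul' := fun a y => Subtype.ext (map_smul (B.coord i) (a : A) (y : D)) }
  denom := ⟨B.denom, hdenom⟩
  coord_vec i j := Subtype.ext <| (B.coord_vec i j).trans <| by split_ifs <;> rfl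
  denom_smul y := Subtype.ext <| (B.denom_smul y).trans <| by
    rw [AddSubmonoidClass.coe_finsetSum]
    rfl

/-- The quasi-basis `1 ⊗ vec i` of a base change. -/
def baseChange [AddCommGroup D] [Module A D] (B : QuasiBasis A D n) (A' : Type*) [CommRing A']
    [Algebra A A'] : QuasiBasis A' (A' ⊗[A] D) n where
  vec i := 1 ⊗ₜ B.vec i
  coord i := (TensorProduct.AlgebraTensorModule.rid A A' A').toLinearMap ∘ₗ
    (B.coord i).baseChange A'
  denom := algebraMap A A' B.denom
  coord_vec i j := by
    rcases eq_or_ne i j with rfl | hij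
    · simp [B.coord_vec, Algebra.algebraMap_eq_smul_one]
    · simp [B.coord_vec, hij]
  denom_smul y := by
    induction y using TensorProduct.induction_on with
    | zero => simp
    | add y z hy hz => simp only [smul_add, hy, hz, map_add, add_smul, Finset.sum_add_distrib]
    | tmul a y =>
      rw [algebraMap_smul, ← TensorProduct.tmul_smul, B.denom_smul, TensorProduct.tmul_sum]
      simp [TensorProduct.smul_tmul']

end QuasiBasis

theorem apply_mem_subring_of_mem_span {A D : Type*} [CommRing A] [AddCommGroup D] [Module A D]
    {C : Subring A} (l : D →ₗ[A] A) {s : Set D} (hs : ∀ y ∈ s, l y ∈ C) {y : D}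
    (hy : y ∈ Submodule.span C s) : l y ∈ C := by
  induction hy using Submodule.span_induction with
  | mem y hy => exact hs y hy
  | zero => simp
  | add y z _ _ hy hz => simpa using C.add_mem hy hz
  | smul a y _ hy => simpa [Subring.smul_def] using C.mul_mem a.2 hy

open scoped Pointwise in
theorem exists_finite_forall_subring_exists_subalgebra {A D ι : Type*} [CommRing A] [CommRing D]
    [Algebra A D] [Finite ι] {f : ι → D} (hf : Submodule.span A (Set.range f) = ⊤) {T : Set D}
    (hT : T.Finite) :
    ∃ s : Set A, s.Finite ∧ ∀ C : Subring A, s ⊆ C → ∃ D₀ : Subalgebra C D,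
      Subalgebra.toSubmodule D₀ = Submodule.span C (Set.range f) ∧ T ⊆ D₀ := by
  have := Fintype.ofFinite ι
  choose c hc using fun y : D =>
    (Submodule.mem_span_range_iff_exists_fun A).1 (hf ▸ Submodule.mem_top : y ∈ _)
  let T' : Set D := insert 1 (T ∪ Set.range f * Set.range f)
  have hT' : T'.Finite :=
    (hT.union ((Set.finite_range f).mul (Set.finite_range f))).insert 1
  refine ⟨⋃ y ∈ T', Set.range (c y), hT'.biUnion fun y _ => Set.finite_range _, fun C hC => ?_⟩
  have hspan : T' ⊆ Submodule.span C (Set.range f) := fun y hy => by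
    rw [← hc y]
    exact Submodule.sum_mem _ fun i _ => Submodule.smul_mem _
      (⟨c y i, hC (Set.mem_biUnion hy ⟨i, rfl⟩)⟩ : C) (Submodule.subset_span ⟨i, rfl⟩)
  have hmul : Submodule.span C (Set.range f) * Submodule.span C (Set.range f) ≤
      Submodule.span C (Set.range f) := by
    rw [Submodule.span_mul_span, Submodule.span_le]
    exact fun y hy => hspan (Or.inr (Or.inr hy))
  exact ⟨(Submodule.span C (Set.range f)).toSubalgebra (hspan (Or.inl rfl))
    fun _ _ hy hz => hmul (Submodule.mul_mem_mul hy hz), rfl,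
    fun y hy => hspan (Or.inr (Or.inl hy))⟩

theorem QuasiBasis.exists_finite_forall_subring {A D : Type*} [CommRing A] [CommRing D]
    [Algebra A D] {n ν : ℕ} (B : QuasiBasis A D n) {f : Fin ν → D}
    (hf : Submodule.span A (Set.range f) = ⊤) {T : Set D} (hT : T.Finite) :
    ∃ s : Set A, s.Finite ∧ ∀ C : Subring A, s ⊆ C →
      ∃ (D₀ : Subalgebra C D) (f₀ : Fin ν → D₀) (B₀ : QuasiBasis C D₀ n),
        Submodule.span C (Set.range f₀) = ⊤ ∧ (B₀.denom : A) = B.denom ∧ T ⊆ D₀ := by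
  obtain ⟨s, hs, hsubalgebra⟩ := exists_finite_forall_subring_exists_subalgebra hf
    (hT.union (Set.finite_range B.vec))
  refine ⟨s ∪ insert B.denom (Set.range fun ij : Fin n × Fin ν => B.coord ij.1 (f ij.2)),
    hs.union ((Set.finite_range _).insert _), fun C hC => ?_⟩
  obtain ⟨D₀, hD₀, hTD₀⟩ := hsubalgebra C (Set.subset_union_left.trans hC)
  have hmem {y : D} : y ∈ D₀ ↔ y ∈ Submodule.span C (Set.range f) := by
    rw [← hD₀, Subalgebra.mem_toSubmodule]
  have hcoord (i j) : B.coord i (f j) ∈ C := hC (Or.inr (Or.inr ⟨(i, j), rfl⟩))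
  let f₀ (j : Fin ν) : D₀ := ⟨f j, hmem.2 (Submodule.subset_span ⟨j, rfl⟩)⟩
  refine ⟨D₀, f₀, B.restrict D₀ (hC (by simp)) (fun i => hTD₀ (Or.inr ⟨i, rfl⟩)) fun i y hy =>
    apply_mem_subring_of_mem_span (B.coord i) (Set.forall_mem_range.2 (hcoord i)) (hmem.1 hy), ?_,
    rfl, Set.subset_union_left.trans hTD₀⟩
  refine Submodule.map_injective_of_injective (f := D₀.val.toLinearMap) Subtype.val_injective ?_
  rw [Submodule.map_span, ← Set.range_comp, Submodule.map_top]
  exact hD₀.symm.trans D₀.toSubmodule.range_subtype.symm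

end QuasiBasis

section LexOrder

open MvPowerSeries

variable {d : ℕ} {α : Fin d →₀ ℕ} {K : Type*} [Field K] {c : MvPowerSeries (Fin d) K}

/-- The exponent agreeing with `α` before `i`, equal to `α i + 1` at `i` and to `0` after `i`. The
exponents lexicographically above `α` are those componentwise above some `lexSucc α i`. -/
noncomputable def lexSucc (α : Fin d →₀ ℕ) (i : Fin d) : Fin d →₀ ℕ :=
  Finsupp.equivFunOnFinite.symm fun l => if l < i then α l else if l = i then α i + 1 else 0

theorem toLex_lt_toLex_iff_exists_lexSucc_le {e : Fin d →₀ ℕ} :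
    toLex α < toLex e ↔ ∃ i, lexSucc α i ≤ e := by
  have hle (i) : lexSucc α i ≤ e ↔ (∀ l < i, α l ≤ e l) ∧ α i < e i := by
    refine ⟨fun h => ⟨fun l hl => ?_, ?_⟩, fun h l => ?_⟩
    · simpa [lexSucc, hl] using h l
    · simpa [lexSucc] using h i
    · rcases lt_trichotomy l i with hl | rfl | hl
      · simpa [lexSucc, hl] using h.1 l hl
      · simpa [lexSucc] using h.2
      · simp [lexSucc, hl.not_gt, hl.ne']
  simp only [hle, Finsupp.Lex.lt_iff]
  refine ⟨fun ⟨i, hi, h⟩ => ⟨i, fun l hl => (hi l hl).le, h⟩, fun ⟨i, hi, h⟩ => ?_⟩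
  induction i using WellFoundedLT.induction with
  | ind i ih =>
    by_cases hex : ∃ l < i, α l ≠ e l
    · obtain ⟨l, hl, hne⟩ := hex
      exact ih l hl (fun j hj => hi j (hj.trans hl)) ((hi l hl).lt_of_ne hne)
    · push Not at hex
      exact ⟨i, hex, h⟩

theorem le_of_coeff_monomial_mul_ne_zero {m e : Fin d →₀ ℕ} {b : MvPowerSeries (Fin d) K}
    (h : coeff e (monomial m 1 * b) ≠ 0) : m ≤ e := by
  classical
  by_contra hme
  exact h (by rw [coeff_monomial_mul, if_neg hme])

theorem lexOrder_eq_toLex_iff : lexOrder c = toLex α ↔ ∃ (w : MvPowerSeries (Fin d) K)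
    (b : Fin d → MvPowerSeries (Fin d) K),
      IsUnit w ∧ c = monomial α 1 * w + ∑ i, monomial (lexSucc α i) 1 * b i := by
  classical
  have hsum (b : Fin d → MvPowerSeries (Fin d) K) {e : Fin d →₀ ℕ} (he : toLex e ≤ toLex α) :
      coeff e (∑ i, monomial (lexSucc α i) 1 * b i) = 0 := by
    rw [map_sum]
    refine Finset.sum_eq_zero fun i _ => ?_
    by_contra hne
    exact he.not_gt <| toLex_lt_toLex_iff_exists_lexSucc_le.2
      ⟨i, le_of_coeff_monomial_mul_ne_zero hne⟩
  have hcoeff (w) (b : Fin d → MvPowerSeries (Fin d) K) :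
      coeff α (monomial α 1 * w + ∑ i, monomial (lexSucc α i) 1 * b i) = constantCoeff w := by
    rw [map_add, hsum b le_rfl, coeff_monomial_mul]
    simp
  simp only [isUnit_iff_constantCoeff, isUnit_iff_ne_zero]
  constructor
  · intro hα
    obtain ⟨b, hb⟩ := exists_eq_sum_monomial_mul c (fun o : Option (Fin d) => o.elim α (lexSucc α))
      fun e he => by
        have hle : toLex α ≤ toLex e :=
          WithTop.coe_le_coe.1 (hα ▸ lexOrder_le_of_coeff_ne_zero he)
        rcases hle.eq_or_lt with heq | hlt
        · exact ⟨none, (toLex.injective heq).le⟩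
        · obtain ⟨i, hi⟩ := toLex_lt_toLex_iff_exists_lexSucc_le.1 hlt
          exact ⟨some i, hi⟩
    rw [Fintype.sum_option] at hb
    refine ⟨b none, fun i => b (some i), ?_, hb⟩
    rw [← hcoeff _ fun i => b (some i)]
    exact hb ▸ coeff_ne_zero_of_lexOrder hα.symm
  · rintro ⟨w, b, hw, rfl⟩
    refine le_antisymm (lexOrder_le_of_coeff_ne_zero (by rwa [hcoeff])) ?_
    refine le_lexOrder_iff.2 fun e he => ?_
    have hlt : toLex e < toLex α := WithTop.coe_lt_coe.1 he
    rw [map_add, hsum b hlt.le, add_zero]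
    by_contra hne
    exact hlt.not_ge (Finsupp.toLex_monotone (le_of_coeff_monomial_mul_ne_zero hne))

theorem monomial_one_eq_prod_X_pow (e : Fin d →₀ ℕ) :
    (monomial e 1 : MvPowerSeries (Fin d) K) = ∏ i, X i ^ e i := by
  have h := congrArg (MvPolynomial.coeToMvPowerSeries.ringHom (R := K))
    (MvPolynomial.monomial_eq (s := e) (a := (1 : K)))
  rw [Finsupp.prod_fintype _ _ (by simp)] at h
  simpa using h

theorem exists_finite_forall_lexOrder_map_eq (hα : lexOrder c = toLex α) :
    ∃ s : Set (MvPowerSeries (Fin d) K), s.Finite ∧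
      ∀ {C : Subring (MvPowerSeries (Fin d) K)} {k : Type*} [Field k]
        (ψ : C →+* MvPowerSeries (Fin d) k) (hX : ∀ i, X i ∈ C), (∀ i, ψ ⟨X i, hX i⟩ = X i) →
        s ⊆ C → ∀ c₀ : C, c₀ = c → lexOrder (ψ c₀) = toLex α := by
  obtain ⟨w, b, hw, hcwb⟩ := lexOrder_eq_toLex_iff.1 hα
  obtain ⟨w', hw'⟩ := hw.exists_right_inv
  refine ⟨{w, w'} ∪ Set.range b, (Set.toFinite _).union (Set.finite_range _), ?_⟩
  intro C k _ ψ hX hψ hs c₀ hc₀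
  have hwC : w ∈ C := hs (by simp)
  have hwC' : w' ∈ C := hs (by simp)
  have hbC (i) : b i ∈ C := hs (by simp)
  refine lexOrder_eq_toLex_iff.2 ⟨ψ ⟨w, hwC⟩, fun i => ψ ⟨b i, hbC i⟩,
    .of_mul_eq_one (ψ ⟨w', hwC'⟩) ?_, ?_⟩
  · rw [← map_mul, ← map_one ψ]
    exact congrArg ψ (Subtype.ext hw')
  · have hC : c₀ = (∏ j, ⟨X j, hX j⟩ ^ α j) * ⟨w, hwC⟩ +
        ∑ i, (∏ j, ⟨X j, hX j⟩ ^ lexSucc α i j) * ⟨b i, hbC i⟩ := by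
      refine Subtype.ext ((hc₀.trans hcwb).trans ?_)
      simp [monomial_one_eq_prod_X_pow]
    simp only [hC, map_add, map_mul, map_sum, map_prod, map_pow, hψ, monomial_one_eq_prod_X_pow]

end LexOrder

section Inequality

open MvPowerSeries

variable {d n ν : ℕ} {α : Fin d →₀ ℕ}

theorem QuasiBasis.inequality_of_ringHom {k : Type*} [Field k] (p : ℕ) [Fact p.Prime] [CharP k p]
    {C D : Type*} [CommRing C] [CommRing D] [Algebra C D] (ψ : C →+* MvPowerSeries (Fin d) k)
    {x : Fin d → C} (hx : ∀ i, ψ (x i) = X i) (B : QuasiBasis C D n)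
    (hα : lexOrder (ψ B.denom) = toLex α) {f : Fin ν → D}
    (hf : Submodule.span C (Set.range f) = ⊤) {t : Fin d → ℕ} (ht : ∀ i, 0 < t i) {r h : ℕ}
    {W : Submodule D (Fin r → D)}
    (H : CyclicChain (Ideal.span (Set.range fun i => algebraMap C D (x i)))
      (powerIdeal (fun i => algebraMap C D (x i)) t • ⊤) W h)
    (hW : ∀ b, algebraMap C D B.denom • Pi.single b 1 ∈ W) :
    r * n * ∏ i, t i ≤ n * h + r * ν * boxDefect t α := by
  algebraize [ψ]
  let A := MvPowerSeries (Fin d) k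
  let g : D →ₐ[C] A ⊗[C] D := Algebra.TensorProduct.includeRight
  have hg (a : C) : g (algebraMap C D a) = algebraMap A (A ⊗[C] D) (ψ a) := by
    rw [g.commutes, IsScalarTower.algebraMap_apply C A (A ⊗[C] D)]
    rfl
  let BA := B.baseChange A
  have hdenom : lexOrder BA.denom = toLex α := hα
  rcases n.eq_zero_or_pos with rfl | hn
  · simp
  have : Nontrivial (A ⊗[C] D) := BA.nontrivial hn fun h0 => by simp [h0] at hdenom
  have : CharP (A ⊗[C] D) p := charP_of_injective_algebraMap
    ((algebraMap A (A ⊗[C] D)).comp (algebraMap k A)).injective p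
  have hspan : Submodule.span A (Set.range fun j => g (f j)) = ⊤ := by
    have := Submodule.baseChange_span (A := A) (R := C) (Set.range f)
    rw [hf, Submodule.baseChange_top, ← Set.range_comp] at this
    exact this.symm
  obtain ⟨W', HW', hgW⟩ := H.exists_map_ringHom g.toRingHom
  rw [map_powerIdeal, Ideal.map_span, ← Set.range_comp] at HW'
  refine BA.charP_inequality (x := fun i => g (algebraMap C D (x i))) (fun i => ?_) hdenom hspan p
    ht HW' fun b => ?_
  · rw [hg, hx]
  · convert hgW _ (hW b) using 1
    ext b'
    rcases eq_or_ne b' b with rfl | hne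
    · simpa only [Pi.smul_apply, Pi.single_eq_same, smul_eq_mul, mul_one] using! (hg B.denom).symm
    · simp [hne]

theorem QuasiBasis.inequality {K : Type u} [Field K] {D : Type v} [CommRing D]
    [Algebra (MvPowerSeries (Fin d) K) D] (B : QuasiBasis (MvPowerSeries (Fin d) K) D n)
    (hα : lexOrder B.denom = toLex α) {f : Fin ν → D}
    (hf : Submodule.span (MvPowerSeries (Fin d) K) (Set.range f) = ⊤) {t : Fin d → ℕ}
    (ht : ∀ i, 0 < t i) {r h : ℕ} {W : Submodule D (Fin r → D)}
    (H : CyclicChain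
      (Ideal.span (Set.range fun i => algebraMap (MvPowerSeries (Fin d) K) D (X i)))
      (powerIdeal (fun i => algebraMap (MvPowerSeries (Fin d) K) D (X i)) t • ⊤) W h)
    (hW : ∀ b, algebraMap _ D B.denom • Pi.single b 1 ∈ W) :
    r * n * ∏ i, t i ≤ n * h + r * ν * boxDefect t α := by
  obtain ⟨T, hT, hdescent⟩ := H.exists_finite_forall_ringHom (Set.finite_range _)
    (Set.range_subset_iff.2 hW)
  obtain ⟨s₁, hs₁, hsubalgebra⟩ := B.exists_finite_forall_subring hf hT
  obtain ⟨s₂, hs₂, hlexOrder⟩ := exists_finite_forall_lexOrder_map_eq hα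
  have hs := Subring.subset_closure (s := s₁ ∪ s₂ ∪ Set.range X)
  rw [Set.union_subset_iff, Set.union_subset_iff, Set.range_subset_iff] at hs
  obtain ⟨p, hp, k, _, _, ψ, hψ⟩ :=
    exists_ringHom_mvPowerSeries_charP d ((hs₁.union hs₂).union (Set.finite_range _)) hs.2
  have := Fact.mk hp
  obtain ⟨D₀, f₀, B₀, hf₀, hdenom, hTD₀⟩ := hsubalgebra _ hs.1.1
  obtain ⟨W₀, HW₀, hW₀⟩ := hdescent D₀.val.toRingHom Subtype.val_injective
    (fun y hy => ⟨⟨y, hTD₀ hy⟩, rfl⟩)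
    (x₀ := fun i => algebraMap (Subring.closure _) D₀ ⟨X i, hs.2 i⟩) fun i => rfl
  have hα₀ := hlexOrder ψ hs.2 hψ hs.1.2 _ hdenom
  refine B₀.inequality_of_ringHom p ψ hψ hα₀ hf₀ ht HW₀ fun b => hW₀ _ ⟨b, ?_⟩
  ext b'
  rcases eq_or_ne b' b with rfl | hne
  · simp only [Function.comp_apply, Pi.smul_apply, Pi.single_eq_same, smul_eq_mul, mul_one,
      ← hdenom]
    rfl
  · simp [hne]

end Inequality

section GenericBasis

variable {A : Type*} [CommRing A] [IsDomain A]

theorem exists_ne_zero_smul_mem_span {D : Type*} [AddCommGroup D] [Module A D] [Module.Finite A D]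
    {ι : Type*} [Fintype ι] {e : ι → D} (he : LinearIndependent A e)
    (hcard : Module.finrank A D ≤ Fintype.card ι) :
    ∃ a : A, a ≠ 0 ∧ ∀ y : D, a • y ∈ Submodule.span A (Set.range e) := by
  have htorsion : Module.IsTorsion A (D ⧸ Submodule.span A (Set.range e)) := by
    rw [← Module.finrank_eq_zero_iff_isTorsion]
    have hspan := finrank_span_eq_card he
    have hadd := Submodule.finrank_quotient_add_finrank (Submodule.span A (Set.range e))
    omega
  obtain ⟨a, ha, ha0⟩ := Submodule.annihilator_top_inter_nonZeroDivisors htorsion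
  refine ⟨a, nonZeroDivisors.ne_zero ha0, fun y => ?_⟩
  rw [← Submodule.Quotient.mk_eq_zero, Submodule.Quotient.mk_smul]
  exact Submodule.mem_annihilator.1 ha _ trivial

theorem exists_quasiBasis {D : Type*} [CommRing D] [IsDomain D] [Algebra A D] [Module.Finite A D]
    (hinj : Function.Injective (algebraMap A D)) {c : D} (hc : c ≠ 0) :
    ∃ (n : ℕ) (B : QuasiBasis A D n), 0 < n ∧ B.denom ≠ 0 ∧ c ∣ algebraMap A D B.denom := by
  have : FaithfulSMul A D := (faithfulSMul_iff_algebraMap_injective A D).2 hinj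
  have : Module.IsTorsionFree A D := inferInstance
  obtain ⟨e, he⟩ := exists_linearIndependent_of_le_finrank (R := A) (M := D) le_rfl
  obtain ⟨a, ha, hspan⟩ := exists_ne_zero_smul_mem_span he (by simp)
  obtain ⟨a', ha', ha0'⟩ := Submodule.exists_mem_ne_zero_of_ne_bot <|
    Ideal.comap_ne_bot_of_integral_mem hc (Ideal.mem_span_singleton_self c)
      (Algebra.IsIntegral.isIntegral (R := A) c)
  let b := Module.Basis.span he
  have hmem (y : D) : (a * a') • y ∈ Submodule.span A (Set.range e) := by
    rw [mul_comm, mul_smul]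
    exact Submodule.smul_mem _ _ (hspan y)
  let g : D →ₗ[A] Submodule.span A (Set.range e) :=
    (LinearMap.lsmul A D (a * a')).codRestrict _ hmem
  have hgval (y) : (g y : D) = (a * a') • y := rfl
  have hg (i) : g (e i) = (a * a') • b i :=
    Subtype.ext (by rw [hgval, Submodule.coe_smul, Module.Basis.span_apply])
  let B : QuasiBasis A D (Module.finrank A D) :=
    { vec := e
      coord := fun i => b.coord i ∘ₗ g
      denom := a * a'
      coord_vec := fun i j => by
        simp [hg, Finsupp.single_apply, eq_comm]
      denom_smul := fun y => by
        have hy := congrArg Subtype.val (b.sum_repr (g y))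
        rw [hgval] at hy
        simpa [b, Module.Basis.span_apply] using hy.symm }
  refine ⟨_, B, Module.finrank_pos, mul_ne_zero ha ha0', ?_⟩
  rw [map_mul]
  exact (Ideal.mem_span_singleton.1 (Ideal.mem_comap.1 ha')).mul_left _

open MvPowerSeries in
theorem exists_forall_mul_prod_le_of_finite {K : Type u} [Field K] {d : ℕ} {D : Type v} [CommRing D]
    [IsDomain D] [Algebra (MvPowerSeries (Fin d) K) D] [Module.Finite (MvPowerSeries (Fin d) K) D]
    (hinj : Function.Injective (algebraMap (MvPowerSeries (Fin d) K) D)) {c : D} (hc : c ≠ 0) :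
    ∃ (n ν : ℕ) (α : Fin d → ℕ), 0 < n ∧ ∀ {t : Fin d → ℕ} {r h : ℕ} {W : Submodule D (Fin r → D)},
      (∀ i, 0 < t i) →
      CyclicChain (Ideal.span (Set.range fun i => algebraMap (MvPowerSeries (Fin d) K) D (X i)))
        (powerIdeal (fun i => algebraMap (MvPowerSeries (Fin d) K) D (X i)) t • ⊤) W h →
      (∀ b, c • Pi.single b 1 ∈ W) → r * n * ∏ i, t i ≤ n * h + r * ν * boxDefect t α := by
  obtain ⟨n, B, hn, hB, z, hz⟩ := exists_quasiBasis hinj hc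
  obtain ⟨ν, f, hf⟩ := Module.Finite.exists_fin (R := MvPowerSeries (Fin d) K) (M := D)
  obtain ⟨α, hα⟩ := exists_finsupp_eq_lexOrder_of_ne_zero hB
  refine ⟨n, ν, α, hn, fun {t r h W} ht H hW => B.inequality hα hf ht H fun b => ?_⟩
  rw [hz, mul_comm, mul_smul]
  exact W.smul_mem _ (hW b)

end GenericBasis

/-! ### Coefficient fields -/

section CoefficientField

open IsLocalRing

variable {P κ : Type*} [CommRing P] [Field κ] {π : P →+* κ} {Γ : Subring P}

theorem isField_of_forall_pow_mem (hπ : Function.Surjective π)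
    (hΓ : ∀ b ∈ Γ, π b = 0 → b = 0) {n : ℕ} (hn : n ≠ 0) (hpow : ∀ b : P, b ^ n ∈ Γ) :
    IsField Γ := by
  refine ⟨⟨0, 1, fun h => one_ne_zero (α := κ) ?_⟩, mul_comm, fun {a} ha => ?_⟩
  · rw [← map_one π, ← map_zero π]
    exact congrArg π (congrArg Subtype.val h.symm)
  have hπa : π a ≠ 0 := fun h0 => ha (Subtype.ext (hΓ a a.2 h0))
  obtain ⟨b, hb⟩ := hπ (π a)⁻¹
  have hmem : b ^ n * (a : P) ^ (n - 1) ∈ Γ := mul_mem (hpow b) (pow_mem a.2 _)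
  refine ⟨⟨_, hmem⟩, Subtype.ext (sub_eq_zero.1 (hΓ _ ?_ ?_))⟩
  · exact sub_mem (mul_mem a.2 hmem) Γ.one_mem
  · have hpow : b ^ n * (a : P) ^ (n - 1) * a = (b * a) ^ n := by
      rw [mul_assoc, pow_sub_one_mul hn, mul_pow]
    change π (a * (b ^ n * (a : P) ^ (n - 1)) - 1) = 0
    rw [mul_comm, hpow, map_sub, map_pow, map_mul, hb, inv_mul_cancel₀ hπa, one_pow, map_one,
      sub_self]

variable (p : ℕ) [Fact p.Prime]

theorem exists_subring_mem_of_forall_ne [CharP κ p] (hπ : Function.Surjective π)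
    (hΓ : ∀ b ∈ Γ, π b = 0 → b = 0) (hpow : ∀ b : P, b ^ p ∈ Γ) {β : P}
    (hβ : ∀ a ∈ Γ, π a ≠ π β) :
    ∃ Γ' : Subring P, Γ ≤ Γ' ∧ β ∈ Γ' ∧ ∀ b ∈ Γ', π b = 0 → b = 0 := by
  have hp : p.Prime := Fact.out
  let _ : Field Γ := (isField_of_forall_pow_mem hπ hΓ hp.ne_zero hpow).toField
  let f : Polynomial Γ := Polynomial.X ^ p - Polynomial.C ⟨β ^ p, hpow β⟩
  have hirr : Irreducible f := X_pow_sub_C_irreducible_of_prime hp fun a ha =>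
    hβ a a.2 (frobenius_inj κ p (by
      simpa [frobenius_def] using congrArg (fun a : Γ => π a) ha))
  have := Fact.mk hirr
  let g : AdjoinRoot f →+* P := AdjoinRoot.lift Γ.subtype β (by simp [f])
  refine ⟨g.range, fun a ha => ⟨AdjoinRoot.of f ⟨a, ha⟩, AdjoinRoot.lift_of _⟩,
    ⟨AdjoinRoot.root f, AdjoinRoot.lift_root _⟩, ?_⟩
  rintro _ ⟨z, rfl⟩ hz
  rw [(injective_iff_map_eq_zero (π.comp g)).1 (π.comp g).injective z hz, map_zero]

-- A maximal subring that contains all `p`-th powers and meets the kernel trivially maps onto `κ`.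
theorem exists_comp_eq_id_of_pow_eq_zero [CharP κ p] [CharP P p] (hπ : Function.Surjective π)
    (hker : ∀ b, π b = 0 → b ^ p = 0) : ∃ σ : κ →+* P, π.comp σ = RingHom.id κ := by
  have hp : p.Prime := Fact.out
  let T : Set (Subring P) := {Γ | (∀ b ∈ Γ, π b = 0 → b = 0) ∧ (frobenius P p).range ≤ Γ}
  have hfrobenius : (frobenius P p).range ∈ T := by
    refine ⟨?_, le_rfl⟩
    rintro _ ⟨a, rfl⟩ ha
    rw [frobenius_def, map_pow] at ha
    exact hker a (pow_eq_zero_iff hp.ne_zero |>.1 ha)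
  obtain ⟨Γ, -, hΓ⟩ := zorn_le_nonempty₀ T (fun c hc hchain Γ₀ hΓ₀ =>
    ⟨sSup c, ⟨fun b hb hb0 => by
      obtain ⟨Γ₁, hΓ₁, hb⟩ := (Subring.mem_sSup_of_directedOn ⟨Γ₀, hΓ₀⟩ hchain.directedOn).1 hb
      exact (hc hΓ₁).1 b hb hb0, (hc hΓ₀).2.trans (le_sSup hΓ₀)⟩, fun _ => le_sSup⟩) _ hfrobenius
  have hsurj (y : κ) : ∃ a ∈ Γ, π a = y := by
    obtain ⟨β, rfl⟩ := hπ y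
    by_contra! hβ
    obtain ⟨Γ', hle, hβΓ', hΓ'⟩ :=
      exists_subring_mem_of_forall_ne p hπ hΓ.1.1 (fun b => hΓ.1.2 ⟨b, rfl⟩) hβ
    exact hβ β (hΓ.2 ⟨hΓ', hΓ.1.2.trans hle⟩ hle hβΓ') rfl
  let e : Γ ≃+* κ := RingEquiv.ofBijective (π.comp Γ.subtype)
    ⟨(injective_iff_map_eq_zero _).2 fun a ha => Subtype.ext (hΓ.1.1 a a.2 ha), fun y =>
      let ⟨a, ha, hay⟩ := hsurj y
      ⟨⟨a, ha⟩, hay⟩⟩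
  exact ⟨Γ.subtype.comp e.symm.toRingHom, RingHom.ext e.apply_symm_apply⟩

theorem formallySmooth_zmod [Algebra (ZMod p) κ] : Algebra.FormallySmooth (ZMod p) κ := by
  have hp : p.Prime := Fact.out
  refine .of_comp_surjective fun B _ _ I hI φ => ?_
  let P : Subring (κ × B) := RingHom.eqLocus (φ.toRingHom.comp (RingHom.fst κ B))
    ((Ideal.Quotient.mk I).comp (RingHom.snd κ B))
  have : CharP κ p := charP_of_injective_algebraMap (algebraMap (ZMod p) κ).injective p
  have : Nontrivial P := (RingHom.fst κ B |>.comp P.subtype).domain_nontrivial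
  have : CharP P p := by
    refine (CharP.charP_iff_prime_eq_zero hp).2 (Subtype.ext (Prod.ext ?_ ?_))
    · simp
    · change (p : B) = 0
      rw [← map_natCast (algebraMap (ZMod p) B), CharP.cast_eq_zero, map_zero]
  obtain ⟨σ, hσ⟩ := exists_comp_eq_id_of_pow_eq_zero p
    (π := (RingHom.fst κ B).comp P.subtype) (fun a => by
      obtain ⟨b, hb⟩ := Ideal.Quotient.mk_surjective (φ a)
      exact ⟨⟨(a, b), hb.symm⟩, rfl⟩) (by
      rintro ⟨⟨a, b⟩, hab⟩ (rfl : a = 0)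
      have hb : b ∈ I := by
        rw [← Ideal.Quotient.eq_zero_iff_mem, ← map_zero φ]
        exact hab.symm
      have hb2 : b ^ 2 = 0 := by simpa [hI] using Ideal.pow_mem_pow hb 2
      exact Subtype.ext (Prod.ext (zero_pow hp.ne_zero) (pow_eq_zero_of_le hp.two_le hb2)))
  let g : κ →+* B := (RingHom.snd κ B).comp (P.subtype.comp σ)
  refine ⟨{ g with commutes' := RingHom.congr_fun (RingHom.ext_zmod (g.comp _) _) }, ?_⟩
  ext a
  have hfst : (σ a).1.1 = a := RingHom.congr_fun hσ a
  have hmem : φ (σ a).1.1 = Ideal.Quotient.mk I (σ a).1.2 := (σ a).2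
  rw [hfst] at hmem
  exact hmem.symm

theorem formallySmooth_of_charZero (k : Type*) [Field k] [CharZero k] [Algebra k κ] :
    Algebra.FormallySmooth k κ := by
  obtain ⟨s, hs⟩ := exists_isTranscendenceBasis k κ
  have : Algebra.IsAlgebraic (IntermediateField.adjoin k (Set.range ((↑) : s → κ))) κ :=
    hs.isAlgebraic_field
  exact .of_algebraicIndependent_of_isSeparable hs.1

theorem exists_residue_comp_eq_id {S k : Type*} [CommRing S] [IsLocalRing S]
    [IsAdicComplete (maximalIdeal S) S] [Field k] (i : k →+* S) :
    ∃ σ : ResidueField S →+* S, (residue S).comp σ = RingHom.id _ := by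
  algebraize [i]
  suffices ∃ (F : Type) (_ : Field F) (_ : Algebra F S),
      Algebra.FormallySmooth F (ResidueField S) by
    obtain ⟨F, _, _, _⟩ := this
    obtain ⟨g, hg⟩ := Algebra.FormallySmooth.exists_mkₐ_comp_eq_of_isAdicComplete
      (I := maximalIdeal S) (AlgHom.id F (ResidueField S))
    exact ⟨g.toRingHom, RingHom.ext fun a => DFunLike.congr_fun hg a⟩
  obtain ⟨p, hp⟩ := CharP.exists k
  rcases CharP.char_is_prime_or_zero k p with hprime | rfl
  · have := Fact.mk hprime
    let _ : Algebra (ZMod p) S := (i.comp (ZMod.castHom dvd_rfl k)).toAlgebra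
    exact ⟨ZMod p, inferInstance, inferInstance, formallySmooth_zmod p⟩
  · have := CharP.charP_to_charZero k
    let _ : Algebra ℚ S := (i.comp (algebraMap ℚ k)).toAlgebra
    let _ : Algebra ℚ (ResidueField S) := ((residue S).comp (algebraMap ℚ S)).toAlgebra
    exact ⟨ℚ, inferInstance, inferInstance, formallySmooth_of_charZero ℚ⟩

end CoefficientField

/-! ### Complete local domains over power series rings -/

section PowerSeriesParameters

open IsLocalRing MvPowerSeries

theorem exists_ringHom_mvPowerSeries_of_isAdicComplete {K S ι : Type*} [CommRing K] [CommRing S]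
    [Finite ι] (I : Ideal S) [IsAdicComplete I S] (σ : K →+* S) {x : ι → S} (hx : ∀ i, x i ∈ I) :
    ∃ φ : MvPowerSeries ι K →+* S,
      ∀ f : MvPolynomial ι K, φ f = MvPolynomial.eval₂Hom σ x f := by
  let J := MvPolynomial.idealOfVars ι K
  let ev := MvPolynomial.eval₂Hom σ x
  have hJ : J.map ev ≤ I := by
    refine Ideal.map_le_iff_le_comap.2 (Ideal.span_le.2 ?_)
    rintro _ ⟨i, rfl⟩
    simpa [ev] using hx i
  have hev (n) : J ^ n ≤ (I ^ n).comap ev := by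
    rw [← Ideal.map_le_iff_le_comap, Ideal.map_pow]
    exact Ideal.pow_right_mono hJ n
  let f (n : ℕ) : MvPowerSeries ι K →+* S ⧸ I ^ n :=
    (Ideal.quotientMap (I ^ n) ev (hev n)).comp (truncTotalAlgHom ι K n).toRingHom
  have hf_apply (n a) : f n a = Ideal.Quotient.mk (I ^ n) (ev (truncTotal n a)) := rfl
  have hf {m n : ℕ} (hmn : m ≤ n) : (Ideal.Quotient.factorPow I hmn).comp (f n) = f m := by
    ext a
    rw [RingHom.comp_apply, hf_apply, hf_apply]
    refine (Ideal.Quotient.factor_mk _ _).trans ?_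
    rw [Ideal.Quotient.eq, ← map_sub]
    exact hev m (truncTotal_sub_truncTotal_mem_pow_idealOfVars hmn le_rfl a)
  refine ⟨IsAdicComplete.liftRingHom I f hf, fun a => sub_eq_zero.1 ?_⟩
  refine IsHausdorff.haus ‹IsAdicComplete I S›.toIsHausdorff _ fun n => ?_
  rw [SModEq.zero, smul_eq_mul, Ideal.mul_top, ← Ideal.Quotient.eq_zero_iff_mem, map_sub,
    IsAdicComplete.mk_liftRingHom, hf_apply, sub_eq_zero, Ideal.Quotient.eq, ← map_sub]
  refine hev n ((MvPolynomial.mem_pow_idealOfVars_iff' ..).2 fun e he => ?_)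
  rw [MvPolynomial.coeff_sub, sub_eq_zero, coeff_truncTotal _ he, MvPolynomial.coeff_coe]

theorem isPrecomplete_pi {A ι : Type*} [CommRing A] [Finite ι] (I : Ideal A) [IsPrecomplete I A] :
    IsPrecomplete I (ι → A) := by
  refine ⟨fun f hf => ?_⟩
  have hlim (i : ι) : ∃ L : A, ∀ m, f m i ≡ L [SMOD (I ^ m • ⊤ : Submodule A A)] := by
    refine IsPrecomplete.prec ‹_› (f := fun m => f m i) fun hmn => ?_
    rw [SModEq.sub_mem, smul_eq_mul, Ideal.mul_top]
    exact mem_ideal_smul_top_pi_iff.1 (SModEq.sub_mem.1 (hf hmn)) i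
  choose L hL using hlim
  refine ⟨L, fun m => SModEq.sub_mem.2 (mem_ideal_smul_top_pi_iff.2 fun i => ?_)⟩
  have hLi := SModEq.sub_mem.1 (hL i m)
  rwa [smul_eq_mul, Ideal.mul_top] at hLi

theorem finite_of_finite_quotient_of_isPrecomplete {A N : Type*} [CommRing A] [AddCommGroup N]
    [Module A N] (I : Ideal A) [IsPrecomplete I A] [IsHausdorff I N]
    [Module.Finite A (N ⧸ (I • ⊤ : Submodule A N))] : Module.Finite A N := by
  obtain ⟨n, f, hf⟩ := Module.Finite.exists_fin' A (N ⧸ (I • ⊤ : Submodule A N))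
  obtain ⟨g, rfl⟩ := Module.projective_lifting_property (Submodule.mkQ _) f
    (Submodule.mkQ_surjective _)
  have := isPrecomplete_pi (ι := Fin n) I
  exact .of_surjective g (surjective_of_mkQ_comp_surjective hf)

theorem finite_of_pow_maximalIdeal_le_map {A S : Type*} [CommRing A] [CommRing S] [Algebra A S]
    [IsLocalRing S] [IsAdicComplete (maximalIdeal S) S] (hfg : (maximalIdeal S).FG)
    (hres : Function.Surjective ((residue S).comp (algebraMap A S))) {I : Ideal A}
    [IsPrecomplete I A] (hI : I.map (algebraMap A S) ≤ maximalIdeal S) {N : ℕ}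
    (hN : maximalIdeal S ^ N ≤ I.map (algebraMap A S)) : Module.Finite A S := by
  let J := I.map (algebraMap A S)
  have hHausdorff : IsHausdorff I S := by
    rw [← IsHausdorff.map_algebraMap_iff (S := S)]
    refine ⟨fun y hy => IsHausdorff.haus (I := maximalIdeal S) inferInstance y fun n => ?_⟩
    have hyn := hy n
    rw [SModEq.zero, smul_eq_mul, Ideal.mul_top] at hyn ⊢
    exact Ideal.pow_right_mono hI n hyn
  let f : S ⧸ J →ₐ[A] ResidueField S := Ideal.Quotient.factorₐ A hI
  have hker : RingHom.ker f = (maximalIdeal S).map (Ideal.Quotient.mk J) := by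
    exact Ideal.Quotient.factor_ker hI
  have : Module.Finite A (ResidueField S) :=
    .of_surjective (Algebra.linearMap A (ResidueField S)) hres
  have : Module.Finite A (S ⧸ J) := by
    refine Module.finite_of_surjective_of_ker_le_nilradical f (Ideal.Quotient.factor_surjective hI)
      ?_ (hker ▸ hfg.map _)
    rw [hker, Ideal.map_le_iff_le_comap]
    intro a ha
    refine mem_nilradical.2 ⟨N, ?_⟩
    rw [← map_pow, Ideal.Quotient.eq_zero_iff_mem]
    exact hN (Ideal.pow_mem_pow ha N)
  have : Module.Finite A (S ⧸ (I • ⊤ : Submodule A S)) := by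
    rw [Ideal.smul_top_eq_map]
    exact this
  exact finite_of_finite_quotient_of_isPrecomplete I

theorem ringKrullDim_mvPowerSeries_le (K : Type*) [Field K] (d : ℕ) :
    ringKrullDim (MvPowerSeries (Fin d) K) ≤ d := by
  have hspan : (maximalIdeal (MvPowerSeries (Fin d) K)).spanFinrank ≤ d := by
    rw [maximalIdeal_eq_span_X, ← Set.image_univ]
    refine (Submodule.spanFinrank_span_le_ncard_of_finite (Set.toFinite _)).trans ?_
    exact (Set.ncard_image_le).trans (by simp)
  refine (ringKrullDim_le_spanFinrank_maximalIdeal _).trans ?_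
  exact_mod_cast hspan

theorem ringKrullDim_le_ringKrullDim_quotient_ker {A S : Type*} [CommRing A] [CommRing S]
    [Algebra A S] [Algebra.IsIntegral A S] :
    ringKrullDim S ≤ ringKrullDim (A ⧸ RingHom.ker (algebraMap A S)) := by
  let _ := (RingHom.kerLift (algebraMap A S)).toAlgebra
  have : IsScalarTower A (A ⧸ RingHom.ker (algebraMap A S)) S := .of_algebraMap_eq fun _ => rfl
  have : Algebra.IsIntegral (A ⧸ RingHom.ker (algebraMap A S)) S := .tower_top A
  exact Order.krullDim_le_of_strictMono
    (PrimeSpectrum.comap (algebraMap (A ⧸ RingHom.ker (algebraMap A S)) S))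
    fun P Q hPQ => Ideal.IsIntegral.comap_lt_comap hPQ

theorem ringKrullDim_le_of_flat {R S : Type*} [CommRing R] [CommRing S] [IsLocalRing R]
    [IsLocalRing S] [IsNoetherianRing R] [IsNoetherianRing S] [Algebra R S] [Module.Flat R S]
    [IsLocalHom (algebraMap R S)] : ringKrullDim R ≤ ringKrullDim S := by
  rw [← maximalIdeal_height_eq_ringKrullDim, ← maximalIdeal_height_eq_ringKrullDim,
    Ideal.height_eq_height_add_of_liesOver_of_hasGoingDown (maximalIdeal R) (maximalIdeal S)]
  exact_mod_cast le_self_add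

end PowerSeriesParameters

section CompleteDomain

open IsLocalRing MvPowerSeries

theorem exists_finite_ringHom_mvPowerSeries {S k : Type*} [CommRing S] [IsLocalRing S]
    [IsAdicComplete (maximalIdeal S) S] [Field k] (i : k →+* S) (hfg : (maximalIdeal S).FG) {d : ℕ}
    {x : Fin d → S} (hx : ∀ j, x j ∈ maximalIdeal S) {N : ℕ}
    (hN : maximalIdeal S ^ N ≤ Ideal.span (Set.range x)) :
    ∃ φ : MvPowerSeries (Fin d) (ResidueField S) →+* S, φ.Finite ∧ ∀ j, φ (X j) = x j := by
  obtain ⟨σ, hσ⟩ := exists_residue_comp_eq_id i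
  obtain ⟨φ, hφ⟩ := exists_ringHom_mvPowerSeries_of_isAdicComplete (maximalIdeal S) σ hx
  have hX (j) : φ (X j) = x j := by
    simpa only [MvPolynomial.coe_X, MvPolynomial.eval₂Hom_X'] using hφ (MvPolynomial.X j)
  have hC (a) : φ (C a) = σ a := by
    simpa only [MvPolynomial.coe_C, MvPolynomial.eval₂Hom_C] using hφ (MvPolynomial.C a)
  have hmap : (maximalIdeal (MvPowerSeries (Fin d) (ResidueField S))).map φ =
      Ideal.span (Set.range x) := by
    rw [maximalIdeal_eq_span_X, Ideal.map_span, ← Set.range_comp]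
    exact congrArg (fun y => Ideal.span (Set.range y)) (funext hX)
  algebraize [φ]
  refine ⟨φ, finite_of_pow_maximalIdeal_le_map hfg (fun a => ⟨C a, ?_⟩)
    (I := maximalIdeal (MvPowerSeries (Fin d) (ResidueField S)))
    (hmap.trans_le (Ideal.span_le.2 (Set.range_subset_iff.2 hx))) (hN.trans_eq hmap.symm), hX⟩
  exact (congrArg (residue S) (hC a)).trans (DFunLike.congr_fun hσ a)

theorem algebraMap_injective_of_ringKrullDim_le {A S : Type*} [CommRing A] [IsDomain A]
    [CommRing S] [Algebra A S] [Algebra.IsIntegral A S] {d : ℕ} (hA : ringKrullDim A ≤ d)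
    (hS : d ≤ ringKrullDim S) : Function.Injective (algebraMap A S) := by
  refine (injective_iff_map_eq_zero _).2 fun a ha => by_contra fun ha0 => ?_
  have hquot := ringKrullDim_succ_le_of_surjective
    (Ideal.Quotient.mk (RingHom.ker (algebraMap A S))) Ideal.Quotient.mk_surjective
    (mem_nonZeroDivisors_of_ne_zero ha0) (Ideal.Quotient.eq_zero_iff_mem.2 ha)
  have hlt : ((d + 1 : ℕ) : WithBot ℕ∞) ≤ d :=
    calc ((d + 1 : ℕ) : WithBot ℕ∞) = d + 1 := by norm_cast
      _ ≤ ringKrullDim (A ⧸ RingHom.ker (algebraMap A S)) + 1 := by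
        gcongr
        exact hS.trans ringKrullDim_le_ringKrullDim_quotient_ker
      _ ≤ d := hquot.trans hA
  exact absurd (Nat.cast_le.1 hlt) (Nat.not_succ_le_self d)

theorem algebraMap_quotient_injective_of_mem_minimalPrimes {R S : Type*} [CommRing R] [IsDomain R]
    [CommRing S] [Algebra R S] [Module.Flat R S] {q : Ideal S} (hq : q ∈ minimalPrimes S) :
    Function.Injective (algebraMap R (S ⧸ q)) := by
  refine (injective_iff_map_eq_zero _).2 fun a ha => by_contra fun ha0 => ?_
  have hreg : IsSMulRegular S a :=
    Module.Flat.isSMulRegular_of_nonZeroDivisors (mem_nonZeroDivisors_of_ne_zero ha0)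
  refine notMem_nonZeroDivisors_of_mem_mem_minimalPrimes (Ideal.Quotient.eq_zero_iff_mem.1 ha) hq
    (mem_nonZeroDivisors_iff_right.2 fun z hz => hreg ?_)
  simpa only [Algebra.smul_def, mul_comm z, mul_zero] using hz

theorem exists_mem_minimalPrimes_algebraMap_injective {A S : Type*} [CommRing A] [IsDomain A]
    [CommRing S] [Algebra A S] [Algebra.IsIntegral A S]
    (hinj : Function.Injective (algebraMap A S)) :
    ∃ q ∈ minimalPrimes S, Function.Injective (algebraMap A (S ⧸ q)) := by
  have hker : (⊥ : Ideal S).comap (algebraMap A S) = ⊥ := by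
    rw [← RingHom.ker_eq_comap_bot, (RingHom.injective_iff_ker_eq_bot _).1 hinj]
  obtain ⟨Q, -, _, hQ⟩ := Ideal.exists_ideal_over_prime_of_isIntegral (⊥ : Ideal A) (⊥ : Ideal S)
    hker.le
  obtain ⟨q, hq, hqQ⟩ := Ideal.exists_minimalPrimes_le (bot_le : (⊥ : Ideal S) ≤ Q)
  refine ⟨q, hq, (injective_iff_map_eq_zero _).2 fun a ha => ?_⟩
  have haQ : a ∈ Q.comap (algebraMap A S) := hqQ (Ideal.Quotient.eq_zero_iff_mem.1 ha)
  rwa [hQ] at haQ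

-- `D` is the quotient of the completion of `R` by a suitable minimal prime.
theorem exists_injective_ringHom_finite_mvPowerSeries {R : Type u} {k : Type*} [CommRing R]
    [IsDomain R] [IsNoetherianRing R] [IsLocalRing R] [Field k] (i : k →+* R) {d : ℕ}
    (hd : ringKrullDim R = d) {x : Fin d → R} (hx : ∀ j, x j ∈ maximalIdeal R) {N : ℕ}
    (hN : maximalIdeal R ^ N ≤ Ideal.span (Set.range x)) :
    ∃ (K : Type u) (_ : Field K) (D : Type u) (_ : CommRing D) (_ : IsDomain D)
      (_ : Algebra (MvPowerSeries (Fin d) K) D) (_ : Module.Finite (MvPowerSeries (Fin d) K) D)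
      (φ : R →+* D), Function.Injective (algebraMap (MvPowerSeries (Fin d) K) D) ∧
        Function.Injective φ ∧ ∀ j, φ (x j) = algebraMap (MvPowerSeries (Fin d) K) D (X j) := by
  let S := AdicCompletion (maximalIdeal R) R
  have hm : maximalIdeal S = (maximalIdeal R).map (algebraMap R S) :=
    AdicCompletion.maximalIdeal_eq_map
  obtain ⟨Φ, hΦ, hX⟩ := exists_finite_ringHom_mvPowerSeries ((algebraMap R S).comp i)
    (hm ▸ (maximalIdeal R).fg_of_isNoetherianRing.map _)
    (x := fun j => algebraMap R S (x j)) (fun j => hm ▸ Ideal.mem_map_of_mem _ (hx j))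
    (N := N) <| by
      rw [hm, ← Ideal.map_pow, Set.range_comp', ← Ideal.map_span]
      exact Ideal.map_mono hN
  algebraize [Φ]
  have : IsNoetherianRing S := IsNoetherianRing.of_finite
    (MvPowerSeries (Fin d) (ResidueField S)) S
  have hinj := algebraMap_injective_of_ringKrullDim_le
    (ringKrullDim_mvPowerSeries_le (ResidueField S) d)
    (hd ▸ ringKrullDim_le_of_flat : (d : WithBot ℕ∞) ≤ ringKrullDim S)
  obtain ⟨q, hq, hqinj⟩ := exists_mem_minimalPrimes_algebraMap_injective hinj
  have : q.IsPrime := hq.1.1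
  exact ⟨ResidueField S, inferInstance, S ⧸ q, inferInstance, inferInstance, inferInstance,
    inferInstance, algebraMap R (S ⧸ q), hqinj,
    algebraMap_quotient_injective_of_mem_minimalPrimes hq,
    fun j => congrArg (Ideal.Quotient.mk q) (hX j).symm⟩

end CompleteDomain

/-! ### The lower bound -/

section LowerBound

open IsLocalRing

theorem exists_linearMap_pi_smul_single_mem_range {R N : Type*} [CommRing R] [IsDomain R]
    [AddCommGroup N] [Module R N] [Module.Finite R N] :
    ∃ (g : N →ₗ[R] Fin (Module.finrank R N) → R) (c : R), c ≠ 0 ∧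
      ∀ b, c • Pi.single b 1 ∈ LinearMap.range g := by
  obtain ⟨e, he⟩ := exists_linearIndependent_of_le_finrank (R := R) (M := N) le_rfl
  obtain ⟨c, hc, hspan⟩ := exists_ne_zero_smul_mem_span he (by simp)
  let B := Module.Basis.span he
  let g := B.equivFun.toLinearMap ∘ₗ (LinearMap.lsmul R N c).codRestrict _ hspan
  refine ⟨g, c, hc, fun b => ⟨e b, ?_⟩⟩
  have hB : (LinearMap.lsmul R N c).codRestrict _ hspan (e b) = c • B b :=
    Subtype.ext (congrArg (c • ·) (Module.Basis.coe_span_apply he b).symm)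
  have hself : B.equivFun (B b) = Pi.single b 1 := by
    ext a
    rw [B.equivFun_self, Pi.single_apply]
    simp only [eq_comm]
  rw [LinearMap.comp_apply, hB, map_smul]
  exact congrArg (c • ·) hself

theorem exists_forall_mul_prod_le_of_isDomain {R : Type u} {k : Type*} [CommRing R] [IsDomain R]
    [IsNoetherianRing R] [IsLocalRing R] [Field k] (i : k →+* R) {d : ℕ} (hd : ringKrullDim R = d)
    {x : Fin d → R} (hx : ∀ j, x j ∈ maximalIdeal R) {N : ℕ}
    (hN : maximalIdeal R ^ N ≤ Ideal.span (Set.range x)) {c : R} (hc : c ≠ 0) :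
    ∃ (n ν : ℕ) (α : Fin d → ℕ), 0 < n ∧ ∀ {t : Fin d → ℕ} {r h : ℕ} {W : Submodule R (Fin r → R)},
      (∀ j, 0 < t j) → CyclicChain (Ideal.span (Set.range x)) (powerIdeal x t • ⊤) W h →
      (∀ b, c • Pi.single b 1 ∈ W) → r * n * ∏ j, t j ≤ n * h + r * ν * boxDefect t α := by
  obtain ⟨K, _, D, _, _, _, _, φ, hinj, hφ, hφx⟩ :=
    exists_injective_ringHom_finite_mvPowerSeries i hd hx hN
  obtain ⟨n, ν, α, hn, hbound⟩ :=
    exists_forall_mul_prod_le_of_finite hinj ((map_ne_zero_iff φ hφ).2 hc)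
  refine ⟨n, ν, α, hn, fun {t r h W} ht H hW => ?_⟩
  obtain ⟨W', H', hW'⟩ := H.exists_map_ringHom φ
  rw [map_powerIdeal, Ideal.map_span, ← Set.range_comp] at H'
  simp only [Function.comp_def, hφx] at H'
  refine hbound ht H' fun b => ?_
  convert hW' _ (hW b) using 1
  ext a
  simp [Pi.single_apply, apply_ite φ]

theorem le_content_of_forall_mul_prod_le {R : Type u} [CommRing R] {M : Type v} [AddCommGroup M]
    [Module R M] {d : ℕ} {x : Fin d → R} {r n e : ℕ} (hn : 0 < n) (α : Fin d → ℕ)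
    (H : ∀ {t : Fin d → ℕ} {h : ℕ}, (∀ i, 0 < t i) →
      CyclicChain (Ideal.span (Set.range x)) (powerIdeal x t • (⊤ : Submodule R M)) ⊤ h →
      r * n * ∏ i, t i ≤ n * h + e * boxDefect t α) : r ≤ content x M := by
  have hlim : Filter.Tendsto (fun s : ℕ => content x M + (e * ∑ i, α i : ℕ) / s) Filter.atTop
      (nhds (content x M)) := by
    simpa using (ENNReal.Tendsto.const_div ENNReal.tendsto_nat_nhds_top
      (.inr (ENNReal.natCast_ne_top (e * ∑ i, α i)))).const_add (content x M)
  refine ge_of_tendsto hlim ?_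
  filter_upwards [Filter.eventually_ge_atTop 1] with s hs
  rw [← tsub_le_iff_right]
  refine le_iSup_of_le s (le_iInf fun ⟨t, ht⟩ => ?_)
  have hprod : 0 < ∏ i, t i := Finset.prod_pos fun i _ => (ht i).2
  have hs0 : (s : ℝ≥0∞) ≠ 0 := Nat.cast_ne_zero.2 (by omega)
  simp only [← Nat.cast_prod]
  rw [ENNReal.le_div_iff_mul_le (.inl (Nat.cast_ne_zero.2 hprod.ne'))
    (.inl (ENNReal.natCast_ne_top _))]
  refine le_quasilength fun h hh => ?_
  have hchain := H (fun i => (ht i).2) (hasQLFiltration_quotient_iff.1 hh)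
  have hdefect : e * (s * boxDefect t α) ≤ n * (e * ((∑ i, α i) * ∏ i, t i)) :=
    (Nat.mul_le_mul_left e (mul_boxDefect_le α fun i => (ht i).1)).trans
      (Nat.le_mul_of_pos_left _ hn)
  have hle : s * (r * ∏ i, t i) ≤ s * h + e * (∑ i, α i) * ∏ i, t i := by
    refine Nat.le_of_mul_le_mul_left ?_ hn
    calc n * (s * (r * ∏ i, t i)) = s * (r * n * ∏ i, t i) := by ring
      _ ≤ s * (n * h + e * boxDefect t α) := by gcongr
      _ = n * (s * h) + e * (s * boxDefect t α) := by ring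
      _ ≤ n * (s * h) + n * (e * ((∑ i, α i) * ∏ i, t i)) := Nat.add_le_add_left hdefect _
      _ = n * (s * h + e * (∑ i, α i) * ∏ i, t i) := by ring
  refine (ENNReal.sub_mul fun _ _ => ENNReal.natCast_ne_top _).trans_le ?_
  rw [tsub_le_iff_right]
  calc (r * (∏ i, t i : ℕ) : ℝ≥0∞) ≤ (s * h + (e * ∑ i, α i : ℕ) * (∏ i, t i : ℕ)) / s := by
        rw [ENNReal.le_div_iff_mul_le (.inl hs0) (.inl (ENNReal.natCast_ne_top s)), mul_comm]
        exact_mod_cast hle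
    _ = h + (e * ∑ i, α i : ℕ) / s * (∏ i, t i : ℕ) := by
        rw [ENNReal.add_div, ENNReal.mul_div_right_comm, ENNReal.mul_div_right_comm,
          ENNReal.div_self hs0 (ENNReal.natCast_ne_top s), one_mul]

theorem maximalIdeal_le_radical {R : Type*} [CommRing R] [IsLocalRing R] {I : Ideal R}
    (hI : PrimeSpectrum.zeroLocus (I : Set R) ⊆ {closedPoint R}) : maximalIdeal R ≤ I.radical := by
  rw [Ideal.radical_eq_sInf]
  refine le_sInf fun Q ⟨hIQ, hQ⟩ => ?_
  have hclosed : (⟨Q, hQ⟩ : PrimeSpectrum R) = closedPoint R := hI hIQ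
  exact (congrArg PrimeSpectrum.asIdeal hclosed).ge

theorem exists_pow_maximalIdeal_quotient_le_span {R : Type*} [CommRing R] [IsNoetherianRing R]
    [IsLocalRing R] {P : Ideal R} [IsLocalRing (R ⧸ P)] {ι : Type*} {x : ι → R}
    (hP : PrimeSpectrum.zeroLocus (P : Set R) ∩ PrimeSpectrum.zeroLocus (Ideal.span (Set.range x)) ⊆
      {closedPoint R}) :
    ∃ N : ℕ, maximalIdeal (R ⧸ P) ^ N ≤
      Ideal.span (Set.range fun j => Ideal.Quotient.mk P (x j)) := by
  rw [← PrimeSpectrum.zeroLocus_sup] at hP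
  obtain ⟨N, hN⟩ := Ideal.exists_pow_le_of_le_radical_of_fg (maximalIdeal_le_radical hP)
    (maximalIdeal R).fg_of_isNoetherianRing
  refine ⟨N, ?_⟩
  rw [← map_maximalIdeal_of_surjective (Ideal.Quotient.mk P) Ideal.Quotient.mk_surjective,
    ← Ideal.map_pow]
  refine (Ideal.map_mono hN).trans_eq ?_
  rw [Ideal.map_sup, Ideal.map_quotient_self, bot_sup_eq, Ideal.map_span, ← Set.range_comp']

theorem CyclicChain.exists_range_le_of_quotient {R : Type u} [CommRing R] {M : Type v}
    [AddCommGroup M] [Module R M] {d h : ℕ} {x : Fin d → R} {t : Fin d → ℕ}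
    (H : CyclicChain (Ideal.span (Set.range x)) (powerIdeal x t • (⊤ : Submodule R M)) ⊤ h)
    {P : Ideal R} {N : Type*} [AddCommGroup N] [Module (R ⧸ P) N]
    (g : M ⧸ (P • ⊤ : Submodule R M) →ₗ[R ⧸ P] N) :
    ∃ W : Submodule (R ⧸ P) N,
      CyclicChain (Ideal.span (Set.range fun j => Ideal.Quotient.mk P (x j)))
        (powerIdeal (fun j => Ideal.Quotient.mk P (x j)) t • ⊤) W h ∧ LinearMap.range g ≤ W := by
  let π := Ideal.Quotient.mk P
  let mkQ : M →ₛₗ[π] M ⧸ (P • ⊤ : Submodule R M) :=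
    { toFun := Submodule.Quotient.mk
      map_add' := fun _ _ => rfl
      map_smul' := fun _ _ => rfl }
  obtain ⟨W, HW, hW⟩ := H.exists_map (g ∘ₛₗ mkQ) (U := (powerIdeal x t).map π • ⊤)
    (Submodule.smul_le.2 fun a ha m _ => by
      rw [Submodule.mem_comap, map_smulₛₗ]
      exact Submodule.smul_mem_smul (Ideal.mem_map_of_mem π ha) trivial)
  rw [map_powerIdeal, Ideal.map_span, ← Set.range_comp'] at HW
  refine ⟨W, HW, ?_⟩
  rintro _ ⟨y, rfl⟩
  obtain ⟨m, rfl⟩ := Submodule.Quotient.mk_surjective _ y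
  exact hW (trivial : m ∈ ⊤)

theorem finrank_quotient_le_content {R : Type u} {k : Type*} [CommRing R] [IsNoetherianRing R]
    [IsLocalRing R] [Field k] (i : k →+* R) {M : Type v} [AddCommGroup M] [Module R M]
    [Module.Finite R M] {d : ℕ} {x : Fin d → R} (hx : ∀ j, x j ∈ maximalIdeal R) {P : Ideal R}
    [P.IsPrime] (hd : ringKrullDim (R ⧸ P) = d)
    (hP : PrimeSpectrum.zeroLocus (P : Set R) ∩ PrimeSpectrum.zeroLocus (Ideal.span (Set.range x)) ⊆
      {closedPoint R}) :
    (Module.finrank (R ⧸ P) (M ⧸ (P • ⊤ : Submodule R M)) : ℝ≥0∞) ≤ content x M := by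
  let π := Ideal.Quotient.mk P
  have : IsLocalRing (R ⧸ P) := .of_surjective' π Ideal.Quotient.mk_surjective
  have : Module.Finite (R ⧸ P) (M ⧸ (P • ⊤ : Submodule R M)) :=
    .of_restrictScalars_finite R _ _
  have hm : (maximalIdeal R).map π = maximalIdeal (R ⧸ P) :=
    map_maximalIdeal_of_surjective π Ideal.Quotient.mk_surjective
  obtain ⟨N, hN⟩ := exists_pow_maximalIdeal_quotient_le_span hP
  obtain ⟨g, c, hc, hg⟩ :=
    exists_linearMap_pi_smul_single_mem_range (R := R ⧸ P) (N := M ⧸ (P • ⊤ : Submodule R M))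
  obtain ⟨n, ν, α, hn, hbound⟩ := exists_forall_mul_prod_le_of_isDomain (π.comp i) hd
    (fun j => hm ▸ Ideal.mem_map_of_mem π (hx j)) hN hc
  refine le_content_of_forall_mul_prod_le
    (e := Module.finrank (R ⧸ P) (M ⧸ (P • ⊤ : Submodule R M)) * ν) hn α fun ht H => ?_
  obtain ⟨W, HW, hW⟩ := H.exists_range_le_of_quotient g
  exact hbound ht HW fun b => hW (hg b)

end LowerBound

section Main

open IsLocalRing Module

theorem support_inter_zeroLocus_subset_of_ringKrullDim_eq_zero {R M : Type*} [CommRing R]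
    [IsLocalRing R] [AddCommGroup M] [Module R M] [Module.Finite R M] {I : Ideal R}
    (hI : ringKrullDim (R ⧸ annihilator R (M ⧸ (I • ⊤ : Submodule R M))) = 0) :
    support R M ∩ PrimeSpectrum.zeroLocus I ⊆ {closedPoint R} := by
  rw [← support_quotient, support_of_supportDim_eq_zero R _
    ((supportDim_eq_ringKrullDim_quotient_annihilator R _).trans hI)]
  exact (PrimeSpectrum.zeroLocus_eq_singleton (maximalIdeal R)).subset

theorem content_le_iSup_finrank {R : Type u} [CommRing R] [IsNoetherianRing R] [IsLocalRing R]
    {M : Type v} [AddCommGroup M] [Module R M] [Module.Finite R M] {d : ℕ}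
    (hd : supportDim R M ≤ d) {x : Fin d → R}
    (hx : support R M ∩ PrimeSpectrum.zeroLocus (Ideal.span (Set.range x)) ⊆ {closedPoint R}) :
    content x M ≤
      ⨆ P : {P : Ideal R // P ∈ (annihilator R M).minimalPrimes ∧ ringKrullDim (R ⧸ P) = d},
        (finrank (R ⧸ P.1) (M ⧸ (P.1 • ⊤ : Submodule R M)) : ℝ≥0∞) := by
  let ι := {P : Ideal R // P ∈ (annihilator R M).minimalPrimes ∧ ringKrullDim (R ⧸ P) = d}
  have : Finite ι := ((Ideal.finite_minimalPrimes_of_isNoetherianRing R (annihilator R M)).subset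
    fun P hP => hP.1).to_subtype
  obtain ⟨r, hr, hle⟩ : ∃ r : ℕ,
      (∀ P : ι, finrank (R ⧸ P.1) (M ⧸ (P.1 • ⊤ : Submodule R M)) ≤ r) ∧
        (r : ℝ≥0∞) ≤ ⨆ P : ι, (finrank (R ⧸ P.1) (M ⧸ (P.1 • ⊤ : Submodule R M)) : ℝ≥0∞) := by
    rcases isEmpty_or_nonempty ι with _ | _
    · exact ⟨0, isEmptyElim, by simp⟩
    · obtain ⟨P, hP⟩ :=
        Finite.exists_max fun P : ι => finrank (R ⧸ P.1) (M ⧸ (P.1 • ⊤ : Submodule R M))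
      exact ⟨_, hP, le_iSup_of_le P le_rfl⟩
  exact (content_le_of_forall_finrank_le hd hx fun P hP hPd => hr ⟨P, hP, hPd⟩).trans hle

end Main

/-- Over a Noetherian local ring containing a field, for a
finitely generated module `M` of dimension `d` and a system of parameters
`x₁, …, x_d` of `M`, the content of `M` is the maximum of the ranks
`rank_{R/P}(M/PM)` over the primes `P` minimal over `Ann M` with `dim R/P = d`. -/
theorem content_eq_max_rank_module
    {R : Type u} [CommRing R] [IsNoetherianRing R] [IsLocalRing R]
    (hfield : ∃ K : Subring R, IsField K)
    (M : Type u) [AddCommGroup M] [Module R M] [Module.Finite R M]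
    {d : ℕ} (hd : ringKrullDim (R ⧸ Module.annihilator R M) = d)
    (x : Fin d → R) (hx : ∀ i, x i ∈ IsLocalRing.maximalIdeal R)
    (hxparam : ringKrullDim
      (R ⧸ Module.annihilator R (M ⧸ (Ideal.span (Set.range x) • (⊤ : Submodule R M)))) = 0) :
    content x M =
      ⨆ P : {P : Ideal R //
          P ∈ (Module.annihilator R M).minimalPrimes ∧ ringKrullDim (R ⧸ P) = d},
        (Module.finrank (FractionRing (R ⧸ P.1))
          (FractionRing (R ⧸ P.1) ⊗[R ⧸ P.1] (M ⧸ (P.1 • (⊤ : Submodule R M)))) : ℝ≥0∞) := by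
  have hsupp := support_inter_zeroLocus_subset_of_ringKrullDim_eq_zero hxparam
  have hrank (P : {P : Ideal R //
      P ∈ (Module.annihilator R M).minimalPrimes ∧ ringKrullDim (R ⧸ P) = d}) :
      Module.finrank (FractionRing (R ⧸ P.1))
        (FractionRing (R ⧸ P.1) ⊗[R ⧸ P.1] (M ⧸ (P.1 • (⊤ : Submodule R M)))) =
          Module.finrank (R ⧸ P.1) (M ⧸ (P.1 • (⊤ : Submodule R M))) :=
    finrank_fractionRing_tensorProduct _
  simp only [hrank]
  refine le_antisymm (content_le_iSup_finrank ?_ hsupp) (iSup_le fun P => ?_)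
  · exact ((Module.supportDim_eq_ringKrullDim_quotient_annihilator R M).trans hd).le
  · obtain ⟨K, hK⟩ := hfield
    let _ := hK.toField
    have : P.1.IsPrime := P.2.1.1.1
    refine finrank_quotient_le_content K.subtype hx P.2.2
      ((Set.inter_subset_inter_left _ ?_).trans hsupp)
    rw [Module.support_eq_zeroLocus]
    exact PrimeSpectrum.zeroLocus_anti_mono P.2.1.1.2
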